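/- arXiv:2306.11824 — 3 statements merged into one kernel-verified Lean document; each statement's English description precedes it below -/
import Mathlib

section
/- Let H ∈ (1/2, 1), let W^H be a fractional Brownian motion with Hurst parameter H on a probability space (Ω, F, P), let x₀ ∈ ℝ and T > 0, and let b : ℝ → ℝ be measurable, locally bounded, and locally Hölder continuous with some exponent α > 2 − 1/H (i.e., on every compact set K ⊂ ℝ there exists c ≥ 0 with |b(x) − b(y)| ≤ c|x − y|^α for x, y ∈ K). Suppose the process X = (X_t)_{t∈[0,T]} has P-a.s. continuous sample paths, is adapted to the natural filtration of W^H, and satisfies X_t = x₀ + W^H_t + ∫₀^t b(X_s) ds for all 0 ≤ t ≤ T, P-a.s. Then the law of (X_t)_{t∈[0,T]} is equivalent to (mutually absolutely continuous with) the law of (x₀ + W^H_t)_{t∈[0,T]}. -/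
open MeasureTheory ProbabilityTheory Real

/-- Covariance function of fractional Brownian motion with Hurst parameter `H`,
for times `s, t ≥ 0`. -/
noncomputable def fbmCov (H s t : ℝ) : ℝ :=
  (s ^ (2 * H) + t ^ (2 * H) - |t - s| ^ (2 * H)) / 2

/-- `W` is a fractional Brownian motion with Hurst parameter `H` on `(Ω, F, P)`:
each `W t` is measurable, `P`-a.s. the sample paths are continuous on `[0, ∞)` with
`W 0 = 0`, and all finite-dimensional distributions are centered Gaussian with covariance
`fbmCov H`, expressed through one-dimensional distributions of linear combinations. -/
def IsFractionalBM {Ω : Type*} [MeasurableSpace Ω] (P : Measure Ω) (H : ℝ)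
    (W : ℝ → Ω → ℝ) : Prop :=
  (∀ t : ℝ, Measurable (W t)) ∧
  (∀ᵐ ω ∂P, ContinuousOn (fun t => W t ω) (Set.Ici 0) ∧ W 0 ω = 0) ∧
  (∀ (n : ℕ) (t : Fin n → ℝ), (∀ i, 0 ≤ t i) → ∀ c : Fin n → ℝ,
    P.map (fun ω => ∑ i, c i * W (t i) ω) =
      gaussianReal 0 (∑ i, ∑ j, c i * c j * fbmCov H (t i) (t j)).toNNReal)

/-- The law of the process `(Z t)_{t ∈ [0,T]}`: the pushforward of `P` under the map sending
`ω` to the path `t ↦ Z t ω`, as a measure on the space of functions `[0,T] → ℝ` equipped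
with the product σ-algebra. -/
noncomputable def processLaw {Ω : Type*} [MeasurableSpace Ω] (P : Measure Ω) (T : ℝ)
    (Z : ℝ → Ω → ℝ) : Measure (Set.Icc (0 : ℝ) T → ℝ) :=
  P.map (fun ω => fun t : Set.Icc (0 : ℝ) T => Z t ω)

/-! ## Part A: adapted shifts of the standard Gaussian measure -/

section PartA
open scoped ENNReal

/-- Standard Gaussian measure on `Fin n → ℝ`. -/
noncomputable def gam (n : ℕ) : Measure (Fin n → ℝ) := Measure.pi (fun _ => gaussianReal 0 1)

instance gam_prob (n : ℕ) : IsProbabilityMeasure (gam n) := by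
  unfold gam; infer_instance

theorem gauss_shift_one (w : ℝ) (g : ℝ → ℝ≥0∞) (hg : Measurable g) :
    ∫⁻ a, g (a + w) * ENNReal.ofReal (exp (-(w * a) - w ^ 2 / 2)) ∂(gaussianReal 0 1)
      = ∫⁻ a, g a ∂(gaussianReal 0 1) := by
  rw [gaussianReal_of_var_ne_zero 0 one_ne_zero,
    lintegral_withDensity_eq_lintegral_mul _ (measurable_gaussianPDF 0 1) (by fun_prop),
    lintegral_withDensity_eq_lintegral_mul _ (measurable_gaussianPDF 0 1) hg]
  conv_rhs => rw [← lintegral_add_right_eq_self _ w]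
  congr 1
  ext a
  simp only [Pi.mul_apply]
  have : gaussianPDF 0 1 (a + w) = gaussianPDF 0 1 a *
      ENNReal.ofReal (exp (-(w * a) - w ^ 2 / 2)) := by
    unfold gaussianPDF
    rw [← ENNReal.ofReal_mul (gaussianPDFReal_nonneg _ _ _)]
    congr 1
    unfold gaussianPDFReal
    rw [mul_assoc _ (rexp _) (rexp _), ← exp_add]
    congr 2
    push_cast
    ring
  rw [this]
  ring

theorem gam_lintegral_succ (n : ℕ) (F : (Fin (n + 1) → ℝ) → ℝ≥0∞) (hF : Measurable F) :
    ∫⁻ x, F x ∂(gam (n + 1)) =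
      ∫⁻ x, ∫⁻ a, F (Fin.snoc x a) ∂(gaussianReal 0 1) ∂(gam n) := by
  have h := (measurePreserving_piFinSuccAbove (fun _ : Fin (n + 1) => gaussianReal 0 1)
    (Fin.last n)).symm
  unfold gam
  rw [← h.lintegral_comp hF, lintegral_prod_symm]
  · simp [MeasurableEquiv.piFinSuccAbove, Fin.insertNthEquiv, Fin.insertNth_last']
  · exact (hF.comp (MeasurableEquiv.measurable _)).aemeasurable

theorem measurable_snoc (n : ℕ) :
    Measurable (fun p : (Fin n → ℝ) × ℝ => (Fin.snoc p.1 p.2 : Fin (n + 1) → ℝ)) := by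
  rw [measurable_pi_iff]
  intro i
  refine Fin.lastCases ?_ (fun j => ?_) i
  · simpa using measurable_snd
  · simp only [Fin.snoc_castSucc]
    exact (measurable_pi_apply j).comp measurable_fst

theorem gauss_shift (n : ℕ) (v : (Fin n → ℝ) → Fin n → ℝ) (hv : Measurable v)
    (hp : ∀ i x y, (∀ j, j < i → x j = y j) → v x i = v y i)
    (f : (Fin n → ℝ) → ℝ≥0∞) (hf : Measurable f) :
    ∫⁻ x, f (x + v x) *
      ENNReal.ofReal (exp (-(∑ i, v x i * x i) - (∑ i, v x i ^ 2) / 2)) ∂(gam n)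
      = ∫⁻ x, f x ∂(gam n) := by
  induction n with
  | zero =>
    simp only [Finset.univ_eq_empty, Finset.sum_empty]
    congr 1
    ext x
    have : x + v x = x := Subsingleton.elim _ _
    simp [this]
  | succ n ih =>
    have hsn := measurable_snoc n
    set v' : (Fin n → ℝ) → Fin n → ℝ := fun x i => v (Fin.snoc x 0) i.castSucc with hv'
    set w : (Fin n → ℝ) → ℝ := fun x => v (Fin.snoc x 0) (Fin.last n) with hw
    have hm0 : Measurable (fun x : Fin n → ℝ => (Fin.snoc x (0:ℝ) : Fin (n + 1) → ℝ)) :=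
      hsn.comp (measurable_id.prodMk measurable_const)
    have hv'm : Measurable v' := by
      rw [measurable_pi_iff]
      intro i
      exact (measurable_pi_apply i.castSucc).comp (hv.comp hm0)
    have hwm : Measurable w := (measurable_pi_apply (Fin.last n)).comp (hv.comp hm0)
    have hvc : ∀ x a (i : Fin n), v (Fin.snoc x a) i.castSucc = v' x i := by
      intro x a i
      apply hp
      intro j hj
      have : j ≠ Fin.last n := (lt_of_lt_of_le hj (Fin.le_last _)).ne
      obtain ⟨k, rfl⟩ := Fin.exists_castSucc_eq.2 this
      simp
    have hvl : ∀ x a, v (Fin.snoc x a) (Fin.last n) = w x := by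
      intro x a
      apply hp
      intro j hj
      obtain ⟨k, rfl⟩ := Fin.exists_castSucc_eq.2 hj.ne
      simp
    have hadd : ∀ (x : Fin n → ℝ) (a : ℝ), (Fin.snoc x a : Fin (n + 1) → ℝ) + v (Fin.snoc x a)
        = Fin.snoc (x + v' x) (a + w x) := by
      intro x a
      ext i
      refine Fin.lastCases ?_ (fun j => ?_) i
      · simp [hvl]
      · simp [hvc]
    rw [gam_lintegral_succ n _ (by fun_prop), gam_lintegral_succ n _ hf]
    set F : (Fin n → ℝ) → ℝ≥0∞ := fun x => ∫⁻ a, f (Fin.snoc x a) ∂(gaussianReal 0 1) with hF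
    have hFm : Measurable F := by
      exact (hf.comp hsn).lintegral_prod_right'
    rw [← ih v' hv'm ?_ F hFm]
    · congr 1
      ext x
      simp only [hadd, Fin.sum_univ_castSucc, hvc, hvl, Fin.snoc_castSucc, Fin.snoc_last]
      have : ∀ a, f (Fin.snoc (x + v' x) (a + w x)) * ENNReal.ofReal
          (exp (-(∑ i, v' x i * x i + w x * a) - (∑ i, v' x i ^ 2 + w x ^ 2) / 2)) =
          (f (Fin.snoc (x + v' x) (a + w x)) *
            ENNReal.ofReal (exp (-(w x * a) - w x ^ 2 / 2))) *
          ENNReal.ofReal (exp (-(∑ i, v' x i * x i) - (∑ i, v' x i ^ 2) / 2)) := by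
        intro a
        rw [mul_assoc, ← ENNReal.ofReal_mul (exp_nonneg _), ← exp_add]
        congr 3
        ring
      simp only [this]
      have hm1 : Measurable fun a => f (Fin.snoc (x + v' x) a) :=
        hf.comp (hsn.comp (measurable_const.prodMk measurable_id))
      rw [lintegral_mul_const _ (by fun_prop),
        gauss_shift_one (w x) (fun a => f (Fin.snoc (x + v' x) a)) hm1]
    · intro i x y hxy
      apply hp
      intro j hj
      obtain ⟨k, rfl⟩ := Fin.exists_castSucc_eq.2 (lt_of_lt_of_le hj (Fin.le_last _)).ne
      simp only [Fin.snoc_castSucc]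
      exact hxy k (by simpa using hj)

/-- Quantitative quasi-invariance under adapted shifts. -/
theorem gauss_shift_bound (n : ℕ) (v : (Fin n → ℝ) → Fin n → ℝ) (hv : Measurable v)
    (hp : ∀ i x y, (∀ j, j < i → x j = y j) → v x i = v y i)
    (f : (Fin n → ℝ) → ℝ≥0∞) (hf : Measurable f) (hf1 : ∀ x, f x ≤ 1)
    (δ η K l : ℝ) (hη : 0 < η) (hl : 0 ≤ l)
    (hδ : ∫⁻ x, ENNReal.ofReal (∑ i, v x i ^ 2) ∂(gam n) ≤ ENNReal.ofReal δ) :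
    ∫⁻ x, f (x + v x) ∂(gam n) ≤ ENNReal.ofReal (exp K) * ∫⁻ x, f x ∂(gam n) +
      ENNReal.ofReal (δ / η) + ENNReal.ofReal (exp (-l * (K - η / 2) + l ^ 2 * η / 2)) := by
  have hvi : ∀ i, Measurable fun x => v x i := fun i => (measurable_pi_apply i).comp hv
  set s := fun x => ∑ i, v x i * x i with hs
  set q := fun x => ∑ i, v x i ^ 2 with hq
  have hsm : Measurable s := by
    apply Finset.measurable_sum; intro i _; exact (hvi i).mul (measurable_pi_apply i)
  have hqm : Measurable q := by
    apply Finset.measurable_sum; intro i _; exact (hvi i).pow_const 2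
  have hexp : ∫⁻ x, ENNReal.ofReal (exp (l * s x - l ^ 2 * q x / 2)) ∂(gam n) = 1 := by
    have := gauss_shift n (fun x => (-l) • v x) (hv.const_smul (-l)) (by
      intro i x y h; simp [hp i x y h]) (fun _ => 1) measurable_const
    simp only [one_mul, lintegral_const, measure_univ, mul_one] at this
    rw [← this]
    congr 1; ext x; congr 2
    simp only [hs, hq, Pi.smul_apply, smul_eq_mul, Finset.mul_sum, Finset.sum_div, mul_pow]
    rw [← Finset.sum_neg_distrib, ← Finset.sum_sub_distrib, ← Finset.sum_sub_distrib]
    apply Finset.sum_congr rfl; intros; ring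
  have hmain := gauss_shift n v hv hp f hf
  have hpt : ∀ x, f (x + v x) ≤ ENNReal.ofReal (exp K) *
      (f (x + v x) * ENNReal.ofReal (exp (- s x - q x / 2))) +
      ENNReal.ofReal (q x) * ENNReal.ofReal (1 / η) +
      ENNReal.ofReal (exp (l * s x - l ^ 2 * q x / 2)) *
        ENNReal.ofReal (exp (-l * (K - η / 2) + l ^ 2 * η / 2)) := by
    intro x
    by_cases h1 : s x + q x / 2 ≤ K
    · refine le_trans ?_ (le_trans le_self_add le_self_add)
      rw [mul_left_comm, ← ENNReal.ofReal_mul (exp_nonneg _), ← exp_add]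
      conv_lhs => rw [← mul_one (f (x + v x))]
      gcongr
      rw [ENNReal.one_le_ofReal]
      apply one_le_exp; linarith
    · push Not at h1
      by_cases h2 : q x ≤ η
      · refine le_trans (hf1 _) (le_trans ?_ le_add_self)
        rw [← ENNReal.ofReal_mul (exp_nonneg _), ← exp_add, ENNReal.one_le_ofReal]
        apply one_le_exp
        have h3 : K - η / 2 ≤ s x := by linarith
        nlinarith [mul_le_mul_of_nonneg_left h3 hl, mul_le_mul_of_nonneg_left h2 (sq_nonneg l)]
      · push Not at h2
        refine le_trans (hf1 _) (le_trans ?_ (le_trans le_add_self le_self_add))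
        rw [← ENNReal.ofReal_mul (by positivity), ENNReal.one_le_ofReal, mul_one_div, le_div_iff₀ hη]
        linarith
  calc ∫⁻ x, f (x + v x) ∂(gam n) ≤ _ := lintegral_mono hpt
    _ = _ := by
      rw [lintegral_add_right _ (by fun_prop), lintegral_add_right _ (by fun_prop),
        lintegral_const_mul _ (by fun_prop), lintegral_mul_const _ (by fun_prop),
        lintegral_mul_const _ (by fun_prop), hexp, hmain, one_mul]
    _ ≤ _ := by
      gcongr
      calc _ ≤ ENNReal.ofReal δ * ENNReal.ofReal (1 / η) := by gcongr
        _ = _ := by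
          rw [← ENNReal.ofReal_mul' (by positivity)]; congr 1; ring

/-- Uniform absolute continuity form. -/
theorem gauss_shift_A4 (C τ : ℝ) (hC : 0 ≤ C) (hτ : 0 < τ) : ∃ K : ℝ, 0 ≤ K ∧
    ∀ (n : ℕ) (v : (Fin n → ℝ) → Fin n → ℝ), Measurable v →
    (∀ i x y, (∀ j, j < i → x j = y j) → v x i = v y i) →
    ∀ (f : (Fin n → ℝ) → ℝ≥0∞), Measurable f → (∀ x, f x ≤ 1) →
    ∫⁻ x, ENNReal.ofReal (∑ i, v x i ^ 2) ∂(gam n) ≤ ENNReal.ofReal C →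
    ∫⁻ x, f (x + v x) ∂(gam n) ≤ ENNReal.ofReal (exp K) * ∫⁻ x, f x ∂(gam n) +
      ENNReal.ofReal τ := by
  set η : ℝ := 2 * (C + 1) / τ with hη
  have hη0 : 0 < η := by positivity
  refine ⟨max 0 (η - log (τ / 2)), le_max_left _ _, ?_⟩
  intro n v hv hp f hf hf1 hδ
  have h := gauss_shift_bound n v hv hp f hf hf1 C η (max 0 (η - log (τ / 2))) 1 hη0 zero_le_one hδ
  refine h.trans ?_
  rw [add_assoc, ← ENNReal.ofReal_add (by positivity) (by positivity)]
  gcongr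
  have h1 : C / η ≤ τ / 2 := by
    rw [hη, div_div_eq_mul_div, div_le_div_iff₀ (by positivity) (by positivity)]; nlinarith
  have h2 : exp (-1 * (max 0 (η - log (τ / 2)) - η / 2) + 1 ^ 2 * η / 2) ≤ τ / 2 := by
    rw [← le_log_iff_exp_le (by positivity)]
    have := le_max_right 0 (η - log (τ / 2))
    linarith
  linarith

/-- Small shifts give small total variation distance. -/
theorem gauss_shift_A5 (τ : ℝ) (hτ : 0 < τ) : ∃ δ : ℝ, 0 < δ ∧
    ∀ (n : ℕ) (v : (Fin n → ℝ) → Fin n → ℝ), Measurable v →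
    (∀ i x y, (∀ j, j < i → x j = y j) → v x i = v y i) →
    ∀ (f : (Fin n → ℝ) → ℝ≥0∞), Measurable f → (∀ x, f x ≤ 1) →
    ∫⁻ x, ENNReal.ofReal (∑ i, v x i ^ 2) ∂(gam n) ≤ ENNReal.ofReal δ →
    ∫⁻ x, f (x + v x) ∂(gam n) ≤ ∫⁻ x, f x ∂(gam n) + ENNReal.ofReal τ := by
  set K : ℝ := log (1 + τ / 3) with hK
  have hK0 : 0 < K := log_pos (by linarith)
  set l : ℝ := 2 / K * (1 + |log (τ / 3)|) with hl
  have hl0 : 0 < l := by positivity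
  set η : ℝ := min K (1 / l ^ 2) with hη
  have hη0 : 0 < η := by positivity
  refine ⟨η * (τ / 3), by positivity, ?_⟩
  intro n v hv hp f hf hf1 hδ
  have h := gauss_shift_bound n v hv hp f hf hf1 _ η K l hη0 hl0.le hδ
  have h1 : η * (τ / 3) / η = τ / 3 := by field_simp
  have h2 : exp (-l * (K - η / 2) + l ^ 2 * η / 2) ≤ τ / 3 := by
    rw [← le_log_iff_exp_le (by positivity)]
    have a1 : η ≤ K := min_le_left _ _
    have a2 : l ^ 2 * η ≤ 1 := by
      have : η ≤ 1 / l ^ 2 := min_le_right _ _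
      rw [le_div_iff₀ (by positivity)] at this; linarith
    have a3 : l * K = 2 * (1 + |log (τ / 3)|) := by rw [hl]; field_simp
    have a4 := neg_abs_le (log (τ / 3))
    nlinarith [mul_le_mul_of_nonneg_left a1 hl0.le]
  have h3 : exp K = 1 + τ / 3 := exp_log (by positivity)
  have h4 : ∫⁻ x, f x ∂(gam n) ≤ 1 := by
    calc _ ≤ ∫⁻ _, 1 ∂(gam n) := lintegral_mono hf1
      _ = 1 := by simp
  refine h.trans ?_
  rw [h1, h3, ENNReal.ofReal_add zero_le_one (by positivity), add_mul, ENNReal.ofReal_one, one_mul]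
  have : τ = τ / 3 + τ / 3 + τ / 3 := by ring
  rw [add_assoc, add_assoc]
  gcongr
  conv_rhs => rw [this, ENNReal.ofReal_add (by positivity) (by positivity),
    ENNReal.ofReal_add (by positivity) (by positivity), add_assoc]
  gcongr
  exact (mul_le_mul_right h4 _).trans (by simp)

end PartA


/-! ## Part C: a Cameron-Martin type bound for fractional Gaussian noise -/

section PartC

/-- Correlation of fractional Gaussian noise. -/
noncomputable def fgn (H x : ℝ) : ℝ :=
  (|x + 1| ^ (2 * H) + |x - 1| ^ (2 * H) - 2 * |x| ^ (2 * H)) / 2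

/-- Exponential building block. -/
noncomputable def ffx (θ x : ℝ) : ℝ := exp (-(θ * x)) - 1 + θ * x

noncomputable def gamx (θ x : ℝ) : ℝ := (ffx θ |x + 1| + ffx θ |x - 1| - 2 * ffx θ |x|) / 2

theorem ffx_nonneg (θ x : ℝ) : 0 ≤ ffx θ x := by
  unfold ffx; have := add_one_le_exp (-(θ * x)); linarith

theorem ffx_integrable_one (H : ℝ) (h1 : 1 / 2 < H) (h2 : H < 1) :
    IntegrableOn (fun θ : ℝ => ffx θ 1 * θ ^ (-1 - 2 * H)) (Set.Ioi 0) := by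
  have hcont : ContinuousOn (fun θ : ℝ => ffx θ 1 * θ ^ (-1 - 2 * H)) (Set.Ioi 0) := by
    apply ContinuousOn.mul
    · unfold ffx; fun_prop
    · intro θ hθ
      exact (continuousAt_rpow_const _ _ (Or.inl (ne_of_gt hθ))).continuousWithinAt
  rw [← Set.Ioc_union_Ioi_eq_Ioi (zero_le_one (α := ℝ))]
  apply IntegrableOn.union
  · have hi : IntegrableOn (fun θ : ℝ => θ ^ (1 - 2 * H)) (Set.Ioc 0 1) := by
      have := intervalIntegral.intervalIntegrable_rpow' (a := 0) (b := 1) (r := 1 - 2 * H)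
        (by linarith)
      rwa [intervalIntegrable_iff_integrableOn_Ioc_of_le zero_le_one] at this
    refine Integrable.mono' hi
      ((hcont.mono Set.Ioc_subset_Ioi_self).aestronglyMeasurable measurableSet_Ioc) ?_
    filter_upwards [ae_restrict_mem measurableSet_Ioc] with θ hθ
    have hp : 0 < θ ^ (-1 - 2 * H) := rpow_pos_of_pos hθ.1 _
    rw [norm_of_nonneg (mul_nonneg (ffx_nonneg _ _) hp.le)]
    have e : θ ^ (1 - 2 * H) = θ ^ 2 * θ ^ (-1 - 2 * H) := by
      rw [← rpow_natCast, ← rpow_add hθ.1]; norm_num; ring_nf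
    rw [e]
    gcongr
    unfold ffx
    have := Real.abs_exp_sub_one_sub_id_le (x := -θ) (by rw [abs_neg, abs_of_pos hθ.1]; exact hθ.2)
    have := le_of_abs_le this
    simp only [mul_one]; nlinarith
  · have hi : IntegrableOn (fun θ : ℝ => θ ^ (- 2 * H)) (Set.Ioi 1) :=
      integrableOn_Ioi_rpow_of_lt (by linarith) zero_lt_one
    refine Integrable.mono' hi
      ((hcont.mono (Set.Ioi_subset_Ioi zero_le_one)).aestronglyMeasurable measurableSet_Ioi) ?_
    filter_upwards [ae_restrict_mem measurableSet_Ioi] with θ hθ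
    have hθ0 : 0 < θ := lt_trans zero_lt_one hθ
    have hp : 0 < θ ^ (-1 - 2 * H) := rpow_pos_of_pos hθ0 _
    rw [norm_of_nonneg (mul_nonneg (ffx_nonneg _ _) hp.le)]
    have e : θ ^ (- 2 * H) = θ * θ ^ (-1 - 2 * H) := by
      conv_rhs => rw [← rpow_one θ, ← rpow_mul hθ0.le, one_mul, ← rpow_add hθ0]
      congr 1; ring
    rw [e]
    gcongr
    unfold ffx
    have : exp (-(θ * 1)) ≤ 1 := exp_le_one_iff.2 (by linarith)
    linarith

noncomputable def JH (H : ℝ) : ℝ := ∫ θ in Set.Ioi (0:ℝ), ffx θ 1 * θ ^ (-1 - 2 * H)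

theorem ffx_integral (H : ℝ) (h1 : 1 / 2 < H) (h2 : H < 1) (r : ℝ) (hr : 0 ≤ r) :
    IntegrableOn (fun θ : ℝ => ffx θ r * θ ^ (-1 - 2 * H)) (Set.Ioi 0) ∧
    ∫ θ in Set.Ioi (0:ℝ), ffx θ r * θ ^ (-1 - 2 * H) = r ^ (2 * H) * JH H := by
  rcases hr.eq_or_lt with rfl | hr
  · have : ∀ θ : ℝ, ffx θ 0 = 0 := by intro θ; simp [ffx]
    simp only [this, zero_mul, integral_zero]
    refine ⟨integrableOn_zero, ?_⟩
    rw [zero_rpow (by linarith), zero_mul]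
  · have key : ∀ θ ∈ Set.Ioi (0:ℝ), ffx θ r * θ ^ (-1 - 2 * H) =
        r ^ (1 + 2 * H) * (fun θ : ℝ => ffx θ 1 * θ ^ (-1 - 2 * H)) (θ * r) := by
      intro θ hθ
      simp only
      rw [mul_rpow (le_of_lt hθ) hr.le]
      have : r ^ (1 + 2 * H) * r ^ (-1 - 2 * H) = 1 := by
        rw [← rpow_add hr]; ring_nf; exact rpow_zero r
      have e : ffx θ r = ffx (θ * r) 1 := by simp [ffx]
      rw [e]
      linear_combination (-(ffx (θ * r) 1 * θ ^ (-1 - 2 * H))) * this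
    constructor
    · rw [integrableOn_congr_fun key measurableSet_Ioi]
      apply Integrable.const_mul
      have := (integrableOn_Ioi_comp_mul_right_iff
        (fun θ : ℝ => ffx θ 1 * θ ^ (-1 - 2 * H)) 0 hr).2
      rw [zero_mul] at this
      exact this (ffx_integrable_one H h1 h2)
    · rw [setIntegral_congr_fun measurableSet_Ioi key, integral_const_mul,
        integral_comp_mul_right_Ioi (fun θ : ℝ => ffx θ 1 * θ ^ (-1 - 2 * H)) 0 hr, zero_mul]
      simp only [smul_eq_mul]
      rw [← mul_assoc, rpow_add hr, rpow_one]
      unfold JH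
      field_simp

theorem gamx_integral (H : ℝ) (h1 : 1 / 2 < H) (h2 : H < 1) (x : ℝ) :
    IntegrableOn (fun θ : ℝ => gamx θ x * θ ^ (-1 - 2 * H)) (Set.Ioi 0) ∧
    ∫ θ in Set.Ioi (0:ℝ), gamx θ x * θ ^ (-1 - 2 * H) = fgn H x * JH H := by
  obtain ⟨i1, e1⟩ := ffx_integral H h1 h2 _ (abs_nonneg (x + 1))
  obtain ⟨i2, e2⟩ := ffx_integral H h1 h2 _ (abs_nonneg (x - 1))
  obtain ⟨i3, e3⟩ := ffx_integral H h1 h2 _ (abs_nonneg x)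
  have e : ∀ θ : ℝ, gamx θ x * θ ^ (-1 - 2 * H) =
      (1/2) * (ffx θ |x + 1| * θ ^ (-1 - 2 * H)) + (1/2) * (ffx θ |x - 1| * θ ^ (-1 - 2 * H))
        - ffx θ |x| * θ ^ (-1 - 2 * H) := by
    intro θ; unfold gamx; ring
  simp only [e]
  have i12 : IntegrableOn (fun θ : ℝ => (1/2) * (ffx θ |x + 1| * θ ^ (-1 - 2 * H)) +
      (1/2) * (ffx θ |x - 1| * θ ^ (-1 - 2 * H))) (Set.Ioi 0) :=
    (i1.const_mul _).add (i2.const_mul _)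
  refine ⟨i12.sub i3, ?_⟩
  rw [integral_sub i12 i3, integral_add (i1.const_mul _) (i2.const_mul _), integral_const_mul, integral_const_mul,
    e1, e2, e3]
  unfold fgn; ring

/-! ### algebra for a fixed exponential kernel -/

noncomputable def aax (q : ℝ) (n : ℕ) (d : ℕ → ℝ) (k : ℕ) : ℝ :=
  ∑ i ∈ Finset.range n, if k ≤ i then q ^ (i - k) * d i else 0

theorem aax_succ (q : ℝ) (n : ℕ) (d : ℕ → ℝ) (k : ℕ) :
    aax q (n + 1) d (k + 1) = aax q n (fun i => d (i + 1)) k := by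
  unfold aax
  rw [Finset.sum_range_succ']
  simp

theorem aax_zero (q : ℝ) (n : ℕ) (d : ℕ → ℝ) :
    aax q (n + 1) d 0 = d 0 + q * aax q n (fun i => d (i + 1)) 0 := by
  unfold aax
  rw [Finset.sum_range_succ', Finset.mul_sum]
  simp only [zero_le, if_true, tsub_zero, pow_zero, one_mul]
  rw [add_comm]
  congr 1
  apply Finset.sum_congr rfl; intros; ring

theorem expform (q : ℝ) (n : ℕ) (d : ℕ → ℝ) :
    ∑ i ∈ Finset.range n, ∑ j ∈ Finset.range n, d i * d j * q ^ (Nat.dist i j) =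
      (1 - q ^ 2) * ∑ k ∈ Finset.range n, aax q n d k ^ 2 + q ^ 2 * aax q n d 0 ^ 2 := by
  induction n generalizing d with
  | zero => simp [aax]
  | succ n ih =>
    rw [Finset.sum_range_succ']
    simp only [Finset.sum_range_succ' _ n]
    simp only [Nat.dist_succ_succ, aax_succ, aax_zero]
    rw [Finset.sum_add_distrib, ih]
    have e1 : ∑ x ∈ Finset.range n, d (x + 1) * d 0 * q ^ ((x + 1).dist 0) =
        d 0 * (q * aax q n (fun i => d (i + 1)) 0) := by
      unfold aax; rw [Finset.mul_sum, Finset.mul_sum]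
      apply Finset.sum_congr rfl; intros i _
      simp [Nat.dist]; ring
    have e2 : ∑ x ∈ Finset.range n, d 0 * d (x + 1) * q ^ (Nat.dist 0 (x + 1)) =
        d 0 * (q * aax q n (fun i => d (i + 1)) 0) := by
      rw [← e1]; apply Finset.sum_congr rfl; intros i _
      rw [Nat.dist_comm]; ring
    rw [e1, e2, Nat.dist_self]
    ring

theorem sq_le_aax (q : ℝ) (hq : 0 ≤ q) (n : ℕ) (d : ℕ → ℝ) :
    ∑ i ∈ Finset.range n, d i ^ 2 + (q + q ^ 2) * aax q n d 0 ^ 2 ≤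
      (1 + q) ^ 2 * ∑ k ∈ Finset.range n, aax q n d k ^ 2 := by
  induction n generalizing d with
  | zero => simp [aax]
  | succ n ih =>
    rw [Finset.sum_range_succ', Finset.sum_range_succ' _ n]
    simp only [aax_succ, aax_zero]
    have := ih (fun i => d (i + 1))
    set a := aax q n (fun i => d (i + 1)) 0
    nlinarith [mul_nonneg hq (sq_nonneg (d 0 + q * a + a))]

theorem gamx_eq (θ : ℝ) (i j : ℕ) : gamx θ ((i:ℝ) - j) =
    (1 - exp (-θ)) ^ 2 / (2 * exp (-θ)) * exp (-θ) ^ (Nat.dist i j) -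
      (if i = j then ((1 - exp (-θ) ^ 2) / (2 * exp (-θ)) - θ) else 0) := by
  have aux : ∀ k : ℕ, gamx θ (k:ℝ) = (1 - exp (-θ)) ^ 2 / (2 * exp (-θ)) * exp (-θ) ^ k -
      (if k = 0 then ((1 - exp (-θ) ^ 2) / (2 * exp (-θ)) - θ) else 0) := by
    intro k
    have hq := exp_pos (-θ)
    have hpow : ∀ m : ℕ, exp (-(θ * (m:ℝ))) = exp (-θ) ^ m := by
      intro m; rw [← exp_nat_mul]; congr 1; ring
    cases k with
    | zero =>
      simp only [gamx, ffx, Nat.cast_zero, zero_add, zero_sub, abs_neg, abs_one, abs_zero,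
        mul_zero, neg_zero, exp_zero, mul_one, pow_zero, if_true]
      field_simp
      ring
    | succ k =>
      have a1 : |((k+1:ℕ):ℝ) + 1| = ((k+2:ℕ):ℝ) := by
        rw [abs_of_nonneg (by positivity)]; push_cast; ring
      have a2 : |((k+1:ℕ):ℝ) - 1| = ((k:ℕ):ℝ) := by
        push_cast; rw [add_sub_cancel_right, abs_of_nonneg (by positivity)]
      have a3 : |((k+1:ℕ):ℝ)| = ((k+1:ℕ):ℝ) := abs_of_nonneg (by positivity)
      unfold gamx ffx
      rw [a1, a2, a3, hpow, hpow, hpow]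
      simp only [Nat.succ_ne_zero, if_false]
      push_cast
      field_simp
      ring
  have symm : ∀ x : ℝ, gamx θ (-x) = gamx θ x := by
    intro x; unfold gamx
    have b1 : |-x + 1| = |x - 1| := by rw [← abs_neg]; ring_nf
    have b2 : |-x - 1| = |x + 1| := by rw [← abs_neg]; ring_nf
    rw [b1, b2, abs_neg]; ring
  rcases le_total j i with h | h
  · have e : (i:ℝ) - j = ((i - j : ℕ):ℝ) := by rw [Nat.cast_sub h]
    have hiff : (i - j = 0) ↔ (i = j) := by omega
    rw [e, aux, Nat.dist_eq_sub_of_le_right h]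
    simp only [hiff]
  · have e : (i:ℝ) - j = -((j - i : ℕ):ℝ) := by rw [Nat.cast_sub h]; ring
    have hiff : (j - i = 0) ↔ (i = j) := by omega
    rw [e, symm, aux, Nat.dist_eq_sub_of_le h]
    simp only [hiff]

theorem mtheta (θ : ℝ) (hθ : 0 ≤ θ) :
    θ ^ 3 * exp (-θ) / 6 ≤ θ * (1 + exp (-θ)) - 2 * (1 - exp (-θ)) := by
  have hd : ∀ x : ℝ, HasDerivAt (fun x : ℝ => x * (1 + exp (-x)) - 2 * (1 - exp (-x)) -
      x ^ 3 * exp (-x) / 6) (1 - exp (-x) - x * exp (-x) - exp (-x) * (3 * x ^ 2 - x ^ 3) / 6) x := by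
    intro x
    have he : HasDerivAt (fun x : ℝ => exp (-x)) (-exp (-x)) x := by
      simpa using (hasDerivAt_neg x).exp
    have h := (((hasDerivAt_id x).mul (he.const_add 1)).sub ((he.const_sub 1).const_mul 2)).sub
      (((hasDerivAt_pow 3 x).mul he).div_const 6)
    refine h.congr_deriv ?_
    simp; ring
  have hm : MonotoneOn (fun x : ℝ => x * (1 + exp (-x)) - 2 * (1 - exp (-x)) -
      x ^ 3 * exp (-x) / 6) (Set.Ici 0) := by
    apply monotoneOn_of_deriv_nonneg (convex_Ici 0)
    · exact fun x _ => (hd x).continuousAt.continuousWithinAt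
    · exact fun x _ => (hd x).differentiableAt.differentiableWithinAt
    · intro x hx
      rw [interior_Ici] at hx
      have hx : 0 < x := hx
      rw [(hd x).deriv]
      have h3 := Real.quadratic_le_exp_of_nonneg hx.le
      have h4 : exp (-x) * exp x = 1 := by rw [← exp_add]; simp
      have h5 := exp_pos (-x)
      have : 0 ≤ exp (-x) * (exp x - 1 - x - (3 * x ^ 2 - x ^ 3) / 6) := by
        apply mul_nonneg h5.le
        have := pow_pos hx 3
        linarith
      nlinarith
  have := hm (Set.self_mem_Ici) hθ hθ
  simp at this
  linarith

theorem quad_lower (θ : ℝ) (hθ : 0 < θ) (n : ℕ) (d : ℕ → ℝ) :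
    θ ^ 3 * exp (-θ) / 6 * ∑ k ∈ Finset.range n, aax (exp (-θ)) n d k ^ 2 ≤
    ∑ i ∈ Finset.range n, ∑ j ∈ Finset.range n, d i * d j * gamx θ ((i:ℝ) - j) := by
  have hq := exp_pos (-θ)
  have hq1 : exp (-θ) < 1 := by rw [exp_lt_one_iff]; linarith
  have hE := expform (exp (-θ)) n d
  have hS := sq_le_aax (exp (-θ)) hq.le n d
  have hm := mtheta θ hθ.le
  have hsinh : 0 ≤ (1 - exp (-θ) ^ 2) / (2 * exp (-θ)) - θ := by
    have := Real.self_le_sinh_iff.2 hθ.le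
    rw [Real.sinh_eq] at this
    have e : exp θ = 1 / exp (-θ) := by rw [exp_neg]; simp
    rw [e] at this
    have e2 : (1 - exp (-θ) ^ 2) / (2 * exp (-θ)) = (1 / exp (-θ) - exp (-θ)) / 2 := by
      field_simp
    linarith
  have hQ : ∑ i ∈ Finset.range n, ∑ j ∈ Finset.range n, d i * d j * gamx θ ((i:ℝ) - j) =
      (1 - exp (-θ)) ^ 2 / (2 * exp (-θ)) *
      (∑ i ∈ Finset.range n, ∑ j ∈ Finset.range n, d i * d j * exp (-θ) ^ (Nat.dist i j)) -
      ((1 - exp (-θ) ^ 2) / (2 * exp (-θ)) - θ) * ∑ i ∈ Finset.range n, d i ^ 2 := by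
    rw [Finset.mul_sum, Finset.mul_sum, ← Finset.sum_sub_distrib]
    apply Finset.sum_congr rfl
    intro i hi
    simp only [gamx_eq, mul_sub, Finset.sum_sub_distrib, Finset.mul_sum]
    congr 1
    · apply Finset.sum_congr rfl; intros; ring
    · simp only [mul_ite, mul_zero]
      rw [Finset.sum_ite_eq, if_pos hi]; ring
  rw [hQ, hE]
  set q := exp (-θ)
  set A := ∑ k ∈ Finset.range n, aax q n d k ^ 2
  set D := ∑ i ∈ Finset.range n, d i ^ 2
  have hA : 0 ≤ A := Finset.sum_nonneg fun _ _ => sq_nonneg _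
  have hD : D ≤ (1 + q) ^ 2 * A := by
    have : 0 ≤ (q + q ^ 2) * aax q n d 0 ^ 2 := by positivity
    linarith
  have e : (1 - q) ^ 2 / (2 * q) * ((1 - q ^ 2) * A) - ((1 - q ^ 2) / (2 * q) - θ) *
      ((1 + q) ^ 2 * A) = (1 + q) * (θ * (1 + q) - 2 * (1 - q)) * A := by
    field_simp; ring
  have f1 : ((1 - q ^ 2) / (2 * q) - θ) * D ≤ ((1 - q ^ 2) / (2 * q) - θ) * ((1 + q) ^ 2 * A) := by
    gcongr
  have f2 : 0 ≤ (1 - q) ^ 2 / (2 * q) * (q ^ 2 * aax q n d 0 ^ 2) := by positivity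
  have f3 : θ ^ 3 * q / 6 * A ≤ (1 + q) * (θ * (1 + q) - 2 * (1 - q)) * A := by
    gcongr
    have : 0 ≤ θ ^ 3 * q / 6 := by positivity
    nlinarith
  rw [mul_add]
  linarith

end PartC


section PartC2

noncomputable def zzx (φ : ℕ → ℝ) (q : ℝ) : ℕ → ℝ
  | 0 => φ 0
  | i + 1 => q * zzx φ q i + φ (i + 1)

noncomputable def ppx (φ : ℕ → ℝ) (q : ℝ) : ℕ → ℝ
  | 0 => φ 0
  | i + 1 => zzx φ q (i + 1) - zzx φ q i

noncomputable def yyx (φ : ℕ → ℝ) (q : ℝ) : ℕ → ℝ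
  | 0 => φ 0
  | i + 1 => q * yyx φ q i + ppx φ q (i + 1)

theorem zzx_deriv (φ : ℕ → ℝ) (i : ℕ) (q : ℝ) :
    HasDerivAt (fun q => (1 - q) * zzx φ q i) (-yyx φ q i) q := by
  induction i with
  | zero =>
    simp only [zzx, yyx]
    have := ((hasDerivAt_id q).const_sub 1).mul_const (φ 0)
    exact this.congr_deriv (by simp)
  | succ i ih =>
    have h := ((hasDerivAt_id q).mul ih).add (((hasDerivAt_id q).const_sub 1).mul_const (φ (i + 1)))
    have e : (fun q => (1 - q) * zzx φ q (i + 1)) =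
        fun q => q * ((1 - q) * zzx φ q i) + (1 - q) * φ (i + 1) := by
      ext q; simp only [zzx]; ring
    rw [e]
    refine h.congr_deriv ?_
    simp only [zzx, yyx, ppx, id]; ring

theorem zzx_cont (φ : ℕ → ℝ) (i : ℕ) : Continuous fun q => zzx φ q i := by
  induction i with
  | zero => simp only [zzx]; fun_prop
  | succ i ih => simp only [zzx]; fun_prop

theorem yyx_cont (φ : ℕ → ℝ) (i : ℕ) : Continuous fun q => yyx φ q i := by
  induction i with
  | zero => simp only [yyx]; fun_prop
  | succ i ih =>
    have h1 := zzx_cont φ i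
    have h2 := zzx_cont φ (i + 1)
    simp only [yyx, ppx]; fun_prop

theorem yyx_integral (φ : ℕ → ℝ) (i : ℕ) :
    IntegrableOn (fun θ => exp (-θ) * yyx φ (exp (-θ)) i) (Set.Ioi 0) ∧
    ∫ θ in Set.Ioi (0:ℝ), exp (-θ) * yyx φ (exp (-θ)) i = φ i := by
  have hexp : ∀ x : ℝ, HasDerivAt (fun x : ℝ => exp (-x)) (-exp (-x)) x := by
    intro x; simpa using (hasDerivAt_neg x).exp
  have hInt0 : IntegrableOn (fun θ => exp (-θ) * yyx φ (exp (-θ)) i) (Set.Ioi 0) := by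
    obtain ⟨B, hB⟩ := isCompact_Icc.exists_bound_of_continuousOn
      (s := Set.Icc (0:ℝ) 1) (yyx_cont φ i).continuousOn
    have h1 : IntegrableOn (fun θ : ℝ => exp (-θ) * B) (Set.Ioi 0) := by
      have := (exp_neg_integrableOn_Ioi 0 (zero_lt_one (α := ℝ))).mul_const B
      simpa [IntegrableOn] using this
    refine Integrable.mono' h1 ?_ ?_
    · have := yyx_cont φ i
      exact (Continuous.aestronglyMeasurable (by fun_prop))
    · filter_upwards [ae_restrict_mem measurableSet_Ioi] with θ hθ
      rw [norm_mul, norm_of_nonneg (exp_nonneg _)]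
      gcongr
      exact hB _ ⟨exp_nonneg _, by rw [exp_le_one_iff]; linarith [show 0 < θ from hθ]⟩
  refine ⟨hInt0, ?_⟩
  have := integral_Ioi_of_hasDerivAt_of_tendsto' (a := 0) (m := φ i)
    (f := fun θ : ℝ => (1 - exp (-θ)) * zzx φ (exp (-θ)) i)
    (f' := fun θ => exp (-θ) * yyx φ (exp (-θ)) i) ?_ hInt0 ?_
  · rw [this]; simp
  · intro x _
    have h := (zzx_deriv φ i (exp (-x))).comp x (hexp x)
    refine h.congr_deriv ?_
    ring
  · have hc : Continuous (fun q => (1 - q) * zzx φ q i) := by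
      have := zzx_cont φ i
      fun_prop
    have h0 : (1 - 0) * zzx φ 0 i = φ i := by
      cases i <;> simp [zzx]
    have h1 : Filter.Tendsto (fun θ : ℝ => exp (-θ)) Filter.atTop (nhds 0) :=
      tendsto_exp_neg_atTop_nhds_zero
    have := (hc.tendsto 0).comp h1
    rw [h0] at this
    exact this

theorem yyx_sum (φ : ℕ → ℝ) (q : ℝ) (i : ℕ) :
    yyx φ q i = ∑ k ∈ Finset.range (i + 1), q ^ (i - k) * ppx φ q k := by
  induction i with
  | zero => simp [yyx, ppx]
  | succ i ih =>
    rw [Finset.sum_range_succ, yyx, ih, Finset.mul_sum]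
    congr 1
    · apply Finset.sum_congr rfl
      intro k hk
      rw [Finset.mem_range] at hk
      rw [show i + 1 - k = (i - k) + 1 by omega]; ring
    · simp

theorem zzx_sum (φ : ℕ → ℝ) (q : ℝ) (i : ℕ) :
    zzx φ q i = ∑ k ∈ Finset.range (i + 1), q ^ (i - k) * φ k := by
  induction i with
  | zero => simp [zzx]
  | succ i ih =>
    rw [Finset.sum_range_succ, zzx, ih, Finset.mul_sum]
    congr 1
    · apply Finset.sum_congr rfl
      intro k hk
      rw [Finset.mem_range] at hk
      rw [show i + 1 - k = (i - k) + 1 by omega]; ring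
    · simp

theorem dy_eq_ap (φ d : ℕ → ℝ) (q : ℝ) (n : ℕ) :
    ∑ i ∈ Finset.range n, d i * yyx φ q i = ∑ k ∈ Finset.range n, aax q n d k * ppx φ q k := by
  unfold aax
  simp only [Finset.sum_mul]
  rw [Finset.sum_comm]
  apply Finset.sum_congr rfl
  intro i hi
  rw [Finset.mem_range] at hi
  rw [yyx_sum, Finset.mul_sum]
  simp only [ite_mul, zero_mul]
  rw [← Finset.sum_filter]
  apply Finset.sum_congr
  · ext k; simp; omega
  · intros; ring

theorem geomx (q : ℝ) (i : ℕ) :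
    (1 - q) * ∑ k ∈ Finset.range (i + 1), q ^ (i - k) = 1 - q ^ (i + 1) := by
  induction i with
  | zero => simp
  | succ i ih =>
    rw [Finset.sum_range_succ]
    have : ∑ k ∈ Finset.range (i + 1), q ^ (i + 1 - k) =
        q * ∑ k ∈ Finset.range (i + 1), q ^ (i - k) := by
      rw [Finset.mul_sum]
      apply Finset.sum_congr rfl
      intro k hk
      rw [Finset.mem_range] at hk
      rw [show i + 1 - k = (i - k) + 1 by omega]; ring
    rw [this]
    simp only [tsub_self, pow_zero]
    linear_combination q * ih

theorem ppx_sq (φ : ℕ → ℝ) (q : ℝ) (h0 : 0 ≤ q) (h1 : q ≤ 1) (i : ℕ) :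
    ppx φ q i ^ 2 ≤ 2 * q ^ (2 * i) * φ i ^ 2 +
      2 * (1 - q) * ∑ j ∈ Finset.range i, q ^ (i - 1 - j) * (φ i - φ j) ^ 2 := by
  cases i with
  | zero => simp [ppx]; nlinarith [sq_nonneg (φ 0)]
  | succ i =>
    set S := ∑ j ∈ Finset.range (i + 1), q ^ (i - j) * (φ (i + 1) - φ j) with hS
    set G := ∑ j ∈ Finset.range (i + 1), q ^ (i - j) with hG
    set S2 := ∑ j ∈ Finset.range (i + 1), q ^ (i - j) * (φ (i + 1) - φ j) ^ 2 with hS2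
    have hg := geomx q i
    have e1 : S = G * φ (i + 1) - zzx φ q i := by
      rw [hS, hG, zzx_sum, Finset.sum_mul, ← Finset.sum_sub_distrib]
      apply Finset.sum_congr rfl; intros; ring
    have e : ppx φ q (i + 1) = q ^ (i + 1) * φ (i + 1) + (1 - q) * S := by
      rw [e1]; simp only [ppx, zzx]; linear_combination (-φ (i + 1)) * hg
    have hcs : S ^ 2 ≤ G * S2 := by
      apply Finset.sum_sq_le_sum_mul_sum_of_sq_le_mul
      · intros; positivity
      · intros; positivity
      · intros; apply le_of_eq; ring
    have hS2n : 0 ≤ S2 := Finset.sum_nonneg fun _ _ => by positivity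
    have hG1 : (1 - q) * G ≤ 1 := by
      rw [hg]; have := pow_nonneg h0 (i + 1); linarith
    have h1q : 0 ≤ 1 - q := by linarith
    have h3 : ((1 - q) * S) ^ 2 ≤ (1 - q) * S2 := by
      calc ((1 - q) * S) ^ 2 = (1 - q) ^ 2 * S ^ 2 := by ring
        _ ≤ (1 - q) ^ 2 * (G * S2) := by gcongr
        _ = ((1 - q) * G) * ((1 - q) * S2) := by ring
        _ ≤ 1 * ((1 - q) * S2) := by gcongr
        _ = _ := one_mul _
    have e3 : i + 1 - 1 = i := rfl
    rw [e3, ← hS2, e]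
    have e4 : q ^ (2 * (i + 1)) * φ (i + 1) ^ 2 = (q ^ (i + 1) * φ (i + 1)) ^ 2 := by ring
    nlinarith [sq_nonneg (q ^ (i + 1) * φ (i + 1) - (1 - q) * S)]

/-- The discrete energy. -/
noncomputable def NNx (H : ℝ) (n : ℕ) (φ : ℕ → ℝ) : ℝ :=
  ∑ i ∈ Finset.range n, (((i:ℝ) + 1) ^ (1 - 2 * H) * φ i ^ 2 +
    ∑ j ∈ Finset.range i, ((i:ℝ) - j) ^ (- (2 * H)) * (φ i - φ j) ^ 2)

noncomputable def VVx (H : ℝ) (n : ℕ) (d : ℕ → ℝ) : ℝ :=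
  ∑ i ∈ Finset.range n, ∑ j ∈ Finset.range n, d i * d j * fgn H ((i:ℝ) - j)

theorem gam_int (s r : ℝ) (hs : 0 < s) (hr : 0 < r) :
    IntegrableOn (fun t : ℝ => t ^ (s - 1) * exp (-(r * t))) (Set.Ioi 0) := by
  have := integrableOn_rpow_mul_exp_neg_mul_rpow (p := 1) (s := s - 1) (b := r) (by linarith)
    one_pos hr
  simpa using this

theorem fgn_CM (H : ℝ) (h1 : 1 / 2 < H) (h2 : H < 1) : ∃ C : ℝ, 0 ≤ C ∧
    ∀ (n : ℕ) (d φ : ℕ → ℝ), 0 ≤ C * VVx H n d ∧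
      (∑ i ∈ Finset.range n, d i * φ i) ^ 2 ≤ C * VVx H n d * NNx H n φ := by
  set Γ1 := 12 * Gamma (2 * H - 1) with hΓ1
  set Γ2 := 12 * Gamma (2 * H) with hΓ2
  have p1 : 0 < Γ1 := mul_pos (by norm_num) (Gamma_pos_of_pos (by linarith))
  have p2 : 0 < Γ2 := mul_pos (by norm_num) (Gamma_pos_of_pos (by linarith))
  have hJ : 0 ≤ JH H := by
    apply setIntegral_nonneg measurableSet_Ioi
    intro θ hθ
    exact mul_nonneg (ffx_nonneg _ _) (rpow_nonneg (le_of_lt hθ) _)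
  refine ⟨JH H * (Γ1 + Γ2), by positivity, ?_⟩
  intro n d φ
  -- the three functions
  set U1 : ℝ → ℝ := fun θ => ∑ i ∈ Finset.range n, ∑ j ∈ Finset.range n,
    d i * d j * (gamx θ ((i:ℝ) - j) * θ ^ (-1 - 2 * H)) with hU1
  set Y : ℝ → ℝ := fun θ => ∑ i ∈ Finset.range n, d i * (exp (-θ) * yyx φ (exp (-θ)) i) with hY
  set U2 : ℝ → ℝ := fun θ => ∑ i ∈ Finset.range n,
    ((12 * φ i ^ 2) * (θ ^ ((2 * H - 1) - 1) * exp (-((2 * (i:ℝ) + 1) * θ))) +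
      ∑ j ∈ Finset.range i, (12 * (φ i - φ j) ^ 2) *
        (θ ^ (2 * H - 1) * exp (-(((i:ℝ) - j) * θ)))) with hU2
  have hij : ∀ i, ∀ j ∈ Finset.range i, (0:ℝ) < (i:ℝ) - j := by
    intro i j hj
    rw [Finset.mem_range] at hj
    have : (j:ℝ) < i := by exact_mod_cast hj
    linarith
  have iU1 : IntegrableOn U1 (Set.Ioi 0) := by
    apply integrable_finsetSum; intro i _
    apply integrable_finsetSum; intro j _
    exact (gamx_integral H h1 h2 _).1.const_mul _
  have eU1 : ∫ θ in Set.Ioi (0:ℝ), U1 θ = JH H * VVx H n d := by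
    rw [hU1, integral_finsetSum]
    · unfold VVx; rw [Finset.mul_sum]
      apply Finset.sum_congr rfl; intro i _
      rw [integral_finsetSum]
      · rw [Finset.mul_sum]
        apply Finset.sum_congr rfl; intro j _
        rw [integral_const_mul, (gamx_integral H h1 h2 _).2]; ring
      · intro j _; exact (gamx_integral H h1 h2 _).1.const_mul _
    · intro i _
      apply integrable_finsetSum; intro j _
      exact (gamx_integral H h1 h2 _).1.const_mul _
  have iY : IntegrableOn Y (Set.Ioi 0) := by
    apply integrable_finsetSum; intro i _
    exact (yyx_integral φ i).1.const_mul _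
  have eY : ∫ θ in Set.Ioi (0:ℝ), Y θ = ∑ i ∈ Finset.range n, d i * φ i := by
    rw [hY, integral_finsetSum]
    · apply Finset.sum_congr rfl; intro i _
      rw [integral_const_mul, (yyx_integral φ i).2]
    · intro i _; exact (yyx_integral φ i).1.const_mul _
  have iB : ∀ i, ∀ j ∈ Finset.range i, IntegrableOn (fun θ : ℝ => (12 * (φ i - φ j) ^ 2) *
        (θ ^ (2 * H - 1) * exp (-(((i:ℝ) - j) * θ)))) (Set.Ioi 0) := by
    intro i j hj
    exact (gam_int (2 * H) _ (by linarith) (hij i j hj)).const_mul _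
  have iA : ∀ i : ℕ, IntegrableOn (fun θ : ℝ => (12 * φ i ^ 2) *
      (θ ^ ((2 * H - 1) - 1) * exp (-((2 * (i:ℝ) + 1) * θ)))) (Set.Ioi 0) := by
    intro i
    exact (gam_int (2 * H - 1) _ (by linarith) (by positivity)).const_mul _
  have iS : ∀ i : ℕ, IntegrableOn (fun θ : ℝ => ∑ j ∈ Finset.range i, (12 * (φ i - φ j) ^ 2) *
        (θ ^ (2 * H - 1) * exp (-(((i:ℝ) - j) * θ)))) (Set.Ioi 0) := by
    intro i
    exact integrable_finsetSum _ (iB i)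
  have iAS : ∀ i ∈ Finset.range n, IntegrableOn (fun θ : ℝ => (12 * φ i ^ 2) *
      (θ ^ ((2 * H - 1) - 1) * exp (-((2 * (i:ℝ) + 1) * θ))) +
      ∑ j ∈ Finset.range i, (12 * (φ i - φ j) ^ 2) *
        (θ ^ (2 * H - 1) * exp (-(((i:ℝ) - j) * θ)))) (Set.Ioi 0) :=
    fun i _ => (iA i).add (iS i)
  have iU2 : IntegrableOn U2 (Set.Ioi 0) := integrable_finsetSum _ iAS
  have eU2 : ∫ θ in Set.Ioi (0:ℝ), U2 θ ≤ (Γ1 + Γ2) * NNx H n φ := by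
    rw [hU2, integral_finsetSum _ iAS]
    unfold NNx
    rw [Finset.mul_sum]
    apply Finset.sum_le_sum
    intro i _
    rw [integral_add (iA i) (iS i), integral_const_mul,
      Real.integral_rpow_mul_exp_neg_mul_Ioi (by linarith) (by positivity),
      integral_finsetSum _ (iB i), mul_add]
    apply add_le_add
    · have e : (1 / (2 * (i:ℝ) + 1)) ^ (2 * H - 1) ≤ ((i:ℝ) + 1) ^ (1 - 2 * H) := by
        rw [show (1 - 2 * H) = -(2 * H - 1) by ring, rpow_neg (by positivity),
          ← inv_rpow (by positivity)]
        apply rpow_le_rpow (by positivity) _ (by linarith)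
        rw [one_div]
        apply inv_anti₀ (by positivity)
        have : (0:ℝ) ≤ i := by positivity
        linarith
      calc _ = Γ1 * ((1 / (2 * (i:ℝ) + 1)) ^ (2 * H - 1) * φ i ^ 2) := by rw [hΓ1]; ring
        _ ≤ (Γ1 + Γ2) * (((i:ℝ) + 1) ^ (1 - 2 * H) * φ i ^ 2) := by
          gcongr; linarith
    · rw [Finset.mul_sum]
      apply Finset.sum_le_sum
      intro j hj
      have hp := hij i j hj
      rw [integral_const_mul, Real.integral_rpow_mul_exp_neg_mul_Ioi (by linarith) hp]
      have e : (1 / ((i:ℝ) - j)) ^ (2 * H) = ((i:ℝ) - j) ^ (-(2 * H)) := by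
        rw [rpow_neg hp.le, one_div, inv_rpow hp.le]
      rw [e]
      have : 0 ≤ ((i:ℝ) - j) ^ (-(2 * H)) := rpow_nonneg hp.le _
      calc _ = Γ2 * (((i:ℝ) - j) ^ (-(2 * H)) * (φ i - φ j) ^ 2) := by rw [hΓ2]; ring
        _ ≤ (Γ1 + Γ2) * (((i:ℝ) - j) ^ (-(2 * H)) * (φ i - φ j) ^ 2) := by
          gcongr; linarith
  -- pointwise bounds
  have hU1low : ∀ θ ∈ Set.Ioi (0:ℝ), θ ^ (2 - 2 * H) * exp (-θ) / 6 *
      ∑ k ∈ Finset.range n, aax (exp (-θ)) n d k ^ 2 ≤ U1 θ := by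
    intro θ hθ
    have hθ : 0 < θ := hθ
    have h := quad_lower θ hθ n d
    have hp : 0 < θ ^ (-1 - 2 * H) := rpow_pos_of_pos hθ _
    have e : U1 θ = θ ^ (-1 - 2 * H) *
        ∑ i ∈ Finset.range n, ∑ j ∈ Finset.range n, d i * d j * gamx θ ((i:ℝ) - j) := by
      rw [hU1]; simp only [Finset.mul_sum]
      apply Finset.sum_congr rfl; intros; apply Finset.sum_congr rfl; intros; ring
    rw [e]
    have e2 : θ ^ (2 - 2 * H) = θ ^ (-1 - 2 * H) * θ ^ 3 := by
      rw [← rpow_natCast θ 3, ← rpow_add hθ]; congr 1; push_cast; ring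
    calc _ = θ ^ (-1 - 2 * H) * (θ ^ 3 * exp (-θ) / 6 *
          ∑ k ∈ Finset.range n, aax (exp (-θ)) n d k ^ 2) := by rw [e2]; ring
      _ ≤ _ := by gcongr
  have hU1n : ∀ θ ∈ Set.Ioi (0:ℝ), 0 ≤ U1 θ := by
    intro θ hθ
    have hθ' : 0 < θ := hθ
    refine le_trans ?_ (hU1low θ hθ)
    have : 0 ≤ ∑ k ∈ Finset.range n, aax (exp (-θ)) n d k ^ 2 :=
      Finset.sum_nonneg fun _ _ => sq_nonneg _
    positivity
  have hU2low : ∀ θ ∈ Set.Ioi (0:ℝ), 6 * θ ^ (2 * H - 2) * exp (-θ) *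
      ∑ k ∈ Finset.range n, ppx φ (exp (-θ)) k ^ 2 ≤ U2 θ := by
    intro θ hθ
    have hθ : 0 < θ := hθ
    rw [hU2, Finset.mul_sum]
    apply Finset.sum_le_sum
    intro i _
    have hq0 := exp_pos (-θ)
    have hq1 : exp (-θ) ≤ 1 := by rw [exp_le_one_iff]; linarith
    have hqθ : 1 - exp (-θ) ≤ θ := by have := add_one_le_exp (-θ); linarith
    have hpow : ∀ m : ℕ, exp (-((m:ℝ) * θ)) = exp (-θ) ^ m := by
      intro m; rw [← exp_nat_mul]; congr 1; ring
    have hp : 0 < θ ^ (2 * H - 2) := rpow_pos_of_pos hθ _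
    have e2 : θ ^ (2 * H - 1) = θ ^ (2 * H - 2) * θ := by
      conv_rhs => rw [← rpow_one θ, ← rpow_mul hθ.le, one_mul, ← rpow_add hθ]
      congr 1; ring
    have e1 : exp (-((2 * (i:ℝ) + 1) * θ)) = exp (-θ) ^ (2 * i + 1) := by
      rw [← hpow]; push_cast; ring_nf
    have e3 : (2 * H - 1) - 1 = 2 * H - 2 := by ring
    rw [e1, e2, e3]
    calc _ ≤ 6 * θ ^ (2 * H - 2) * exp (-θ) * (2 * exp (-θ) ^ (2 * i) * φ i ^ 2 +
        2 * (1 - exp (-θ)) * ∑ j ∈ Finset.range i, exp (-θ) ^ (i - 1 - j) * (φ i - φ j) ^ 2) := by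
          gcongr
          exact ppx_sq φ _ hq0.le hq1 i
      _ ≤ 6 * θ ^ (2 * H - 2) * exp (-θ) * (2 * exp (-θ) ^ (2 * i) * φ i ^ 2 +
        2 * θ * ∑ j ∈ Finset.range i, exp (-θ) ^ (i - 1 - j) * (φ i - φ j) ^ 2) := by
          gcongr
      _ = _ := by
          rw [mul_add]
          congr 1
          · ring
          · rw [Finset.mul_sum, Finset.mul_sum]
            apply Finset.sum_congr rfl
            intro j hj
            rw [Finset.mem_range] at hj
            have : exp (-(((i:ℝ) - j) * θ)) = exp (-θ) * exp (-θ) ^ (i - 1 - j) := by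
              rw [← pow_succ', ← hpow, show i - 1 - j + 1 = i - j by omega, Nat.cast_sub hj.le]
            rw [this]; ring
  have hpt : ∀ s : ℝ, ∀ θ ∈ Set.Ioi (0:ℝ), 0 ≤ (s * s) * U1 θ + (-2 * s) * Y θ + U2 θ := by
    intro s θ hθ
    have a1 := hU1low θ hθ
    have a2 := hU2low θ hθ
    have hθ : 0 < θ := hθ
    have e : Y θ = exp (-θ) * ∑ k ∈ Finset.range n, aax (exp (-θ)) n d k * ppx φ (exp (-θ)) k := by
      rw [← dy_eq_ap, hY, Finset.mul_sum]
      apply Finset.sum_congr rfl; intros; ring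
    have hω : 0 < θ ^ (2 - 2 * H) := rpow_pos_of_pos hθ _
    have hω2 : θ ^ (2 * H - 2) = (θ ^ (2 - 2 * H))⁻¹ := by
      rw [← rpow_neg hθ.le]; congr 1; ring
    rw [hω2] at a2
    set ω := θ ^ (2 - 2 * H)
    set q := exp (-θ)
    have hq : 0 < q := exp_pos _
    have key : 0 ≤ (s * s) * (ω * q / 6 * ∑ k ∈ Finset.range n, aax q n d k ^ 2) + (-2 * s) * Y θ +
        6 * ω⁻¹ * q * ∑ k ∈ Finset.range n, ppx φ q k ^ 2 := by
      rw [e]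
      simp only [Finset.mul_sum]
      rw [← Finset.sum_add_distrib, ← Finset.sum_add_distrib]
      apply Finset.sum_nonneg
      intro k _
      have : (s * s) * (ω * q / 6 * aax q n d k ^ 2) + -2 * s * (q * (aax q n d k * ppx φ q k)) +
          6 * ω⁻¹ * q * ppx φ q k ^ 2 =
          ω * q / 6 * (s * aax q n d k - 6 * ω⁻¹ * ppx φ q k) ^ 2 := by
        field_simp; ring
      rw [this]; positivity
    have := mul_le_mul_of_nonneg_left a1 (mul_self_nonneg s)
    linarith
  have hJV : 0 ≤ JH H * VVx H n d := by
    rw [← eU1]; exact setIntegral_nonneg measurableSet_Ioi hU1n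
  have hquad : ∀ s : ℝ, 0 ≤ JH H * VVx H n d * (s * s) +
      (-2 * ∑ i ∈ Finset.range n, d i * φ i) * s + ∫ θ in Set.Ioi (0:ℝ), U2 θ := by
    intro s
    have h := setIntegral_nonneg measurableSet_Ioi (μ := volume) (hpt s)
    have i1 : IntegrableOn (fun θ => (s * s) * U1 θ) (Set.Ioi 0) := iU1.const_mul _
    have i2 : IntegrableOn (fun θ => (-2 * s) * Y θ) (Set.Ioi 0) := iY.const_mul _
    have i12 : IntegrableOn (fun θ => (s * s) * U1 θ + (-2 * s) * Y θ) (Set.Ioi 0) := i1.add i2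
    rw [integral_add i12 iU2, integral_add i1 i2, integral_const_mul, integral_const_mul,
      eU1, eY] at h
    linarith
  have hdisc := discrim_le_zero hquad
  constructor
  · have : JH H * (Γ1 + Γ2) * VVx H n d = (Γ1 + Γ2) * (JH H * VVx H n d) := by ring
    rw [this]; positivity
  · unfold discrim at hdisc
    have := mul_le_mul_of_nonneg_left eU2 hJV
    nlinarith

end PartC2


section PartB
open Matrix
open scoped ENNReal

theorem gam_map_linear (n : ℕ) (c : Fin n → ℝ) :
    (gam n).map (fun x => ∑ i, c i * x i) = gaussianReal 0 (∑ i, c i ^ 2).toNNReal := by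
  have hm : Measurable (fun x : Fin n → ℝ => ∑ i, c i * x i) := by fun_prop
  have : IsProbabilityMeasure ((gam n).map (fun x => ∑ i, c i * x i)) :=
    Measure.isProbabilityMeasure_map hm.aemeasurable
  apply Measure.ext_of_charFun
  ext t
  rw [charFun_apply_real, charFun_gaussianReal, integral_map hm.aemeasurable (by fun_prop)]
  have e : ∀ x : Fin n → ℝ, Complex.exp (t * ((∑ i, c i * x i : ℝ) : ℂ) * Complex.I) =
      ∏ i, Complex.exp (((t * c i : ℝ) : ℂ) * (x i : ℂ) * Complex.I) := by
    intro x
    rw [← Complex.exp_sum]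
    congr 1
    push_cast
    rw [Finset.mul_sum, Finset.sum_mul]
    apply Finset.sum_congr rfl; intros; ring
  simp only [e]
  unfold gam
  rw [integral_fintype_prod_eq_prod (μ := fun _ : Fin n => gaussianReal 0 1)
    (f := fun (i : Fin n) (y : ℝ) => Complex.exp (((t * c i : ℝ) : ℂ) * (y : ℂ) * Complex.I))]
  have e2 : ∀ i, ∫ y : ℝ, Complex.exp (((t * c i : ℝ) : ℂ) * (y : ℂ) * Complex.I)
      ∂(gaussianReal 0 1) = Complex.exp (-((t * c i : ℝ) : ℂ) ^ 2 / 2) := by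
    intro i
    rw [← charFun_apply_real, charFun_gaussianReal]
    congr 1
    simp; ring
  simp only [e2]
  rw [← Complex.exp_sum]
  congr 1
  have hs : (0:ℝ) ≤ ∑ i, c i ^ 2 := Finset.sum_nonneg fun _ _ => sq_nonneg _
  have e3 : (((∑ i, c i ^ 2).toNNReal : ℝ) : ℂ) = ((∑ i, c i ^ 2 : ℝ) : ℂ) := by
    rw [Real.coe_toNNReal _ hs]
  rw [e3]
  push_cast
  rw [Finset.sum_mul, Finset.sum_div, mul_zero, zero_mul, zero_sub, ← Finset.sum_neg_distrib]
  apply Finset.sum_congr rfl; intros; ring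

theorem ext_of_linear {n : ℕ} (μ ν : Measure (Fin n → ℝ)) [IsFiniteMeasure μ] [IsFiniteMeasure ν]
    (h : ∀ c : Fin n → ℝ, μ.map (fun x => ∑ i, c i * x i) = ν.map (fun x => ∑ i, c i * x i)) :
    μ = ν := by
  apply Measure.ext_of_charFunDual
  ext L
  have hL : (L : (Fin n → ℝ) → ℝ) = fun x => ∑ i, L (Pi.single i 1) * x i := by
    ext x
    conv_lhs => rw [← Finset.univ_sum_single x, map_sum]
    apply Finset.sum_congr rfl
    intro i _
    have : Pi.single i (x i) = x i • (Pi.single i (1:ℝ) : Fin n → ℝ) := by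
      rw [← Pi.single_smul]; simp
    rw [this, map_smul, smul_eq_mul, mul_comm]
  rw [charFunDual_eq_charFun_map_one, charFunDual_eq_charFun_map_one, hL, h]

theorem chol {n : ℕ} (S : Matrix (Fin n) (Fin n) ℝ) (hS : S.PosDef) :
    ∃ L R : Matrix (Fin n) (Fin n) ℝ, L * R = 1 ∧ R * L = 1 ∧ L * Lᵀ = S ∧
      (∀ i j, i < j → R i j = 0) ∧ (∀ i j, i < j → L i j = 0) := by
  set A := LDL.lowerInv hS with hA
  have hAinv : IsUnit A := by
    have := LDL.invertibleLowerInv hS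
    exact isUnit_of_invertible A
  have hD : (LDL.diag hS).PosDef := by
    rw [LDL.diag_eq_lowerInv_conj]
    exact (IsUnit.posDef_star_right_conjugate_iff hAinv).2 hS
  have hDe : LDL.diag hS = Matrix.diagonal (LDL.diagEntries hS) := rfl
  set e := LDL.diagEntries hS with he
  have hpos : ∀ i, 0 < e i := by
    intro i
    have := hD.diag_pos (i := i)
    rw [hDe] at this
    simpa using this
  set R := Matrix.diagonal (fun i => (sqrt (e i))⁻¹) * A with hR
  have hRlow : ∀ i j, i < j → R i j = 0 := by
    intro i j hij
    have hA0 : A i j = 0 := LDL.lowerInv_triangular hS hij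
    rw [hR, Matrix.diagonal_mul, hA0, mul_zero]
  have hRu : IsUnit R := by
    apply IsUnit.mul _ hAinv
    rw [Matrix.isUnit_iff_isUnit_det, Matrix.det_diagonal, isUnit_iff_ne_zero]
    apply Finset.prod_ne_zero_iff.2
    intro i _
    exact inv_ne_zero (sqrt_pos.2 (hpos i)).ne'
  have hdet : IsUnit R.det := (Matrix.isUnit_iff_isUnit_det R).1 hRu
  have hinv := hRu.invertible
  refine ⟨R⁻¹, R, Matrix.nonsing_inv_mul R hdet, Matrix.mul_nonsing_inv R hdet, ?_, hRlow, ?_⟩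
  · have h1 : R * S * Rᵀ = 1 := by
      have h2 := LDL.diag_eq_lowerInv_conj hS
      rw [hR, Matrix.transpose_mul, Matrix.diagonal_transpose]
      rw [Matrix.conjTranspose_eq_transpose_of_trivial] at h2
      calc _ = Matrix.diagonal (fun i => (sqrt (e i))⁻¹) * (A * S * Aᵀ) *
            Matrix.diagonal (fun i => (sqrt (e i))⁻¹) := by simp only [Matrix.mul_assoc]
        _ = 1 := by
          rw [← h2, hDe, Matrix.diagonal_mul_diagonal, Matrix.diagonal_mul_diagonal,
            ← Matrix.diagonal_one]
          congr 1
          ext i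
          have := sqrt_pos.2 (hpos i)
          have h3 := mul_self_sqrt (hpos i).le
          field_simp
          nlinarith
    have hT : IsUnit (Rᵀ).det := by rwa [Matrix.det_transpose]
    calc R⁻¹ * (R⁻¹)ᵀ = R⁻¹ * (R * S * Rᵀ) * (R⁻¹)ᵀ := by rw [h1, Matrix.mul_one]
      _ = (R⁻¹ * R) * S * (Rᵀ * (Rᵀ)⁻¹) := by
        rw [Matrix.transpose_nonsing_inv]; simp only [Matrix.mul_assoc]
      _ = S := by rw [Matrix.nonsing_inv_mul R hdet, Matrix.mul_nonsing_inv _ hT]; simp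
  · have hb : Matrix.BlockTriangular R OrderDual.toDual := by
      intro i j hij
      exact hRlow i j hij
    have := Matrix.blockTriangular_inv_of_blockTriangular hb
    intro i j hij
    exact this hij

end PartB


section PartB2
open Matrix
open scoped ENNReal

variable {Ω : Type*} [MeasurableSpace Ω]

theorem fbm_lin {P : Measure Ω} {H : ℝ} {W : ℝ → Ω → ℝ} (hW : IsFractionalBM P H W)
    {ι : Type*} [Fintype ι] (t : ι → ℝ) (ht : ∀ i, 0 ≤ t i) (c : ι → ℝ) :
    P.map (fun ω => ∑ i, c i * W (t i) ω) =
      gaussianReal 0 (∑ i, ∑ j, c i * c j * fbmCov H (t i) (t j)).toNNReal := by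
  have e := Fintype.equivFin ι
  have h := hW.2.2 _ (t ∘ e.symm) (fun i => ht _) (c ∘ e.symm)
  have e1 : (fun ω => ∑ i, c i * W (t i) ω) =
      fun ω => ∑ i, (c ∘ e.symm) i * W ((t ∘ e.symm) i) ω := by
    ext ω
    exact (Equiv.sum_comp e.symm (fun i => c i * W (t i) ω)).symm
  have e2 : ∑ i, ∑ j, c i * c j * fbmCov H (t i) (t j) =
      ∑ i, ∑ j, (c ∘ e.symm) i * (c ∘ e.symm) j *
        fbmCov H ((t ∘ e.symm) i) ((t ∘ e.symm) j) := by
    rw [← Equiv.sum_comp e.symm]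
    apply Finset.sum_congr rfl; intro i _
    exact (Equiv.sum_comp e.symm
      (fun j => c (e.symm i) * c j * fbmCov H (t (e.symm i)) (t j))).symm
  rw [e1, e2, h]

/-- grid increments -/
def incrW (W : ℝ → Ω → ℝ) (n : ℕ) (h : ℝ) (ω : Ω) : Fin n → ℝ :=
  fun i => W (((i : ℕ) + 1 : ℝ) * h) ω - W (((i : ℕ) : ℝ) * h) ω

noncomputable def extF {n : ℕ} (d : Fin n → ℝ) : ℕ → ℝ := fun i => if h : i < n then d ⟨i, h⟩ else 0

theorem extF_coe {n : ℕ} (d : Fin n → ℝ) (i : Fin n) : extF d i = d i := by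
  simp [extF]

theorem measurable_incrW {P : Measure Ω} {H : ℝ} {W : ℝ → Ω → ℝ} (hW : IsFractionalBM P H W)
    (n : ℕ) (h : ℝ) : Measurable (incrW W n h) := by
  rw [measurable_pi_iff]
  intro i
  exact (hW.1 _).sub (hW.1 _)

noncomputable def covI (H : ℝ) (n : ℕ) (h : ℝ) : Matrix (Fin n) (Fin n) ℝ :=
  Matrix.of fun i j => h ^ (2 * H) * fgn H ((i : ℕ) - (j : ℕ) : ℝ)

theorem cov_incr (H h x y : ℝ) (hh : 0 < h) (hx : 0 ≤ x) (hy : 0 ≤ y) :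
    fbmCov H ((x + 1) * h) ((y + 1) * h) - fbmCov H ((x + 1) * h) (y * h)
      - fbmCov H (x * h) ((y + 1) * h) + fbmCov H (x * h) (y * h) =
    h ^ (2 * H) * fgn H (x - y) := by
  have key : ∀ z : ℝ, |z * h| ^ (2 * H) = h ^ (2 * H) * |z| ^ (2 * H) := by
    intro z
    rw [abs_mul, abs_of_pos hh, mul_rpow (abs_nonneg _) hh.le, mul_comm]
  unfold fbmCov fgn
  have k1 : |(y + 1) * h - (x + 1) * h| = |(x - y) * h| := by rw [← abs_neg]; ring_nf
  have k2 : |y * h - (x + 1) * h| = |(x - y + 1) * h| := by rw [← abs_neg]; ring_nf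
  have k3 : |(y + 1) * h - x * h| = |(x - y - 1) * h| := by rw [← abs_neg]; ring_nf
  have k4 : |y * h - x * h| = |(x - y) * h| := by rw [← abs_neg]; ring_nf
  rw [k1, k2, k3, k4, key, key, key]
  ring

theorem incr_lin {P : Measure Ω} {H : ℝ} {W : ℝ → Ω → ℝ} (hW : IsFractionalBM P H W)
    (n : ℕ) (h : ℝ) (hh : 0 < h) (c : Fin n → ℝ) :
    P.map (fun ω => ∑ i, c i * incrW W n h ω i) =
      gaussianReal 0 (∑ i, ∑ j, c i * c j * covI H n h i j).toNNReal := by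
  have hb := fbm_lin hW (ι := Fin n × Bool)
    (fun p => if p.2 then ((p.1 : ℕ) + 1 : ℝ) * h else ((p.1 : ℕ) : ℝ) * h)
    (by rintro ⟨i, _ | _⟩ <;> simp <;> positivity)
    (fun p => if p.2 then c p.1 else - c p.1)
  simp only [Fintype.sum_prod_type, Fintype.sum_bool, if_true, Bool.false_eq_true, if_false] at hb
  convert hb using 2
  · ext ω
    apply Finset.sum_congr rfl; intro i _
    unfold incrW; ring
  · congr 1
    apply Finset.sum_congr rfl; intro i _
    rw [← Finset.sum_add_distrib]
    apply Finset.sum_congr rfl; intro j _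
    have := cov_incr H h (i : ℕ) (j : ℕ) hh (by positivity) (by positivity)
    simp only [covI, Matrix.of_apply]
    rw [← this]; ring

theorem VVx_fin (H : ℝ) (n : ℕ) (h : ℝ) (d : Fin n → ℝ) :
    ∑ i, ∑ j, d i * d j * covI H n h i j = h ^ (2 * H) * VVx H n (extF d) := by
  unfold VVx
  rw [Finset.sum_range, Finset.mul_sum]
  apply Finset.sum_congr rfl; intro i _
  rw [Finset.sum_range, Finset.mul_sum]
  apply Finset.sum_congr rfl; intro j _
  rw [extF_coe, extF_coe]; simp only [covI, Matrix.of_apply]; ring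

theorem dot_fin (n : ℕ) (d φ : Fin n → ℝ) :
    ∑ i ∈ Finset.range n, extF d i * extF φ i = ∑ i, d i * φ i := by
  rw [Finset.sum_range]
  apply Finset.sum_congr rfl; intro i _
  rw [extF_coe, extF_coe]

theorem covI_posDef (H : ℝ) (h1 : 1 / 2 < H) (h2 : H < 1) (n : ℕ) (h : ℝ) (hh : 0 < h) :
    (covI H n h).PosDef := by
  obtain ⟨C, hC, hCM⟩ := fgn_CM H h1 h2
  apply Matrix.PosDef.of_dotProduct_mulVec_pos
  · ext i j
    simp only [Matrix.conjTranspose_apply, covI, Matrix.of_apply, star_trivial]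
    congr 1
    unfold fgn
    have b1 : |((j:ℕ):ℝ) - (i:ℕ) + 1| = |((i:ℕ):ℝ) - (j:ℕ) - 1| := by rw [← abs_neg]; ring_nf
    have b2 : |((j:ℕ):ℝ) - (i:ℕ) - 1| = |((i:ℕ):ℝ) - (j:ℕ) + 1| := by rw [← abs_neg]; ring_nf
    rw [b1, b2, abs_sub_comm ((j:ℕ):ℝ)]; ring
  · intro x hx
    have e : star x ⬝ᵥ (covI H n h *ᵥ x) = ∑ i, ∑ j, x i * x j * covI H n h i j := by
      simp only [dotProduct, mulVec, star_trivial, Finset.mul_sum]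
      apply Finset.sum_congr rfl; intro i _
      apply Finset.sum_congr rfl; intro j _
      ring
    rw [e, VVx_fin]
    apply mul_pos (rpow_pos_of_pos hh _)
    by_contra hV
    push Not at hV
    obtain ⟨a1, a2⟩ := hCM n (extF x) (extF x)
    have a3 : C * VVx H n (extF x) = 0 := le_antisymm (mul_nonpos_of_nonneg_of_nonpos hC hV) a1
    rw [a3, zero_mul, dot_fin] at a2
    have a4 : ∑ i, x i * x i = 0 := by
      have := sq_nonneg (∑ i, x i * x i)
      exact pow_eq_zero_iff (two_ne_zero) |>.1 (le_antisymm a2 this)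
    apply hx
    ext i
    have := (Finset.sum_eq_zero_iff_of_nonneg (fun i _ => mul_self_nonneg (x i))).1 a4 i
      (Finset.mem_univ i)
    simpa using this

theorem NNx_nonneg (H : ℝ) (n : ℕ) (φ : ℕ → ℝ) : 0 ≤ NNx H n φ := by
  unfold NNx
  apply Finset.sum_nonneg; intro i _
  apply add_nonneg (by positivity)
  apply Finset.sum_nonneg; intro j hj
  rw [Finset.mem_range] at hj
  have : (j:ℝ) < i := by exact_mod_cast hj
  exact mul_nonneg (rpow_nonneg (by linarith) _) (sq_nonneg _)

/-- Representation of the increments by a standard Gaussian vector, with adapted shifts. -/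
theorem incr_transfer {P : Measure Ω} [IsProbabilityMeasure P] {H : ℝ} {W : ℝ → Ω → ℝ}
    (hW : IsFractionalBM P H W)
    (h1 : 1 / 2 < H) (h2 : H < 1) (C0 : ℝ) (hC0 : 0 ≤ C0)
    (hCM : ∀ (n : ℕ) (d φ : ℕ → ℝ), 0 ≤ C0 * VVx H n d ∧
      (∑ i ∈ Finset.range n, d i * φ i) ^ 2 ≤ C0 * VVx H n d * NNx H n φ)
    (n : ℕ) (h : ℝ) (hh : 0 < h) :
    ∃ L : (Fin n → ℝ) → (Fin n → ℝ), Measurable L ∧ P.map (incrW W n h) = (gam n).map L ∧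
      ∀ u : (Fin n → ℝ) → (Fin n → ℝ), Measurable u →
      (∀ i x y, (∀ j, j < i → x j = y j) → u x i = u y i) →
      ∃ v : (Fin n → ℝ) → (Fin n → ℝ), Measurable v ∧
        (∀ i x y, (∀ j, j < i → x j = y j) → v x i = v y i) ∧
        (∀ x, L (x + v x) = L x + u (L x)) ∧
        ∀ x, ∑ i, v x i ^ 2 ≤ C0 * h ^ (-(2 * H)) * NNx H n (extF (u (L x))) := by
  obtain ⟨L, R, hLR, hRL, hLL, hRlow, hLlow⟩ := chol _ (covI_posDef H h1 h2 n h hh)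
  have hmL : Measurable fun x : Fin n → ℝ => L *ᵥ x := by
    rw [measurable_pi_iff]; intro i; simp only [mulVec, dotProduct]; fun_prop
  have hmR : Measurable fun x : Fin n → ℝ => R *ᵥ x := by
    rw [measurable_pi_iff]; intro i; simp only [mulVec, dotProduct]; fun_prop
  have hmI := measurable_incrW hW n h
  refine ⟨fun x => L *ᵥ x, hmL, ?_, ?_⟩
  · have : IsProbabilityMeasure (P.map (incrW W n h)) :=
      Measure.isProbabilityMeasure_map hmI.aemeasurable
    have : IsProbabilityMeasure ((gam n).map fun x => L *ᵥ x) :=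
      Measure.isProbabilityMeasure_map hmL.aemeasurable
    apply ext_of_linear
    intro c
    have hmc : Measurable fun x : Fin n → ℝ => ∑ i, c i * x i := by fun_prop
    rw [Measure.map_map hmc hmI, Measure.map_map hmc hmL]
    have e1 : (fun x : Fin n → ℝ => ∑ i, c i * x i) ∘ (fun x => L *ᵥ x) =
        fun x => ∑ i, (Lᵀ *ᵥ c) i * x i := by
      ext x
      have := Matrix.dotProduct_mulVec c L x
      rw [← Matrix.mulVec_transpose] at this
      simpa [dotProduct] using this
    rw [e1, gam_map_linear]
    have e2 : ((fun x : Fin n → ℝ => ∑ i, c i * x i) ∘ incrW W n h) =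
      fun ω => ∑ i, c i * incrW W n h ω i := rfl
    rw [e2, incr_lin hW n h hh c]
    congr 2
    rw [← hLL]
    have e3 : ∑ i, ∑ j, c i * c j * (L * Lᵀ) i j = c ⬝ᵥ ((L * Lᵀ) *ᵥ c) := by
      simp only [dotProduct, mulVec, Finset.mul_sum]
      apply Finset.sum_congr rfl; intro i _
      apply Finset.sum_congr rfl; intro j _
      ring
    rw [e3, ← Matrix.mulVec_mulVec, Matrix.dotProduct_mulVec, ← Matrix.mulVec_transpose]
    simp [dotProduct, sq]
  · intro u hu hup
    refine ⟨fun x => R *ᵥ (u (L *ᵥ x)), hmR.comp (hu.comp hmL), ?_, ?_, ?_⟩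
    · intro i x y hxy
      simp only [mulVec, dotProduct]
      apply Finset.sum_congr rfl
      intro j _
      rcases lt_or_ge i j with hij | hij
      · rw [hRlow i j hij]; ring
      · congr 1
        apply hup
        intro k hk
        simp only [mulVec, dotProduct]
        apply Finset.sum_congr rfl
        intro l _
        rcases lt_or_ge k l with hkl | hkl
        · rw [hLlow k l hkl]; ring
        · rw [hxy l (lt_of_le_of_lt hkl (lt_of_lt_of_le hk hij))]
    · intro x
      simp only [Matrix.mulVec_add, Matrix.mulVec_mulVec, ← Matrix.mul_assoc, hLR]
      simp
    · intro x
      set w := u (L *ᵥ x) with hw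
      set v := R *ᵥ w with hv
      set d := Rᵀ *ᵥ v with hd
      set q := ∑ i, v i ^ 2 with hq
      have hq0 : 0 ≤ q := Finset.sum_nonneg fun _ _ => sq_nonneg _
      have f1 : ∑ i, d i * w i = q := by
        have := Matrix.dotProduct_mulVec v R w
        rw [← Matrix.mulVec_transpose] at this
        simp only [dotProduct] at this
        rw [hd, ← this, hq]
        apply Finset.sum_congr rfl; intros; rw [hv]; ring
      have f2 : h ^ (2 * H) * VVx H n (extF d) = q := by
        rw [← VVx_fin, ← hLL]
        have e3 : ∑ i, ∑ j, d i * d j * (L * Lᵀ) i j = d ⬝ᵥ ((L * Lᵀ) *ᵥ d) := by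
          simp only [dotProduct, mulVec, Finset.mul_sum]
          apply Finset.sum_congr rfl; intro i _
          apply Finset.sum_congr rfl; intro j _
          ring
        have e4 : Lᵀ *ᵥ d = v := by
          rw [hd, Matrix.mulVec_mulVec, ← Matrix.transpose_mul, hRL]; simp
        rw [e3, ← Matrix.mulVec_mulVec, Matrix.dotProduct_mulVec, ← Matrix.mulVec_transpose, e4]
        simp [dotProduct, hq, sq]
      obtain ⟨_, a2⟩ := hCM n (extF d) (extF w)
      rw [dot_fin, f1] at a2
      have hp : 0 < h ^ (2 * H) := rpow_pos_of_pos hh _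
      have hN := NNx_nonneg H n (extF w)
      have f3 : VVx H n (extF d) = h ^ (-(2 * H)) * q := by
        rw [rpow_neg hh.le, ← f2]; field_simp
      rw [f3] at a2
      rcases hq0.eq_or_lt with h0 | h0
      · change q ≤ _
        rw [← h0]; positivity
      · have : q * q ≤ q * (C0 * h ^ (-(2 * H)) * NNx H n (extF w)) := by nlinarith
        exact le_of_mul_le_mul_left this h0

theorem incr_A4 {P : Measure Ω} [IsProbabilityMeasure P] {H : ℝ} {W : ℝ → Ω → ℝ}
    (hW : IsFractionalBM P H W)
    (h1 : 1 / 2 < H) (h2 : H < 1) (C0 : ℝ) (hC0 : 0 ≤ C0)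
    (hCM : ∀ (n : ℕ) (d φ : ℕ → ℝ), 0 ≤ C0 * VVx H n d ∧
      (∑ i ∈ Finset.range n, d i * φ i) ^ 2 ≤ C0 * VVx H n d * NNx H n φ)
    (C τ : ℝ) (hC : 0 ≤ C) (hτ : 0 < τ) : ∃ K : ℝ, 0 ≤ K ∧ ∀ (n : ℕ) (h : ℝ), 0 < h →
    ∀ u : (Fin n → ℝ) → (Fin n → ℝ), Measurable u →
      (∀ i x y, (∀ j, j < i → x j = y j) → u x i = u y i) →
    ∀ (f : (Fin n → ℝ) → ℝ≥0∞), Measurable f → (∀ x, f x ≤ 1) →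
    ∫⁻ ω, ENNReal.ofReal (C0 * h ^ (-(2 * H)) * NNx H n (extF (u (incrW W n h ω)))) ∂P
      ≤ ENNReal.ofReal C →
    ∫⁻ ω, f (incrW W n h ω + u (incrW W n h ω)) ∂P ≤
      ENNReal.ofReal (exp K) * ∫⁻ ω, f (incrW W n h ω) ∂P + ENNReal.ofReal τ := by
  obtain ⟨K, hK, hA⟩ := gauss_shift_A4 C τ hC hτ
  refine ⟨K, hK, ?_⟩
  intro n h hh u hu hup f hf hf1 hB
  obtain ⟨L, hmL, hmap, hL⟩ := incr_transfer hW h1 h2 C0 hC0 hCM n h hh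
  obtain ⟨v, hv, hvp, hLv, hvb⟩ := hL u hu hup
  have hmI := measurable_incrW hW n h
  have tr : ∀ g : (Fin n → ℝ) → ℝ≥0∞, Measurable g →
      ∫⁻ ω, g (incrW W n h ω) ∂P = ∫⁻ x, g (L x) ∂(gam n) := by
    intro g hg
    rw [← lintegral_map hg hmI, hmap, lintegral_map hg hmL]
  have hNm : Measurable fun w : Fin n → ℝ =>
      ENNReal.ofReal (C0 * h ^ (-(2 * H)) * NNx H n (extF (u w))) := by
    have : ∀ i, Measurable fun w => extF (u w) i := by
      intro i; unfold extF
      split_ifs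
      · exact (measurable_pi_apply _).comp hu
      · exact measurable_const
    unfold NNx
    fun_prop
  rw [tr _ hNm] at hB
  rw [tr (fun w => f (w + u w)) (by fun_prop), tr f hf]
  have := hA n v hv hvp (fun x => f (L x)) (hf.comp hmL) (fun x => hf1 _)
    ((lintegral_mono fun x => ENNReal.ofReal_le_ofReal (hvb x)).trans hB)
  simpa only [hLv] using this

theorem incr_A5 {P : Measure Ω} [IsProbabilityMeasure P] {H : ℝ} {W : ℝ → Ω → ℝ}
    (hW : IsFractionalBM P H W)
    (h1 : 1 / 2 < H) (h2 : H < 1) (C0 : ℝ) (hC0 : 0 ≤ C0)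
    (hCM : ∀ (n : ℕ) (d φ : ℕ → ℝ), 0 ≤ C0 * VVx H n d ∧
      (∑ i ∈ Finset.range n, d i * φ i) ^ 2 ≤ C0 * VVx H n d * NNx H n φ)
    (τ : ℝ) (hτ : 0 < τ) : ∃ δ : ℝ, 0 < δ ∧ ∀ (n : ℕ) (h : ℝ), 0 < h →
    ∀ u : (Fin n → ℝ) → (Fin n → ℝ), Measurable u →
      (∀ i x y, (∀ j, j < i → x j = y j) → u x i = u y i) →
    ∀ (f : (Fin n → ℝ) → ℝ≥0∞), Measurable f → (∀ x, f x ≤ 1) →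
    ∫⁻ ω, ENNReal.ofReal (C0 * h ^ (-(2 * H)) * NNx H n (extF (u (incrW W n h ω)))) ∂P
      ≤ ENNReal.ofReal δ →
    ∫⁻ ω, f (incrW W n h ω + u (incrW W n h ω)) ∂P ≤
      ∫⁻ ω, f (incrW W n h ω) ∂P + ENNReal.ofReal τ := by
  obtain ⟨K, hK, hA⟩ := gauss_shift_A5 τ hτ
  refine ⟨K, hK, ?_⟩
  intro n h hh u hu hup f hf hf1 hB
  obtain ⟨L, hmL, hmap, hL⟩ := incr_transfer hW h1 h2 C0 hC0 hCM n h hh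
  obtain ⟨v, hv, hvp, hLv, hvb⟩ := hL u hu hup
  have hmI := measurable_incrW hW n h
  have tr : ∀ g : (Fin n → ℝ) → ℝ≥0∞, Measurable g →
      ∫⁻ ω, g (incrW W n h ω) ∂P = ∫⁻ x, g (L x) ∂(gam n) := by
    intro g hg
    rw [← lintegral_map hg hmI, hmap, lintegral_map hg hmL]
  have hNm : Measurable fun w : Fin n → ℝ =>
      ENNReal.ofReal (C0 * h ^ (-(2 * H)) * NNx H n (extF (u w))) := by
    have : ∀ i, Measurable fun w => extF (u w) i := by
      intro i; unfold extF
      split_ifs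
      · exact (measurable_pi_apply _).comp hu
      · exact measurable_const
    unfold NNx
    fun_prop
  rw [tr _ hNm] at hB
  rw [tr (fun w => f (w + u w)) (by fun_prop), tr f hf]
  have := hA n v hv hvp (fun x => f (L x)) (hf.comp hmL) (fun x => hf1 _)
    ((lintegral_mono fun x => ENNReal.ofReal_le_ofReal (hvb x)).trans hB)
  simpa only [hLv] using this

end PartB2


section PartD
set_option linter.unusedSectionVars false
open scoped ENNReal

variable {Ω : Type*} [MeasurableSpace Ω]

/-- Euler scheme -/
noncomputable def Sch (x0 h : ℝ) (β : ℝ → ℝ) (w : ℕ → ℝ) : ℕ → ℝ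
  | 0 => x0
  | (i + 1) => Sch x0 h β w i + w i + h * β (Sch x0 h β w i)

noncomputable def SF (n : ℕ) (x0 h : ℝ) (β : ℝ → ℝ) (v : Fin n → ℝ) : Fin (n + 1) → ℝ :=
  fun i => Sch x0 h β (extF v) i

theorem measurable_extF (n : ℕ) (i : ℕ) : Measurable fun v : Fin n → ℝ => extF v i := by
  unfold extF
  by_cases h : i < n
  · simp only [h, dite_true]; exact measurable_pi_apply _
  · simp only [h, dite_false]; exact measurable_const

theorem measurable_Sch (n : ℕ) (x0 h : ℝ) {β : ℝ → ℝ} (hβ : Measurable β) (i : ℕ) :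
    Measurable fun v : Fin n → ℝ => Sch x0 h β (extF v) i := by
  induction i with
  | zero => exact measurable_const
  | succ k ih =>
    simp only [Sch]
    exact (ih.add (measurable_extF n k)).add ((hβ.comp ih).const_mul h)

theorem measurable_SF (n : ℕ) (x0 h : ℝ) {β : ℝ → ℝ} (hβ : Measurable β) :
    Measurable (SF n x0 h β) := by
  rw [measurable_pi_iff]; intro i
  exact measurable_Sch n x0 h hβ i

theorem Sch_congr (x0 h : ℝ) (β : ℝ → ℝ) (w w' : ℕ → ℝ) (i : ℕ) (hw : ∀ j < i, w j = w' j) :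
    Sch x0 h β w i = Sch x0 h β w' i := by
  induction i with
  | zero => rfl
  | succ k ih =>
    simp only [Sch]
    rw [ih (fun j hj => hw j (by omega)), hw k (by omega)]

theorem Sch_girsanov (x0 h : ℝ) (β1 β2 : ℝ → ℝ) (w w' : ℕ → ℝ) (n : ℕ)
    (hw : ∀ j < n, w' j = w j + h * (β1 (Sch x0 h β1 w j) - β2 (Sch x0 h β1 w j)))
    (i : ℕ) (hi : i ≤ n) : Sch x0 h β2 w' i = Sch x0 h β1 w i := by
  induction i with
  | zero => rfl
  | succ k ih =>
    simp only [Sch]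
    rw [ih (by omega), hw k (by omega)]; ring

theorem Sch_diff (x0 h : ℝ) (β : ℝ → ℝ) (w : ℕ → ℝ) (M : ℝ) (hM : ∀ x, |β x| ≤ M) (hh : 0 ≤ h)
    (j k : ℕ) : |Sch x0 h β w (j + k) - Sch x0 h β w j - ∑ l ∈ Finset.range k, w (j + l)| ≤
      M * (k * h) := by
  induction k with
  | zero => simp
  | succ k ih =>
    rw [← add_assoc]
    simp only [Sch]
    rw [Finset.sum_range_succ]
    have := hM (Sch x0 h β w (j + k))
    have h3 : |h * β (Sch x0 h β w (j + k))| ≤ h * M := by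
      rw [abs_mul, abs_of_nonneg hh]; gcongr
    have e : Sch x0 h β w (j + k) + w (j + k) + h * β (Sch x0 h β w (j + k)) - Sch x0 h β w j
      - (∑ l ∈ Finset.range k, w (j + l) + w (j + k)) =
      (Sch x0 h β w (j + k) - Sch x0 h β w j - ∑ l ∈ Finset.range k, w (j + l)) +
        h * β (Sch x0 h β w (j + k)) := by ring
    rw [e]
    refine (abs_add_le _ _).trans ?_
    push_cast
    nlinarith

theorem sum_extF_incr (W : ℝ → Ω → ℝ) (n : ℕ) (h : ℝ) (ω : Ω) (j k : ℕ) (hjk : j + k ≤ n) :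
    ∑ l ∈ Finset.range k, extF (incrW W n h ω) (j + l) =
      W (((j + k : ℕ) : ℝ) * h) ω - W ((j : ℝ) * h) ω := by
  induction k with
  | zero => simp
  | succ k ih =>
    rw [Finset.sum_range_succ, ih (by omega)]
    have : j + k < n := by omega
    simp only [extF, this, dite_true, incrW]
    push_cast
    rw [← add_assoc]; ring

theorem fbm_var {P : Measure Ω} [IsProbabilityMeasure P] {H : ℝ} (hH : 0 < H) {W : ℝ → Ω → ℝ}
    (hW : IsFractionalBM P H W) (s t : ℝ) (hs : 0 ≤ s) (ht : 0 ≤ t) :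
    Integrable (fun ω => (W t ω - W s ω) ^ 2) P ∧
      ∫ ω, (W t ω - W s ω) ^ 2 ∂P = |t - s| ^ (2 * H) := by
  have h := hW.2.2 2 ![t, s] (by intro i; fin_cases i <;> simp [hs, ht]) ![1, -1]
  have e : (∑ i, ∑ j, (![1, -1] : Fin 2 → ℝ) i * (![1, -1] : Fin 2 → ℝ) j *
      fbmCov H ((![t, s] : Fin 2 → ℝ) i) ((![t, s] : Fin 2 → ℝ) j)) = |t - s| ^ (2 * H) := by
    simp [Fin.sum_univ_two, fbmCov, abs_sub_comm s t, Real.zero_rpow (by positivity : 2 * H ≠ 0)]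
    ring
  rw [e] at h
  have hf : (fun ω => ∑ i, (![1, -1] : Fin 2 → ℝ) i * W ((![t, s] : Fin 2 → ℝ) i) ω) =
    fun ω => W t ω - W s ω := by
    ext ω; simp [Fin.sum_univ_two]; ring
  rw [hf] at h
  have hm : Measurable fun ω => W t ω - W s ω := (hW.1 _).sub (hW.1 _)
  set v := (|t - s| ^ (2 * H)).toNNReal with hv
  have hv' : (v : ℝ) = |t - s| ^ (2 * H) := Real.coe_toNNReal _ (by positivity)
  have hL : MemLp (fun x : ℝ => x) 2 (gaussianReal 0 v) := memLp_id_gaussianReal 2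
  have hvar := variance_id_gaussianReal (μ := 0) (v := v)
  rw [variance_eq_integral (by fun_prop)] at hvar
  simp only [id, integral_id_gaussianReal, sub_zero] at hvar
  have hI : Integrable (fun x : ℝ => x ^ 2) (gaussianReal 0 v) := hL.integrable_sq
  rw [← h] at hI hvar
  rw [integral_map hm.aemeasurable (by fun_prop)] at hvar
  refine ⟨?_, hvar.trans hv'⟩
  exact (integrable_map_measure (by fun_prop) hm.aemeasurable).1 hI

theorem power_sum (s : ℝ) (h0 : 0 ≤ s) (h1 : s < 1) (n : ℕ) :
    ∑ k ∈ Finset.range n, ((k : ℝ) + 1) ^ (-s) ≤ (1 - s)⁻¹ * (n : ℝ) ^ (1 - s) := by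
  induction n with
  | zero => simp [Real.zero_rpow (by linarith : 1 - s ≠ 0)]
  | succ k ih =>
    rw [Finset.sum_range_succ]
    have hk : (0 : ℝ) < (k : ℝ) + 1 := by positivity
    have hb := rpow_one_add_le_one_add_mul_self (s := -((k : ℝ) + 1)⁻¹) (p := 1 - s)
      (by rw [neg_le_neg_iff]; exact inv_le_one_of_one_le₀ (by linarith [Nat.cast_nonneg (α := ℝ) k]))
      (by linarith) (by linarith)
    have e1 : 1 + -((k : ℝ) + 1)⁻¹ = k / (k + 1) := by field_simp; ring
    rw [e1, Real.div_rpow (by positivity) hk.le, div_le_iff₀ (by positivity)] at hb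
    have e2 : ((k : ℝ) + 1) ^ (1 - s) = ((k : ℝ) + 1) * ((k : ℝ) + 1) ^ (-s) := by
      rw [show 1 - s = 1 + -s by ring, Real.rpow_add hk, Real.rpow_one]
    rw [e2] at hb
    push_cast
    rw [e2]
    have hs : 0 < 1 - s := by linarith
    have e3 : (1 + (1 - s) * -((k : ℝ) + 1)⁻¹) * (((k : ℝ) + 1) * ((k : ℝ) + 1) ^ (-s)) =
      ((k : ℝ) + 1) * ((k : ℝ) + 1) ^ (-s) - (1 - s) * ((k : ℝ) + 1) ^ (-s) := by
      field_simp; ring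
    rw [e3] at hb
    rw [inv_mul_eq_div, le_div_iff₀ hs] at ih ⊢
    linarith


theorem pow_split (y z a : ℝ) (hy : 0 ≤ y) (hz : 0 < z) (ha : 0 < a) (ha1 : a ≤ 1) :
    y ^ a ≤ y * z ^ (a - 1) + z ^ a := by
  have p1 : 0 ≤ y * z ^ (a - 1) := by positivity
  have p2 : 0 ≤ z ^ a := by positivity
  rcases le_or_gt y z with h | h
  · have := Real.rpow_le_rpow hy h ha.le
    linarith
  · have hy' : 0 < y := hz.trans h
    have e : y ^ a = y * y ^ (a - 1) := by
      rw [← Real.rpow_one_add' hy (by linarith)]; congr 1; ring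
    have : y ^ (a - 1) ≤ z ^ (a - 1) :=
      Real.rpow_le_rpow_of_nonpos hz h.le (by linarith)
    have := mul_le_mul_of_nonneg_left this hy
    linarith

theorem det_sum (H a : ℝ) (h1 : 1 / 2 < H) (h2 : H < 1) (ha : 0 < a) (ha1 : a ≤ 1)
    (has : 2 * H - 2 * H * a < 1) (T h : ℝ) (hh : 0 < h) (n : ℕ) (hn : (n : ℝ) * h = T)
    (A B : ℝ) (hB : 0 ≤ B) (hA : 0 ≤ A) :
    h ^ (-(2 * H)) * ∑ i ∈ Finset.range n, (((i : ℝ) + 1) ^ (1 - 2 * H) * (h ^ 2 * A) +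
      ∑ j ∈ Finset.range i, ((i : ℝ) - j) ^ (-(2 * H)) *
        (h ^ 2 * (B * (((i : ℝ) - j) * h) ^ (2 * H * a)))) ≤
    (2 - 2 * H)⁻¹ * T ^ (2 - 2 * H) * A +
      (1 - (2 * H - 2 * H * a))⁻¹ * T ^ (2 - (2 * H - 2 * H * a)) * B := by
  set s := 2 * H - 2 * H * a with hs
  have hs0 : 0 ≤ s := by nlinarith
  have hin : ∀ i ∈ Finset.range n, ∑ j ∈ Finset.range i, ((i : ℝ) - j) ^ (-(2 * H)) *
        (h ^ 2 * (B * (((i : ℝ) - j) * h) ^ (2 * H * a))) ≤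
        (h ^ 2 * B * h ^ (2 * H * a)) * ((1 - s)⁻¹ * (n : ℝ) ^ (1 - s)) := by
    intro i hi
    have hi' : i < n := Finset.mem_range.1 hi
    have e : ∀ j ∈ Finset.range i, ((i : ℝ) - j) ^ (-(2 * H)) *
        (h ^ 2 * (B * (((i : ℝ) - j) * h) ^ (2 * H * a))) =
        (h ^ 2 * B * h ^ (2 * H * a)) * (((i - 1 - j : ℕ) : ℝ) + 1) ^ (-s) := by
      intro j hj
      have hj' : j < i := Finset.mem_range.1 hj
      have e1 : (((i - 1 - j : ℕ) : ℝ) + 1) = (i : ℝ) - j := by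
        rw [← Nat.cast_add_one, show i - 1 - j + 1 = i - j by omega, Nat.cast_sub hj'.le]
      have hp : (0 : ℝ) < (i : ℝ) - j := by
        have : (j : ℝ) < i := by exact_mod_cast hj'
        linarith
      rw [e1, Real.mul_rpow hp.le hh.le, show -s = -(2 * H) + 2 * H * a by rw [hs]; ring,
        Real.rpow_add hp]
      ring
    rw [Finset.sum_congr rfl e, ← Finset.mul_sum,
      Finset.sum_range_reflect (fun k => (((k : ℕ) : ℝ) + 1) ^ (-s)) i]
    apply mul_le_mul_of_nonneg_left _ (by positivity)
    refine le_trans ?_ (power_sum s hs0 has n)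
    apply Finset.sum_le_sum_of_subset_of_nonneg
    · exact Finset.range_subset_range.2 hi'.le
    · intros; positivity
  have hout : ∑ i ∈ Finset.range n, ((i : ℝ) + 1) ^ (1 - 2 * H) * (h ^ 2 * A) ≤
      (2 - 2 * H)⁻¹ * (n : ℝ) ^ (2 - 2 * H) * (h ^ 2 * A) := by
    rw [← Finset.sum_mul]
    apply mul_le_mul_of_nonneg_right _ (by positivity)
    have := power_sum (2 * H - 1) (by linarith) (by linarith) n
    rw [show -(2 * H - 1) = 1 - 2 * H by ring, show 1 - (2 * H - 1) = 2 - 2 * H by ring] at this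
    exact this
  rw [Finset.sum_add_distrib]
  have hs2 := Finset.sum_le_sum hin
  rw [Finset.sum_const, Finset.card_range, nsmul_eq_mul] at hs2
  have hn0 : (0 : ℝ) ≤ n := Nat.cast_nonneg n
  have k1 : h ^ (-(2 * H)) * ((2 - 2 * H)⁻¹ * (n : ℝ) ^ (2 - 2 * H) * (h ^ 2 * A)) =
      (2 - 2 * H)⁻¹ * T ^ (2 - 2 * H) * A := by
    rw [← hn, Real.mul_rpow hn0 hh.le, show 2 - 2 * H = -(2 * H) + 2 by ring,
      Real.rpow_add hh, Real.rpow_two]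
    ring
  have k2 : h ^ (-(2 * H)) * (n * ((h ^ 2 * B * h ^ (2 * H * a)) *
      ((1 - s)⁻¹ * (n : ℝ) ^ (1 - s)))) = (1 - s)⁻¹ * T ^ (2 - s) * B := by
    have e1 : (n : ℝ) ^ (2 - s) = n * (n : ℝ) ^ (1 - s) := by
      rw [← Real.rpow_one_add' hn0 (by linarith)]; congr 1; ring
    have e2 : h ^ (2 - s) = h ^ (-(2 * H)) * h ^ 2 * h ^ (2 * H * a) := by
      rw [← Real.rpow_two, ← Real.rpow_add hh, ← Real.rpow_add hh]; congr 1; rw [hs]; ring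
    rw [← hn, Real.mul_rpow hn0 hh.le, e1, e2]; ring
  rw [← k1, ← k2, ← mul_add]
  apply mul_le_mul_of_nonneg_left _ (by positivity)
  exact add_le_add hout hs2

end PartD


section PartD2
set_option linter.unusedSectionVars false
open scoped ENNReal

variable {Ω : Type*} [MeasurableSpace Ω]

theorem shift_bound {P : Measure Ω} [IsProbabilityMeasure P] {H : ℝ} {W : ℝ → Ω → ℝ}
    (hW : IsFractionalBM P H W) (h1 : 1 / 2 < H) (h2 : H < 1) (C0 : ℝ) (hC0 : 0 ≤ C0)
    (a : ℝ) (ha : 0 < a) (ha1 : a ≤ 1) (has : 2 * H - 2 * H * a < 1) (T : ℝ) (hT : 0 < T)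
    (x0 M : ℝ) :
    ∃ C1 : ℝ, 0 ≤ C1 ∧ ∀ (n : ℕ) (h : ℝ), 0 < h → (n : ℝ) * h = T →
    ∀ β1 β : ℝ → ℝ, Measurable β1 → Measurable β → (∀ x, |β1 x| ≤ M) →
    ∀ m c : ℝ, 0 ≤ c → (∀ x, |β x| ≤ m) → (∀ x y, |β x - β y| ≤ c * |x - y| ^ a) →
    ∫⁻ ω, ENNReal.ofReal (C0 * h ^ (-(2 * H)) * NNx H n (extF (n := n)
      (fun i => h * β (Sch x0 h β1 (extF (incrW W n h ω)) i)))) ∂P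
      ≤ ENNReal.ofReal (C1 * (m ^ 2 + c ^ 2)) := by
  set C2 : ℝ := 3 + 2 * M ^ 2 * T ^ (2 - 2 * H) with hC2
  have hC2p : 0 ≤ C2 := by positivity
  set D1 : ℝ := (2 - 2 * H)⁻¹ * T ^ (2 - 2 * H) with hD1
  set D2 : ℝ := (1 - (2 * H - 2 * H * a))⁻¹ * T ^ (2 - (2 * H - 2 * H * a)) with hD2
  have hD1p : 0 ≤ D1 := mul_nonneg (inv_nonneg.2 (by linarith)) (by positivity)
  have hD2p : 0 ≤ D2 := mul_nonneg (inv_nonneg.2 (by linarith)) (by positivity)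
  refine ⟨C0 * (D1 + D2 * C2), by positivity, ?_⟩
  intro n h hh hn β1 β hβ1 hβ hM m c hc hm hH
  have hm0 : 0 ≤ m := (abs_nonneg _).trans (hm 0)
  -- pointwise bound
  set t : ℕ → ℕ → ℝ := fun i j => ((i : ℝ) - j) * h with ht
  set DW : ℕ → ℕ → Ω → ℝ := fun i j ω => (W ((i : ℝ) * h) ω - W ((j : ℝ) * h) ω) ^ 2 with hDW
  set Bd : Ω → ℝ := fun ω => ∑ i ∈ Finset.range n, (((i : ℝ) + 1) ^ (1 - 2 * H) * (h ^ 2 * m ^ 2) +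
      ∑ j ∈ Finset.range i, ((i : ℝ) - j) ^ (-(2 * H)) *
        (h ^ 2 * (c ^ 2 * ((2 * DW i j ω + 2 * M ^ 2 * (t i j) ^ 2) * ((t i j) ^ (2 * H)) ^ (a - 1)
          + ((t i j) ^ (2 * H)) ^ a)))) with hBd
  have htp : ∀ i j : ℕ, j < i → 0 < t i j := by
    intro i j hij
    have : (j : ℝ) < i := by exact_mod_cast hij
    have : 0 < (i : ℝ) - j := by linarith
    simp only [ht]; positivity
  have hpt : ∀ ω, NNx H n (extF (n := n)
      (fun i => h * β (Sch x0 h β1 (extF (incrW W n h ω)) i))) ≤ Bd ω := by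
    intro ω
    set S := Sch x0 h β1 (extF (incrW W n h ω)) with hS
    have hext : ∀ i < n, extF (n := n) (fun i => h * β (S i)) i = h * β (S i) := by
      intro i hi; simp [extF, hi]
    unfold NNx
    simp only [hBd]
    apply Finset.sum_le_sum
    intro i hi
    have hi' : i < n := Finset.mem_range.1 hi
    rw [hext i hi']
    apply add_le_add
    · apply mul_le_mul_of_nonneg_left _ (by positivity)
      rw [mul_pow]
      apply mul_le_mul_of_nonneg_left _ (by positivity)
      exact sq_le_sq' (by linarith [(abs_le.1 (hm (S i))).1]) (abs_le.1 (hm (S i))).2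
    · apply Finset.sum_le_sum
      intro j hj
      have hj' : j < i := Finset.mem_range.1 hj
      have hp : (0 : ℝ) ≤ (i : ℝ) - j := by
        have : (j : ℝ) < i := by exact_mod_cast hj'
        linarith
      rw [hext j (hj'.trans hi'), ← mul_sub, mul_pow]
      apply mul_le_mul_of_nonneg_left _ (by positivity)
      apply mul_le_mul_of_nonneg_left _ (by positivity)
      have q1 : (β (S i) - β (S j)) ^ 2 ≤ c ^ 2 * ((S i - S j) ^ 2) ^ a := by
        have q := hH (S i) (S j)
        have : ((S i - S j) ^ 2) ^ a = (|S i - S j| ^ a) ^ 2 := by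
          rw [← sq_abs, ← Real.rpow_natCast, ← Real.rpow_natCast, ← Real.rpow_mul (abs_nonneg _),
            ← Real.rpow_mul (abs_nonneg _)]
          congr 1; ring
        rw [this, ← mul_pow, ← sq_abs]
        exact pow_le_pow_left₀ (abs_nonneg _) q 2
      refine q1.trans ?_
      apply mul_le_mul_of_nonneg_left _ (by positivity)
      have ht0 := htp i j hj'
      refine (pow_split ((S i - S j) ^ 2) ((t i j) ^ (2 * H)) a (sq_nonneg _)
        (by positivity) ha ha1).trans ?_
      apply add_le_add_left
      apply mul_le_mul_of_nonneg_right _ (by positivity)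
      have q2 := Sch_diff x0 h β1 (extF (incrW W n h ω)) M hM hh.le j (i - j)
      rw [sum_extF_incr W n h ω j (i - j) (by omega)] at q2
      rw [show j + (i - j) = i by omega] at q2
      rw [Nat.cast_sub hj'.le] at q2
      simp only [hDW, ht]
      rw [← hS] at q2
      set A := W ((i : ℝ) * h) ω - W ((j : ℝ) * h) ω
      set E := M * (((i : ℝ) - j) * h)
      have q3 : (S i - S j - A) ^ 2 ≤ E ^ 2 := sq_le_sq' (abs_le.1 q2).1 (abs_le.1 q2).2
      have q4 : E ^ 2 = M ^ 2 * (((i : ℝ) - j) * h) ^ 2 := by simp only [E]; ring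
      nlinarith [sq_nonneg (S i - S j - 2 * A)]
  have hDWi : ∀ i j, Integrable (DW i j) P := fun i j =>
    (fbm_var (by linarith) hW _ _ (by positivity) (by positivity)).1
  have hterm : ∀ i j : ℕ, Integrable (fun ω => ((i : ℝ) - j) ^ (-(2 * H)) *
        (h ^ 2 * (c ^ 2 * ((2 * DW i j ω + 2 * M ^ 2 * (t i j) ^ 2) * ((t i j) ^ (2 * H)) ^ (a - 1)
          + ((t i j) ^ (2 * H)) ^ a)))) P := by
    intro i j
    have := hDWi i j
    fun_prop
  have hinner : ∀ i : ℕ, Integrable (fun ω => ((i : ℝ) + 1) ^ (1 - 2 * H) * (h ^ 2 * m ^ 2) +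
      ∑ j ∈ Finset.range i, ((i : ℝ) - j) ^ (-(2 * H)) *
        (h ^ 2 * (c ^ 2 * ((2 * DW i j ω + 2 * M ^ 2 * (t i j) ^ 2) * ((t i j) ^ (2 * H)) ^ (a - 1)
          + ((t i j) ^ (2 * H)) ^ a)))) P := fun i =>
    (integrable_const _).add (integrable_finsetSum _ fun j _ => hterm i j)
  have hBdi : Integrable Bd P := integrable_finsetSum _ fun i _ => hinner i
  have hInt0 : ∫ ω, Bd ω ∂P ≤ ∑ i ∈ Finset.range n,
      (((i : ℝ) + 1) ^ (1 - 2 * H) * (h ^ 2 * m ^ 2) +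
      ∑ j ∈ Finset.range i, ((i : ℝ) - j) ^ (-(2 * H)) *
        (h ^ 2 * ((C2 * c ^ 2) * (((i : ℝ) - j) * h) ^ (2 * H * a)))) := by
    simp only [hBd]
    rw [integral_finsetSum _ fun i _ => hinner i]
    apply Finset.sum_le_sum
    intro i hi
    have hi' : i < n := Finset.mem_range.1 hi
    rw [integral_add (integrable_const _) (integrable_finsetSum _ fun j _ => hterm i j),
      integral_finsetSum _ fun j _ => hterm i j]
    simp only [integral_const, probReal_univ, one_smul]
    apply add_le_add_right
    apply Finset.sum_le_sum
    intro j hj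
    have hj' : j < i := Finset.mem_range.1 hj
    have hp : (0 : ℝ) ≤ (i : ℝ) - j := by
      have : (j : ℝ) < i := by exact_mod_cast hj'
      linarith
    rw [integral_const_mul, integral_const_mul, integral_const_mul]
    apply mul_le_mul_of_nonneg_left _ (by positivity)
    apply mul_le_mul_of_nonneg_left _ (by positivity)
    have i1 := hDWi i j
    rw [integral_add (by fun_prop) (integrable_const _), integral_mul_const,
      integral_add (by fun_prop) (integrable_const _), integral_const_mul]
    simp only [integral_const, probReal_univ, one_smul]
    have ht0 := htp i j hj'
    have e1 : ∫ ω, DW i j ω ∂P = (t i j) ^ (2 * H) := by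
      have := (fbm_var (by linarith) hW ((j : ℝ) * h) ((i : ℝ) * h) (by positivity)
        (by positivity)).2
      rw [← sub_mul, abs_of_pos ht0] at this
      exact this
    rw [e1]
    rw [mul_comm C2, mul_assoc (c ^ 2) C2]
    apply mul_le_mul_of_nonneg_left _ (by positivity)
    change _ ≤ C2 * (t i j) ^ (2 * H * a)
    rw [Real.rpow_mul ht0.le (2 * H) a]
    set z := (t i j) ^ (2 * H) with hz
    have hz0 : 0 < z := by positivity
    have e2 : z * z ^ (a - 1) = z ^ a := by
      rw [← Real.rpow_one_add' hz0.le (by linarith)]; congr 1; ring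
    have e3 : (t i j) ^ 2 = z * (t i j) ^ (2 - 2 * H) := by
      rw [hz, ← Real.rpow_add ht0, ← Real.rpow_two]; congr 1; ring
    have tT : t i j ≤ T := by
      rw [← hn]
      simp only [ht]
      apply mul_le_mul_of_nonneg_right _ hh.le
      have : (i : ℝ) ≤ n := by exact_mod_cast hi'.le
      have := Nat.cast_nonneg (α := ℝ) j
      linarith
    have e4 : (t i j) ^ (2 - 2 * H) ≤ T ^ (2 - 2 * H) :=
      Real.rpow_le_rpow ht0.le tT (by linarith)
    have e5 : (2 * z + 2 * M ^ 2 * (t i j) ^ 2) * z ^ (a - 1) + z ^ a =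
      (3 + 2 * M ^ 2 * (t i j) ^ (2 - 2 * H)) * z ^ a := by
      rw [e3, ← e2]; ring
    rw [e5]
    simp only [hC2]
    gcongr
  have hds := det_sum H a h1 h2 ha ha1 has T h hh n hn (m ^ 2) (C2 * c ^ 2) (by positivity)
    (by positivity)
  have hfin : C0 * h ^ (-(2 * H)) * ∫ ω, Bd ω ∂P ≤ C0 * (D1 + D2 * C2) * (m ^ 2 + c ^ 2) := by
    have g1 : h ^ (-(2 * H)) * ∫ ω, Bd ω ∂P ≤ D1 * m ^ 2 + D2 * (C2 * c ^ 2) :=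
      (mul_le_mul_of_nonneg_left hInt0 (by positivity)).trans hds
    rw [mul_assoc, mul_assoc]
    apply mul_le_mul_of_nonneg_left _ hC0
    have g2 : 0 ≤ D2 * C2 * m ^ 2 := by positivity
    have g3 : 0 ≤ D1 * c ^ 2 := by positivity
    nlinarith
  calc _ ≤ ∫⁻ ω, ENNReal.ofReal (C0 * h ^ (-(2 * H)) * Bd ω) ∂P := by
        apply lintegral_mono
        intro ω
        apply ENNReal.ofReal_le_ofReal
        apply mul_le_mul_of_nonneg_left (hpt ω) (by positivity)
    _ = ENNReal.ofReal (∫ ω, C0 * h ^ (-(2 * H)) * Bd ω ∂P) := by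
        rw [ofReal_integral_eq_lintegral_ofReal (hBdi.const_mul _)]
        refine Filter.Eventually.of_forall fun ω => ?_
        exact mul_nonneg (by positivity) ((NNx_nonneg _ _ _).trans (hpt ω))
    _ ≤ _ := by
        apply ENNReal.ofReal_le_ofReal
        rw [integral_const_mul]
        exact hfin

/-- discrete path driven by the increments of `W` -/
noncomputable def Pth (W : ℝ → Ω → ℝ) (n : ℕ) (x0 h : ℝ) (β : ℝ → ℝ) (ω : Ω) : Fin (n + 1) → ℝ :=
  SF n x0 h β (incrW W n h ω)

theorem girs_shift (n : ℕ) (x0 h : ℝ) (β1 β2 : ℝ → ℝ) (v : Fin n → ℝ) :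
    SF n x0 h β2 (v + fun i : Fin n => h * (β1 (Sch x0 h β1 (extF v) i) - β2 (Sch x0 h β1 (extF v) i)))
      = SF n x0 h β1 v := by
  ext i
  unfold SF
  apply Sch_girsanov x0 h β1 β2 _ _ n _ _ (by omega)
  intro j hj
  simp [extF, hj]

theorem cmp_A4 {P : Measure Ω} [IsProbabilityMeasure P] {H : ℝ} {W : ℝ → Ω → ℝ}
    (hW : IsFractionalBM P H W) (h1 : 1 / 2 < H) (h2 : H < 1)
    (a : ℝ) (ha : 0 < a) (ha1 : a ≤ 1) (has : 2 * H - 2 * H * a < 1) (T : ℝ) (hT : 0 < T)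
    (x0 M C τ : ℝ) (hC : 0 ≤ C) (hτ : 0 < τ) :
    ∃ K : ℝ, 0 ≤ K ∧ ∀ (n : ℕ) (h : ℝ), 0 < h → (n : ℝ) * h = T →
    ∀ β1 β2 : ℝ → ℝ, Measurable β1 → Measurable β2 → (∀ x, |β1 x| ≤ M) →
    ∀ m c : ℝ, 0 ≤ c → (∀ x, |β1 x - β2 x| ≤ m) →
      (∀ x y, |(β1 x - β2 x) - (β1 y - β2 y)| ≤ c * |x - y| ^ a) → m ^ 2 + c ^ 2 ≤ C →
    ∀ (G : (Fin (n + 1) → ℝ) → ℝ≥0∞), Measurable G → (∀ x, G x ≤ 1) →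
    ∫⁻ ω, G (Pth W n x0 h β1 ω) ∂P ≤
      ENNReal.ofReal (exp K) * ∫⁻ ω, G (Pth W n x0 h β2 ω) ∂P + ENNReal.ofReal τ := by
  obtain ⟨C0, hC0, hCM⟩ := fgn_CM H h1 h2
  obtain ⟨C1, hC1, hb⟩ := shift_bound hW h1 h2 C0 hC0 a ha ha1 has T hT x0 M
  obtain ⟨K, hK, hA⟩ := incr_A4 hW h1 h2 C0 hC0 hCM (C1 * C) τ (by positivity) hτ
  refine ⟨K, hK, ?_⟩
  intro n h hh hn β1 β2 hβ1 hβ2 hM m c hc hm hH hmc G hG hG1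
  have hb' := hb n h hh hn β1 (fun x => β1 x - β2 x) hβ1 (hβ1.sub hβ2) hM m c hc hm hH
  have := hA n h hh (fun v => fun i => h * (β1 (Sch x0 h β1 (extF v) i) - β2 (Sch x0 h β1 (extF v) i)))
    (by
      rw [measurable_pi_iff]; intro i
      exact ((hβ1.comp (measurable_Sch n x0 h hβ1 i)).sub
        (hβ2.comp (measurable_Sch n x0 h hβ1 i))).const_mul h)
    (by
      intro i x y hxy
      have : Sch x0 h β1 (extF x) i = Sch x0 h β1 (extF y) i := by
        apply Sch_congr
        intro j hj
        have hjn : j < n := hj.trans i.2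
        simp only [extF, hjn, dite_true]
        exact hxy ⟨j, hjn⟩ hj
      simp only [this])
    (fun v => G (SF n x0 h β2 v)) (hG.comp (measurable_SF n x0 h hβ2)) (fun x => hG1 _)
    (hb'.trans (ENNReal.ofReal_le_ofReal (mul_le_mul_of_nonneg_left hmc hC1)))
  simp only [girs_shift] at this
  exact this

theorem cmp_A5 {P : Measure Ω} [IsProbabilityMeasure P] {H : ℝ} {W : ℝ → Ω → ℝ}
    (hW : IsFractionalBM P H W) (h1 : 1 / 2 < H) (h2 : H < 1)
    (a : ℝ) (ha : 0 < a) (ha1 : a ≤ 1) (has : 2 * H - 2 * H * a < 1) (T : ℝ) (hT : 0 < T)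
    (x0 M τ : ℝ) (hτ : 0 < τ) :
    ∃ δ : ℝ, 0 < δ ∧ ∀ (n : ℕ) (h : ℝ), 0 < h → (n : ℝ) * h = T →
    ∀ β1 β2 : ℝ → ℝ, Measurable β1 → Measurable β2 → (∀ x, |β1 x| ≤ M) →
    ∀ m c : ℝ, 0 ≤ c → (∀ x, |β1 x - β2 x| ≤ m) →
      (∀ x y, |(β1 x - β2 x) - (β1 y - β2 y)| ≤ c * |x - y| ^ a) → m ^ 2 + c ^ 2 ≤ δ →
    ∀ (G : (Fin (n + 1) → ℝ) → ℝ≥0∞), Measurable G → (∀ x, G x ≤ 1) →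
    ∫⁻ ω, G (Pth W n x0 h β1 ω) ∂P ≤
      ∫⁻ ω, G (Pth W n x0 h β2 ω) ∂P + ENNReal.ofReal τ := by
  obtain ⟨C0, hC0, hCM⟩ := fgn_CM H h1 h2
  obtain ⟨C1, hC1, hb⟩ := shift_bound hW h1 h2 C0 hC0 a ha ha1 has T hT x0 M
  obtain ⟨δ, hδ, hA⟩ := incr_A5 hW h1 h2 C0 hC0 hCM τ hτ
  refine ⟨δ / (C1 + 1), by positivity, ?_⟩
  intro n h hh hn β1 β2 hβ1 hβ2 hM m c hc hm hH hmc G hG hG1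
  have hb' := hb n h hh hn β1 (fun x => β1 x - β2 x) hβ1 (hβ1.sub hβ2) hM m c hc hm hH
  have hle : C1 * (m ^ 2 + c ^ 2) ≤ δ := by
    rw [le_div_iff₀ (by positivity)] at hmc
    nlinarith [sq_nonneg m, sq_nonneg c]
  have := hA n h hh (fun v => fun i => h * (β1 (Sch x0 h β1 (extF v) i) - β2 (Sch x0 h β1 (extF v) i)))
    (by
      rw [measurable_pi_iff]; intro i
      exact ((hβ1.comp (measurable_Sch n x0 h hβ1 i)).sub
        (hβ2.comp (measurable_Sch n x0 h hβ1 i))).const_mul h)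
    (by
      intro i x y hxy
      have : Sch x0 h β1 (extF x) i = Sch x0 h β1 (extF y) i := by
        apply Sch_congr
        intro j hj
        have hjn : j < n := hj.trans i.2
        simp only [extF, hjn, dite_true]
        exact hxy ⟨j, hjn⟩ hj
      simp only [this])
    (fun v => G (SF n x0 h β2 v)) (hG.comp (measurable_SF n x0 h hβ2)) (fun x => hG1 _)
    (hb'.trans (ENNReal.ofReal_le_ofReal hle))
  simp only [girs_shift] at this
  exact this

end PartD2


section PartE
set_option linter.unusedSectionVars false
open scoped ENNReal

theorem supconv (f : ℝ → ℝ) (M c a ε : ℝ) (hM : ∀ x, |f x| ≤ M) (hc : 0 ≤ c) (ha : 0 < a)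
    (hε : 0 < ε) (hf : ∀ x y, |f x - f y| ≤ c * |x - y| ^ a) :
    ∃ L : ℝ, 0 < L ∧ ∃ g : ℝ → ℝ, (∀ x, |g x| ≤ M) ∧ (∀ x y, |g x - g y| ≤ L * |x - y|) ∧
      (∀ x y, |g x - g y| ≤ c * |x - y| ^ a) ∧ ∀ x, f x ≤ g x ∧ g x ≤ f x + ε := by
  have hM0 : 0 ≤ M := (abs_nonneg _).trans (hM 0)
  obtain ⟨r0, hr0, hr1⟩ : ∃ r0 : ℝ, 0 < r0 ∧ c * r0 ^ a ≤ ε := by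
    refine ⟨(ε / (c + 1)) ^ (a⁻¹), by positivity, ?_⟩
    rw [← Real.rpow_mul (by positivity), inv_mul_cancel₀ ha.ne', Real.rpow_one, ← mul_div_assoc,
      div_le_iff₀ (by positivity)]
    nlinarith
  set L := 2 * M / r0 + 1 with hL
  have hLp : 0 < L := by positivity
  have hbdd : ∀ x, BddAbove (Set.range fun z => f (x + z) - L * |z|) := by
    intro x
    refine ⟨M, ?_⟩
    rintro _ ⟨z, rfl⟩
    have := (abs_le.1 (hM (x + z))).2
    have : 0 ≤ L * |z| := by positivity
    simp only; linarith
  set g : ℝ → ℝ := fun x => ⨆ z, (f (x + z) - L * |z|) with hg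
  have hle : ∀ x z, f (x + z) - L * |z| ≤ g x := fun x z => le_ciSup (hbdd x) z
  have hfg : ∀ x, f x ≤ g x := by
    intro x; have := hle x 0; simpa using this
  have one : ∀ x y, g x ≤ g y + L * |x - y| := by
    intro x y
    apply ciSup_le
    intro z
    have := hle y (z + (x - y))
    rw [show y + (z + (x - y)) = x + z by ring] at this
    have h2 := abs_add_le z (x - y)
    nlinarith
  have two : ∀ x y, g x ≤ g y + c * |x - y| ^ a := by
    intro x y
    apply ciSup_le
    intro z
    have := hle y z
    have h2 := (abs_le.1 (hf (x + z) (y + z))).2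
    rw [show x + z - (y + z) = x - y by ring] at h2
    linarith
  refine ⟨L, hLp, g, ?_, ?_, ?_, ?_⟩
  · intro x
    rw [abs_le]
    constructor
    · exact (abs_le.1 (hM x)).1.trans (hfg x)
    · apply ciSup_le
      intro z
      have := (abs_le.1 (hM (x + z))).2
      have : 0 ≤ L * |z| := by positivity
      linarith
  · intro x y
    rw [abs_le]
    have h1 := one x y
    have h2 := one y x
    rw [abs_sub_comm y x] at h2
    constructor <;> linarith
  · intro x y
    rw [abs_le]
    have h1 := two x y
    have h2 := two y x
    rw [abs_sub_comm y x] at h2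
    constructor <;> linarith
  · intro x
    refine ⟨hfg x, ?_⟩
    apply ciSup_le
    intro z
    have hz : 0 ≤ L * |z| := by positivity
    rcases le_or_gt |z| r0 with h | h
    · have h2 := (abs_le.1 (hf (x + z) x)).2
      rw [show x + z - x = z by ring] at h2
      have h3 : |z| ^ a ≤ r0 ^ a := Real.rpow_le_rpow (abs_nonneg _) h ha.le
      have h4 := mul_le_mul_of_nonneg_left h3 hc
      linarith
    · have h1 := (abs_le.1 (hM (x + z))).2
      have h2 := (abs_le.1 (hM x)).1
      have h3 : 2 * M ≤ L * |z| := by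
        have : 2 * M / r0 * r0 = 2 * M := by field_simp
        have h5 : 0 ≤ 2 * M / r0 := by positivity
        rw [hL]; nlinarith
      linarith

theorem holder_interp (u A B r a1 a2 : ℝ) (hu : 0 ≤ u) (hA : u ≤ A) (hB : u ≤ B * r ^ a1)
    (hB0 : 0 ≤ B) (hr : 0 ≤ r) (ha2 : 0 < a2) (ha : a2 < a1) :
    u ≤ A ^ (1 - a2 / a1) * B ^ (a2 / a1) * r ^ a2 := by
  have ha1 : 0 < a1 := ha2.trans ha
  have hθ : a2 / a1 < 1 := (div_lt_one ha1).2 ha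
  have hθ0 : 0 < a2 / a1 := by positivity
  have e : u = u ^ (1 - a2 / a1) * u ^ (a2 / a1) := by
    rw [← Real.rpow_add' hu (by simp)]; simp
  have e2 : (B * r ^ a1) ^ (a2 / a1) = B ^ (a2 / a1) * r ^ a2 := by
    rw [Real.mul_rpow hB0 (by positivity), ← Real.rpow_mul hr, mul_div_cancel₀ _ ha1.ne']
  rw [mul_assoc, ← e2]
  calc u = _ := e
    _ ≤ _ := mul_le_mul (Real.rpow_le_rpow hu hA (by linarith)) (Real.rpow_le_rpow hu hB hθ0.le)
      (by positivity) (Real.rpow_nonneg (hu.trans hA) _)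

theorem sandwich_det (x0 h N : ℝ) (n : ℕ) (βp βm : ℝ → ℝ) (x w : ℕ → ℝ) (hx0 : x 0 = x0)
    (mp : Monotone fun y => y + h * βp y) (mm : Monotone fun y => y + h * βm y)
    (hstep : ∀ i < n, |x i| ≤ N → x (i + 1) ≤ x i + w i + h * βp (x i) ∧
      x i + w i + h * βm (x i) ≤ x (i + 1))
    (hg : ∀ i < n, Sch x0 h βm w i ≤ x i → x i ≤ Sch x0 h βp w i → |x i| ≤ N) :
    ∀ i ≤ n, Sch x0 h βm w i ≤ x i ∧ x i ≤ Sch x0 h βp w i := by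
  intro i
  induction i with
  | zero => intro _; simp [Sch, hx0]
  | succ k ih =>
    intro hk
    obtain ⟨i1, i2⟩ := ih (by omega)
    obtain ⟨s1, s2⟩ := hstep k (by omega) (hg k (by omega) i1 i2)
    have m1 := mm i1
    have m2 := mp i2
    simp only [Sch] at m1 m2 ⊢
    constructor <;> linarith

theorem Sch_mono (x0 h : ℝ) (hh : 0 ≤ h) (βp βm : ℝ → ℝ) (w : ℕ → ℝ)
    (mp : Monotone fun y => y + h * βp y) (hle : ∀ x, βm x ≤ βp x) (i : ℕ) :
    Sch x0 h βm w i ≤ Sch x0 h βp w i := by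
  induction i with
  | zero => exact le_rfl
  | succ k ih =>
    have m2 := mp ih
    have := mul_le_mul_of_nonneg_left (hle (Sch x0 h βm w k)) hh
    simp only [Sch] at m2 ⊢
    linarith

theorem lip_mono (h L : ℝ) (hh : 0 ≤ h) (hL : h * L ≤ 1) (β : ℝ → ℝ)
    (hβ : ∀ x y, |β x - β y| ≤ L * |x - y|) : Monotone fun y => y + h * β y := by
  intro x y hxy
  have h1 := (abs_le.1 (hβ x y)).2
  rw [abs_sub_comm, abs_of_nonneg (by linarith : 0 ≤ y - x)] at h1
  have h2 := mul_le_mul_of_nonneg_left h1 hh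
  have h3 : h * (L * (y - x)) ≤ y - x := by
    have := mul_le_mul_of_nonneg_right hL (by linarith : 0 ≤ y - x)
    linarith
  simp only
  linarith

/-- uniform continuity along the grid -/
theorem grid_osc (T : ℝ) (hT : 0 < T) (X : ℝ → ℝ) (hX : ContinuousOn X (Set.Icc 0 T)) (δ : ℝ)
    (hδ : 0 < δ) : ∃ n1 : ℕ, 1 ≤ n1 ∧ ∀ n : ℕ, n1 ≤ n → ∀ s ∈ Set.Icc 0 T, ∀ t ∈ Set.Icc 0 T,
      |s - t| ≤ T / n → |X s - X t| ≤ δ := by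
  have hu := isCompact_Icc.uniformContinuousOn_of_continuous hX
  rw [Metric.uniformContinuousOn_iff] at hu
  obtain ⟨η, hη, hu⟩ := hu δ hδ
  obtain ⟨k, hk⟩ := exists_nat_gt (T / η)
  refine ⟨k + 1, by omega, ?_⟩
  intro n hn s hs t ht hst
  have hn' : (k : ℝ) < n := by exact_mod_cast hn
  have hn0 : (0 : ℝ) < n := lt_of_le_of_lt (Nat.cast_nonneg k) hn'
  have : T / n < η := by
    rw [div_lt_iff₀ hn0]
    rw [div_lt_iff₀ hη] at hk
    nlinarith
  exact (hu s hs t ht (by rw [Real.dist_eq]; linarith)).le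

end PartE


section PartE2
set_option linter.unusedSectionVars false
open scoped ENNReal

variable {Ω : Type*} [MeasurableSpace Ω]

theorem lint_of_bdd {P : Measure Ω} [IsProbabilityMeasure P] (g : Ω → ℝ) (hg : Measurable g)
    (h0 : ∀ x, 0 ≤ g x) (h1 : ∀ x, g x ≤ 1) :
    Integrable g P ∧ ∫⁻ ω, ENNReal.ofReal (g ω) ∂P = ENNReal.ofReal (∫ ω, g ω ∂P) := by
  have hi : Integrable g P := by
    refine Integrable.of_bound hg.aestronglyMeasurable 1 (Filter.Eventually.of_forall fun x => ?_)
    rw [Real.norm_eq_abs, abs_of_nonneg (h0 x)]; exact h1 x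
  exact ⟨hi, (ofReal_integral_eq_lintegral_ofReal hi (Filter.Eventually.of_forall h0)).symm⟩

theorem real_of_enn (A B K τ : ℝ) (hA : 0 ≤ A) (hB : 0 ≤ B) (hK : 0 ≤ K) (hτ : 0 ≤ τ)
    (h : ENNReal.ofReal A ≤ ENNReal.ofReal K * ENNReal.ofReal B + ENNReal.ofReal τ) :
    A ≤ K * B + τ := by
  rw [← ENNReal.ofReal_mul hK, ← ENNReal.ofReal_add (by positivity) hτ] at h
  exact (ENNReal.ofReal_le_ofReal_iff (by positivity)).1 h

theorem clamp_ex (b : ℝ → ℝ) (α a1 R : ℝ) (hR : 0 ≤ R) (ha1 : 0 < a1) (hα : a1 < α)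
    (hbHolder : ∀ K : Set ℝ, IsCompact K → ∃ c : ℝ, 0 ≤ c ∧
      ∀ x ∈ K, ∀ y ∈ K, |b x - b y| ≤ c * |x - y| ^ α)
    (hbloc : ∀ K : Set ℝ, IsCompact K → ∃ M : ℝ, ∀ x ∈ K, |b x| ≤ M) :
    ∃ bN : ℝ → ℝ, ∃ M c : ℝ, 0 ≤ c ∧ (∀ x, |bN x| ≤ M) ∧
      (∀ x y, |bN x - bN y| ≤ c * |x - y| ^ a1) ∧ ∀ x, |x| ≤ R + 1 → bN x = b x := by
  obtain ⟨c, hc, hH⟩ := hbHolder (Set.Icc (-(R + 1)) (R + 1)) isCompact_Icc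
  obtain ⟨M, hM⟩ := hbloc (Set.Icc (-(R + 1)) (R + 1)) isCompact_Icc
  set cl : ℝ → ℝ := fun x => max (-(R + 1)) (min x (R + 1)) with hcl
  have hmem : ∀ x, cl x ∈ Set.Icc (-(R + 1)) (R + 1) := by
    intro x
    refine ⟨le_max_left _ _, max_le (by linarith) (min_le_right _ _)⟩
  have hlip : ∀ x y, |cl x - cl y| ≤ |x - y| := by
    intro x y
    simp only [hcl]
    rw [max_comm, max_comm (-(R + 1))]
    exact (abs_max_sub_max_le_abs (min x (R + 1)) (min y (R + 1)) (-(R + 1))).trans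
      ((abs_min_sub_min_le_max x (R + 1) y (R + 1)).trans (by simp))
  refine ⟨fun x => b (cl x), M, c * (2 * (R + 1)) ^ (α - a1), by positivity,
    fun x => hM _ (hmem x), ?_, ?_⟩
  · intro x y
    refine (hH _ (hmem x) _ (hmem y)).trans ?_
    rw [mul_assoc]
    apply mul_le_mul_of_nonneg_left _ hc
    have e : |cl x - cl y| ^ α = |cl x - cl y| ^ (α - a1) * |cl x - cl y| ^ a1 := by
      rw [← Real.rpow_add' (abs_nonneg _) (by linarith)]; congr 1; ring
    rw [e]
    have hd : |cl x - cl y| ≤ 2 * (R + 1) := by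
      have h1 := hmem x
      have h2 := hmem y
      rw [abs_le]; constructor <;> linarith [h1.1, h1.2, h2.1, h2.2]
    apply mul_le_mul (Real.rpow_le_rpow (abs_nonneg _) hd (by linarith))
      (Real.rpow_le_rpow (abs_nonneg _) (hlip x y) ha1.le) (by positivity) (by positivity)
  · intro x hx
    have h1 := abs_le.1 hx
    simp only [hcl]
    rw [min_eq_left h1.2, max_eq_right h1.1]

theorem one_step (x0 T : ℝ) (hT : 0 < T) (b bN βp βm : ℝ → ℝ) (hb : Continuous b) (X W : ℝ → ℝ)
    (R c a1 ε : ℝ) (hbN : ∀ x, |x| ≤ R + 1 → bN x = b x) (hc : 0 ≤ c) (ha1 : 0 < a1) (hε : 0 < ε)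
    (hH : ∀ x y, |bN x - bN y| ≤ c * |x - y| ^ a1)
    (hp : ∀ x, bN x + ε ≤ βp x) (hm : ∀ x, βm x ≤ bN x - ε)
    (hX : ContinuousOn X (Set.Icc 0 T))
    (heq : ∀ t ∈ Set.Icc (0 : ℝ) T, X t = x0 + W t + ∫ s in (0 : ℝ)..t, b (X s)) :
    ∃ n1 : ℕ, 1 ≤ n1 ∧ ∀ n : ℕ, n1 ≤ n → ∀ i < n, |X ((i : ℝ) * (T / n))| ≤ R →
      X (((i + 1 : ℕ) : ℝ) * (T / n)) ≤ X ((i : ℝ) * (T / n)) +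
        (W (((i : ℝ) + 1) * (T / n)) - W ((i : ℝ) * (T / n))) +
        (T / n) * βp (X ((i : ℝ) * (T / n))) ∧
      X ((i : ℝ) * (T / n)) +
        (W (((i : ℝ) + 1) * (T / n)) - W ((i : ℝ) * (T / n))) +
        (T / n) * βm (X ((i : ℝ) * (T / n))) ≤ X (((i + 1 : ℕ) : ℝ) * (T / n)) := by
  obtain ⟨δ, hδ, hδ1, hδ2⟩ : ∃ δ : ℝ, 0 < δ ∧ δ ≤ 1 ∧ c * δ ^ a1 ≤ ε := by
    refine ⟨min 1 ((ε / (c + 1)) ^ (a1⁻¹)), by positivity, min_le_left _ _, ?_⟩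
    have : (min 1 ((ε / (c + 1)) ^ (a1⁻¹))) ^ a1 ≤ ((ε / (c + 1)) ^ (a1⁻¹)) ^ a1 :=
      Real.rpow_le_rpow (by positivity) (min_le_right _ _) ha1.le
    rw [← Real.rpow_mul (by positivity), inv_mul_cancel₀ ha1.ne', Real.rpow_one] at this
    refine (mul_le_mul_of_nonneg_left this hc).trans ?_
    rw [← mul_div_assoc, div_le_iff₀ (by positivity)]
    nlinarith
  obtain ⟨n1, hn1, hosc⟩ := grid_osc T hT X hX δ hδ
  refine ⟨n1, hn1, ?_⟩
  intro n hn i hi hR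
  have hn0 : (0 : ℝ) < n := by
    have : 0 < n := by omega
    exact_mod_cast this
  set h := T / n with hh
  have hh0 : 0 < h := by positivity
  have hnh : (n : ℝ) * h = T := by rw [hh]; field_simp
  set t0 := (i : ℝ) * h with ht0
  have ht1 : ((i + 1 : ℕ) : ℝ) * h = t0 + h := by rw [ht0]; push_cast; ring
  have ht1' : ((i : ℝ) + 1) * h = t0 + h := by rw [ht0]; ring
  rw [ht1, ht1']
  have hm0 : 0 ≤ t0 := by positivity
  have hm1 : t0 + h ≤ T := by
    rw [← hnh, ← ht1]
    apply mul_le_mul_of_nonneg_right _ hh0.le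
    exact_mod_cast hi
  have hbX : ContinuousOn (fun s => b (X s)) (Set.Icc 0 T) := hb.comp_continuousOn hX
  have hInt0 : ∀ u v, u ∈ Set.Icc 0 T → v ∈ Set.Icc 0 T →
      IntervalIntegrable (fun s => b (X s)) volume u v := by
    intro u v hu hv
    apply ContinuousOn.intervalIntegrable
    apply hbX.mono
    exact Set.uIcc_subset_Icc hu hv
  have z0 : (0 : ℝ) ∈ Set.Icc 0 T := ⟨le_rfl, hT.le⟩
  have m0 : t0 ∈ Set.Icc 0 T := ⟨hm0, by linarith⟩
  have m1 : t0 + h ∈ Set.Icc 0 T := ⟨by linarith, hm1⟩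
  have hsplit := intervalIntegral.integral_add_adjacent_intervals (hInt0 0 t0 z0 m0)
    (hInt0 t0 (t0 + h) m0 m1)
  have e1 := heq (t0 + h) m1
  have e0 := heq t0 m0
  have hcl : ∀ s ∈ Set.Icc t0 (t0 + h), |b (X s) - bN (X t0)| ≤ ε := by
    intro s hs
    have o := hosc n hn s ⟨by linarith [hs.1], by linarith [hs.2]⟩ t0 m0
      (by rw [abs_of_nonneg (by linarith [hs.1])]; linarith [hs.2])
    have h1 : |X s| ≤ R + 1 := by
      have := abs_sub_abs_le_abs_sub (X s) (X t0)
      linarith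
    rw [← hbN _ h1]
    refine (hH _ _).trans (le_trans ?_ hδ2)
    exact mul_le_mul_of_nonneg_left (Real.rpow_le_rpow (abs_nonneg _) o ha1.le) hc
  have up : ∫ s in t0..(t0 + h), b (X s) ≤ h * βp (X t0) := by
    have := intervalIntegral.integral_mono_on (by linarith) (hInt0 t0 (t0 + h) m0 m1)
      (g := fun _ => βp (X t0)) intervalIntegrable_const
      (fun s hs => by have := (abs_le.1 (hcl s hs)).2; linarith [hp (X t0)])
    rw [intervalIntegral.integral_const] at this
    simpa using this
  have dn : h * βm (X t0) ≤ ∫ s in t0..(t0 + h), b (X s) := by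
    have := intervalIntegral.integral_mono_on (by linarith)
      (f := fun _ => βm (X t0)) intervalIntegrable_const (hInt0 t0 (t0 + h) m0 m1)
      (fun s hs => by have := (abs_le.1 (hcl s hs)).1; linarith [hm (X t0)])
    rw [intervalIntegral.integral_const] at this
    simpa using this
  constructor <;> linarith


theorem package {P : Measure Ω} [IsProbabilityMeasure P] {H : ℝ} {W : ℝ → Ω → ℝ}
    (hW : IsFractionalBM P H W) (h1 : 1 / 2 < H) (h2 : H < 1) (x0 T : ℝ) (hT : 0 < T)
    (b : ℝ → ℝ) (hb : Continuous b)
    (hbloc : ∀ K : Set ℝ, IsCompact K → ∃ M : ℝ, ∀ x ∈ K, |b x| ≤ M)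
    (α : ℝ) (hα : 2 - 1 / H < α)
    (hbHolder : ∀ K : Set ℝ, IsCompact K → ∃ c : ℝ, 0 ≤ c ∧
      ∀ x ∈ K, ∀ y ∈ K, |b x - b y| ≤ c * |x - y| ^ α)
    (X : ℝ → Ω → ℝ) (R : ℝ) (hR : 0 ≤ R) (τ1 : ℝ) (hτ1 : 0 < τ1) :
    ∃ K : ℝ, 0 ≤ K ∧ ∀ τ2 : ℝ, 0 < τ2 → ∃ βp βm : ℝ → ℝ, Measurable βp ∧ Measurable βm ∧
      (∃ n0 : ℕ, 1 ≤ n0 ∧ ∀ n : ℕ, n0 ≤ n →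
        (∀ G : (Fin (n + 1) → ℝ) → ℝ, Measurable G → (∀ x, 0 ≤ G x) → (∀ x, G x ≤ 1) →
          ∫ ω, G (Pth W n x0 (T / n) βp ω) ∂P ≤
            exp K * ∫ ω, G (Pth W n x0 (T / n) (fun _ => 0) ω) ∂P + τ1 ∧
          ∫ ω, G (Pth W n x0 (T / n) (fun _ => 0) ω) ∂P ≤
            exp K * ∫ ω, G (Pth W n x0 (T / n) βp ω) ∂P + τ1 ∧
          ∫ ω, G (Pth W n x0 (T / n) βp ω) ∂P ≤ ∫ ω, G (Pth W n x0 (T / n) βm ω) ∂P + τ2) ∧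
        ∀ ω i, Pth W n x0 (T / n) βm ω i ≤ Pth W n x0 (T / n) βp ω i) ∧
      ∀ ω, ContinuousOn (fun t => X t ω) (Set.Icc (0 : ℝ) T) → W 0 ω = 0 →
        (∀ t ∈ Set.Icc (0 : ℝ) T, X t ω = x0 + W t ω + ∫ s in (0 : ℝ)..t, b (X s ω)) →
        ∃ n1 : ℕ, ∀ n : ℕ, n1 ≤ n →
          (∀ i : Fin (n + 1), Pth W n x0 (T / n) βm ω i ≤ X ((i : ℕ) * (T / n)) ω →
            X ((i : ℕ) * (T / n)) ω ≤ Pth W n x0 (T / n) βp ω i →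
            |X ((i : ℕ) * (T / n)) ω| ≤ R) →
          ∀ i : Fin (n + 1), Pth W n x0 (T / n) βm ω i ≤ X ((i : ℕ) * (T / n)) ω ∧
            X ((i : ℕ) * (T / n)) ω ≤ Pth W n x0 (T / n) βp ω i := by
  have hH0 : 0 < H := by linarith
  set a1 := 2 - 1 / H with ha1d
  have hHi : 1 / H < 2 := by rw [div_lt_iff₀ hH0]; linarith
  have hHi1 : 1 < 1 / H := by rw [lt_div_iff₀ hH0]; linarith
  have ha1 : 0 < a1 := by rw [ha1d]; linarith
  set a2 := 3 / 4 * a1 with ha2d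
  have ha2 : 0 < a2 := by positivity
  have ha21 : a2 < a1 := by rw [ha2d]; linarith
  have ha2le : a2 ≤ 1 := by rw [ha2d, ha1d]; linarith
  have has : 2 * H - 2 * H * a2 < 1 := by
    have : H * a1 = 2 * H - 1 := by rw [ha1d]; field_simp
    have e : 2 * H * a2 = 3 / 2 * (H * a1) := by rw [ha2d]; ring
    rw [e, this]; linarith
  obtain ⟨bN, M, c, hc, hM, hHol, hbN⟩ := clamp_ex b α a1 R hR ha1 hα hbHolder hbloc
  have hM0 : 0 ≤ M := (abs_nonneg _).trans (hM 0)
  -- uniform interpolation constant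
  set c1 : ℝ := (2 * (M + 2)) ^ (1 - a2 / a1) * c ^ (a2 / a1) with hc1
  have hc1p : 0 ≤ c1 := by positivity
  set C := (M + 2) ^ 2 + c1 ^ 2 with hC
  obtain ⟨K, hK, hA⟩ := cmp_A4 hW h1 h2 a2 ha2 ha2le has T hT x0 (M + 2) C τ1 (by positivity) hτ1
  refine ⟨K, hK, ?_⟩
  intro τ2 hτ2
  obtain ⟨δ, hδ, hA5⟩ := cmp_A5 hW h1 h2 a2 ha2 ha2le has T hT x0 (M + 2) τ2 hτ2
  -- choose ε
  have hθ : 0 < 1 - a2 / a1 := by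
    have : a2 / a1 < 1 := (div_lt_one ha1).2 ha21
    linarith
  obtain ⟨ε, hε, hε1, hεδ⟩ : ∃ ε : ℝ, 0 < ε ∧ ε ≤ 1 ∧
      (4 * ε) ^ 2 + ((4 * ε) ^ (1 - a2 / a1) * (2 * c) ^ (a2 / a1)) ^ 2 ≤ δ := by
    have hcont : Continuous fun ε : ℝ =>
        (4 * ε) ^ 2 + ((4 * ε) ^ (1 - a2 / a1) * (2 * c) ^ (a2 / a1)) ^ 2 := by
      have : Continuous fun ε : ℝ => (4 * ε) ^ (1 - a2 / a1) :=
        (continuous_const.mul continuous_id).rpow_const (fun _ => Or.inr hθ.le)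
      fun_prop
    have ht := (hcont.tendsto 0).mono_left (nhdsWithin_le_nhds (s := Set.Ioi 0))
    have h0 : (4 * (0 : ℝ)) ^ 2 + ((4 * (0 : ℝ)) ^ (1 - a2 / a1) * (2 * c) ^ (a2 / a1)) ^ 2 = 0 := by
      rw [mul_zero, Real.zero_rpow hθ.ne']; ring
    rw [h0] at ht
    have ev := (ht.eventually (ge_mem_nhds hδ)).and
      (Ioc_mem_nhdsGT (show (0 : ℝ) < 1 by norm_num))
    obtain ⟨ε, he1, he2⟩ := ev.exists
    exact ⟨ε, he2.1, he2.2, he1⟩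
  obtain ⟨L1, hL1, g1, g1M, g1L, g1H, g1b⟩ := supconv bN M c a1 ε hM hc ha1 hε hHol
  obtain ⟨L2, hL2, g2, g2M, g2L, g2H, g2b⟩ := supconv (fun x => - bN x) M c a1 ε
    (fun x => by rw [abs_neg]; exact hM x) hc ha1 hε
    (fun x y => by
      rw [show - bN x - - bN y = -(bN x - bN y) by ring, abs_neg]; exact hHol x y)
  set βp : ℝ → ℝ := fun x => g1 x + ε with hβp
  set βm : ℝ → ℝ := fun x => -(g2 x) - ε with hβm
  have cont_of : ∀ (g : ℝ → ℝ) (L : ℝ), 0 < L → (∀ x y, |g x - g y| ≤ L * |x - y|) →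
      Continuous g := by
    intro g L hL hg
    refine (LipschitzWith.of_dist_le_mul (K := L.toNNReal) fun x y => ?_).continuous
    rw [Real.coe_toNNReal _ hL.le]; exact hg x y
  have mp : Measurable βp := ((cont_of g1 L1 hL1 g1L).add continuous_const).measurable
  have mm : Measurable βm := ((cont_of g2 L2 hL2 g2L).neg.sub continuous_const).measurable
  have pL : ∀ x y, |βp x - βp y| ≤ L1 * |x - y| := by
    intro x y; simp only [hβp]; rw [add_sub_add_right_eq_sub]; exact g1L x y
  have mL : ∀ x y, |βm x - βm y| ≤ L2 * |x - y| := by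
    intro x y; simp only [hβm]
    rw [show -g2 x - ε - (-g2 y - ε) = -(g2 x - g2 y) by ring, abs_neg]; exact g2L x y
  have pH : ∀ x y, |βp x - βp y| ≤ c * |x - y| ^ a1 := by
    intro x y; simp only [hβp]; rw [add_sub_add_right_eq_sub]; exact g1H x y
  have mH : ∀ x y, |βm x - βm y| ≤ c * |x - y| ^ a1 := by
    intro x y; simp only [hβm]
    rw [show -g2 x - ε - (-g2 y - ε) = -(g2 x - g2 y) by ring, abs_neg]; exact g2H x y
  have pM : ∀ x, |βp x| ≤ M + 2 := by
    intro x
    have := abs_le.1 (g1M x)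
    simp only [hβp]
    rw [abs_le]; constructor <;> linarith [this.1, this.2]
  have p1 : ∀ x, bN x + ε ≤ βp x := by intro x; simp only [hβp]; linarith [(g1b x).1]
  have p2 : ∀ x, βp x ≤ bN x + 2 * ε := by intro x; simp only [hβp]; linarith [(g1b x).2]
  have m1 : ∀ x, βm x ≤ bN x - ε := by intro x; simp only [hβm]; linarith [(g2b x).1]
  have m2 : ∀ x, bN x - 2 * ε ≤ βm x := by intro x; simp only [hβm]; linarith [(g2b x).2]
  have pI : ∀ x y, |βp x - βp y| ≤ c1 * |x - y| ^ a2 := by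
    intro x y
    apply holder_interp _ _ _ _ a1 a2 (abs_nonneg _) _ (pH x y) hc (abs_nonneg _) ha2 ha21
    have q1 := abs_le.1 (pM x)
    have q2 := abs_le.1 (pM y)
    rw [abs_le]; constructor <;> linarith [q1.1, q1.2, q2.1, q2.2]
  have dM : ∀ x, |βp x - βm x| ≤ 4 * ε := by
    intro x
    rw [abs_le]; constructor <;> linarith [p1 x, p2 x, m1 x, m2 x]
  have dI : ∀ x y, |(βp x - βm x) - (βp y - βm y)| ≤
      (4 * ε) ^ (1 - a2 / a1) * (2 * c) ^ (a2 / a1) * |x - y| ^ a2 := by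
    intro x y
    apply holder_interp _ _ _ _ a1 a2 (abs_nonneg _) _ _ (by positivity) (abs_nonneg _) ha2 ha21
    · rw [abs_le]; constructor <;> linarith [p1 x, p2 x, m1 x, m2 x, p1 y, p2 y, m1 y, m2 y]
    · have q1 := abs_le.1 (pH x y)
      have q2 := abs_le.1 (mH x y)
      rw [abs_le]; constructor <;> linarith [q1.1, q1.2, q2.1, q2.2]
  obtain ⟨k, hk⟩ := exists_nat_gt (T * (L1 + L2))
  have hmono : ∀ n : ℕ, k + 1 ≤ n → 0 < T / n ∧ (n : ℝ) * (T / n) = T ∧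
      (Monotone fun y => y + T / n * βp y) ∧ (Monotone fun y => y + T / n * βm y) := by
    intro n hn
    have hn' : (k : ℝ) < n := by exact_mod_cast hn
    have hn0 : (0 : ℝ) < n := lt_of_le_of_lt (Nat.cast_nonneg k) hn'
    refine ⟨by positivity, by field_simp, ?_, ?_⟩
    · apply lip_mono _ L1 (by positivity) _ _ pL
      rw [div_mul_eq_mul_div, div_le_one hn0]; nlinarith
    · apply lip_mono _ L2 (by positivity) _ _ mL
      rw [div_mul_eq_mul_div, div_le_one hn0]; nlinarith
  refine ⟨βp, βm, mp, mm, ⟨k + 1, by omega, ?_⟩, ?_⟩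
  · intro n hn
    obtain ⟨hh, hnh, hmp, hmm⟩ := hmono n hn
    refine ⟨?_, ?_⟩
    · intro G hG hG0 hG1
      have hPm : ∀ β : ℝ → ℝ, Measurable β → Measurable fun ω => G (Pth W n x0 (T / n) β ω) :=
        fun β hβ => hG.comp ((measurable_SF n x0 _ hβ).comp (measurable_incrW hW n _))
      have lp := lint_of_bdd (P := P) _ (hPm βp mp) (fun _ => hG0 _) (fun _ => hG1 _)
      have lm := lint_of_bdd (P := P) _ (hPm βm mm) (fun _ => hG0 _) (fun _ => hG1 _)
      have l0 := lint_of_bdd (P := P) _ (hPm (fun _ => 0) measurable_const) (fun _ => hG0 _)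
        (fun _ => hG1 _)
      have nn : ∀ β : ℝ → ℝ, 0 ≤ ∫ ω, G (Pth W n x0 (T / n) β ω) ∂P :=
        fun β => integral_nonneg fun _ => hG0 _
      have hGE : Measurable fun x => ENNReal.ofReal (G x) := hG.ennreal_ofReal
      have hGE1 : ∀ x, ENNReal.ofReal (G x) ≤ 1 := fun x => by
        rw [ENNReal.ofReal_le_one]; exact hG1 x
      refine ⟨?_, ?_, ?_⟩
      · have := hA n (T / n) hh hnh βp (fun _ => 0) mp measurable_const pM (M + 2) c1 hc1p
          (fun x => by rw [sub_zero]; exact pM x)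
          (fun x y => by rw [sub_zero, sub_zero]; exact pI x y) le_rfl _ hGE hGE1
        rw [lp.2, l0.2] at this
        exact real_of_enn _ _ _ _ (nn _) (nn _) (exp_pos _).le hτ1.le this
      · have := hA n (T / n) hh hnh (fun _ => 0) βp measurable_const mp
          (fun x => by rw [abs_zero]; positivity) (M + 2) c1 hc1p
          (fun x => by rw [zero_sub, abs_neg]; exact pM x)
          (fun x y => by
            rw [show (0 - βp x) - (0 - βp y) = -(βp x - βp y) by ring, abs_neg]; exact pI x y)
          le_rfl _ hGE hGE1
        rw [lp.2, l0.2] at this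
        exact real_of_enn _ _ _ _ (nn _) (nn _) (exp_pos _).le hτ1.le this
      · have := hA5 n (T / n) hh hnh βp βm mp mm pM (4 * ε) _ (by positivity) dM dI hεδ _ hGE hGE1
        rw [lp.2, lm.2] at this
        have := real_of_enn _ _ 1 _ (nn _) (nn _) zero_le_one hτ2.le (by
          rw [ENNReal.ofReal_one, one_mul]; exact this)
        linarith
    · intro ω i
      exact Sch_mono x0 _ hh.le βp βm _ hmp (fun x => by linarith [p1 x, m1 x]) _
  · intro ω hX hW0 heq
    obtain ⟨n1, hn1, hst⟩ := one_step x0 T hT b bN βp βm hb (fun t => X t ω) (fun t => W t ω)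
      R c a1 ε hbN hc ha1 hε hHol p1 m1 hX heq
    refine ⟨max n1 (k + 1), ?_⟩
    intro n hn hgood i
    obtain ⟨hh, hnh, hmp, hmm⟩ := hmono n ((le_max_right _ _).trans hn)
    have hst' := hst n ((le_max_left _ _).trans hn)
    have hX0 : X 0 ω = x0 := by
      have := heq 0 ⟨le_rfl, hT.le⟩
      simpa [hW0] using this
    exact sandwich_det x0 (T / n) R n βp βm (fun i => X ((i : ℝ) * (T / n)) ω)
      (extF (incrW W n (T / n) ω)) (by simpa using hX0) hmp hmm
      (by
        intro j hj hjR
        have := hst' j hj hjR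
        simp only [extF, hj, dite_true, incrW]
        exact this)
      (by
        intro j hj q1 q2
        exact hgood ⟨j, by omega⟩ q1 q2) i (by omega)

end PartE2


section PartF
set_option linter.unusedSectionVars false
open scoped ENNReal NNReal Topology
open Filter

variable {Ω : Type*} [MeasurableSpace Ω]

noncomputable def gidx (T : ℝ) (n : ℕ) (t : ℝ) : Fin (n + 1) :=
  ⟨min n ⌊t / (T / n)⌋₊, by omega⟩

noncomputable def gtime (T : ℝ) (n : ℕ) (t : ℝ) : ℝ := ((gidx T n t : ℕ) : ℝ) * (T / n)

theorem grid_mem (T : ℝ) (hT : 0 < T) (n : ℕ) (i : Fin (n + 1)) :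
    ((i : ℕ) : ℝ) * (T / n) ∈ Set.Icc 0 T := by
  refine ⟨by positivity, ?_⟩
  rcases Nat.eq_zero_or_pos n with h | h
  · subst h; simp [hT.le]
  · have hn : (0 : ℝ) < n := by exact_mod_cast h
    have : ((i : ℕ) : ℝ) ≤ n := by exact_mod_cast Nat.lt_succ_iff.1 i.2
    rw [← mul_div_assoc, div_le_iff₀ hn]
    nlinarith

theorem gtime_tendsto (T : ℝ) (hT : 0 < T) (t : ℝ) (ht : t ∈ Set.Icc 0 T) :
    Tendsto (fun n => gtime T n t) atTop (𝓝[Set.Icc 0 T] t) := by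
  apply tendsto_nhdsWithin_iff.2
  refine ⟨?_, Eventually.of_forall fun n => grid_mem T hT n _⟩
  have h1 : Tendsto (fun n : ℕ => t - T / n) atTop (𝓝 t) := by
    have := (tendsto_const_nhds (x := t)).sub (tendsto_const_div_atTop_nhds_zero_nat T)
    simpa using this
  refine tendsto_of_tendsto_of_tendsto_of_le_of_le' h1 tendsto_const_nhds ?_ ?_
  all_goals
    filter_upwards [eventually_ge_atTop 1] with n hn
    have hn0 : (0 : ℝ) < n := by exact_mod_cast hn
    have hh : 0 < T / n := by positivity
    have hle : ⌊t / (T / n)⌋₊ ≤ n := by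
      apply Nat.floor_le_of_le
      rw [div_le_iff₀ hh]
      have : (n : ℝ) * (T / n) = T := by field_simp
      rw [this]; exact ht.2
    simp only [gtime, gidx, min_eq_right hle]
  · have := Nat.lt_floor_add_one (t / (T / n))
    rw [div_lt_iff₀ hh] at this
    linarith
  · have := Nat.floor_le (div_nonneg ht.1 hh.le)
    rw [le_div_iff₀ hh] at this
    exact this

theorem conv_F {P : Measure Ω} [IsProbabilityMeasure P] (T : ℝ) (hT : 0 < T) (Z : ℝ → Ω → ℝ)
    (hZ : ∀ t, Measurable (Z t)) (hZc : ∀ᵐ ω ∂P, ContinuousOn (fun t => Z t ω) (Set.Icc (0 : ℝ) T))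
    (m : ℕ) (t : Fin m → ℝ) (ht : ∀ j, t j ∈ Set.Icc 0 T) (F : (Fin m → ℝ) → ℝ) (hF : Continuous F)
    (hF0 : ∀ x, 0 ≤ F x) (hF1 : ∀ x, F x ≤ 1) :
    Tendsto (fun n => ∫ ω, F (fun j => arctan (Z (gtime T n (t j)) ω)) ∂P) atTop
      (𝓝 (∫ ω, F (fun j => arctan (Z (t j) ω)) ∂P)) := by
  apply tendsto_integral_of_dominated_convergence (fun _ => 1)
  · intro n
    refine (hF.measurable.comp ?_).aestronglyMeasurable
    rw [measurable_pi_iff]; intro j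
    exact (hZ _).arctan
  · exact integrable_const _
  · intro n
    refine Eventually.of_forall fun ω => ?_
    rw [Real.norm_eq_abs, abs_of_nonneg (hF0 _)]; exact hF1 _
  · filter_upwards [hZc] with ω hω
    apply (hF.tendsto _).comp
    rw [tendsto_pi_nhds]
    intro j
    apply (continuous_arctan.tendsto _).comp
    exact (hω (t j) (ht j)).tendsto.comp (gtime_tendsto T hT (t j) (ht j))

theorem ev_null {P : Measure Ω} [IsProbabilityMeasure P] (B : ℕ → Set Ω)
    (hB : ∀ n, MeasurableSet (B n)) (h : ∀ᵐ ω ∂P, ∀ᶠ n in atTop, ω ∉ B n) :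
    Tendsto (fun n => ∫ ω, (B n).indicator (fun _ => (1 : ℝ)) ω ∂P) atTop (𝓝 0) := by
  have := tendsto_integral_of_dominated_convergence (μ := P)
    (F := fun n ω => (B n).indicator (fun _ => (1 : ℝ)) ω) (f := fun _ => 0) (fun _ => 1)
    (fun n => (measurable_const.indicator (hB n)).aestronglyMeasurable) (integrable_const _)
    (fun n => Eventually.of_forall fun ω => by
      by_cases hω : ω ∈ B n <;> simp [hω])
    (by
      filter_upwards [h] with ω hω
      apply tendsto_const_nhds.congr'
      filter_upwards [hω] with n hn
      simp [hn])
  simpa using this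

def gridBad (T : ℝ) (Z : ℝ → Ω → ℝ) (R : ℝ) : Set Ω :=
  {ω | ∃ n : ℕ, ∃ i : Fin (n + 1), R < |Z (((i : ℕ) : ℝ) * (T / n)) ω|}

theorem meas_gridBad (T : ℝ) (Z : ℝ → Ω → ℝ) (hZ : ∀ t, Measurable (Z t)) (R : ℝ) :
    MeasurableSet (gridBad T Z R) := by
  have : gridBad T Z R = ⋃ n : ℕ, ⋃ i : Fin (n + 1),
      {ω | R < |Z (((i : ℕ) : ℝ) * (T / n)) ω|} := by
    ext ω; simp [gridBad]
  rw [this]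
  refine MeasurableSet.iUnion fun n => MeasurableSet.iUnion fun i => ?_
  exact measurableSet_lt measurable_const (hZ _).abs

theorem gridBad_small {P : Measure Ω} [IsProbabilityMeasure P] (T : ℝ) (hT : 0 < T)
    (Z : ℝ → Ω → ℝ)
    (hZ : ∀ t, Measurable (Z t)) (hZc : ∀ᵐ ω ∂P, ContinuousOn (fun t => Z t ω) (Set.Icc (0 : ℝ) T))
    (τ : ℝ) (hτ : 0 < τ) : ∃ R0 : ℝ, ∀ R, R0 ≤ R →
      ∫ ω, (gridBad T Z R).indicator (fun _ => (1 : ℝ)) ω ∂P ≤ τ := by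
  have ht := ev_null (P := P) (fun k : ℕ => gridBad T Z k) (fun k => meas_gridBad T Z hZ k) (by
    filter_upwards [hZc] with ω hω
    obtain ⟨C, hC⟩ := isCompact_Icc.exists_bound_of_continuousOn hω
    obtain ⟨k, hk⟩ := exists_nat_ge C
    filter_upwards [eventually_ge_atTop k] with l hl
    rintro ⟨n, i, hi⟩
    have h1 := hC _ (grid_mem T hT n i)
    rw [Real.norm_eq_abs] at h1
    have : (k : ℝ) ≤ l := by exact_mod_cast hl
    linarith)
  obtain ⟨k, hk⟩ := (ht.eventually (ge_mem_nhds hτ)).exists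
  refine ⟨k, fun R hR => le_trans ?_ hk⟩
  apply integral_mono_of_nonneg
  · exact Eventually.of_forall fun ω => Set.indicator_nonneg (fun _ _ => zero_le_one) _
  · exact (integrable_const (1 : ℝ)).indicator (meas_gridBad T Z hZ _)
  · refine Eventually.of_forall fun ω => ?_
    apply Set.indicator_le_indicator_of_subset
    · rintro ω ⟨n, i, hi⟩
      exact ⟨n, i, lt_of_le_of_lt hR hi⟩
    · intro _; exact zero_le_one

theorem Sch_zero (x0 h : ℝ) (w : ℕ → ℝ) (i : ℕ) :
    Sch x0 h (fun _ => 0) w i = x0 + ∑ l ∈ Finset.range i, w l := by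
  induction i with
  | zero => simp [Sch]
  | succ k ih => simp only [Sch]; rw [ih, Finset.sum_range_succ]; ring

theorem Pth_zero (W : ℝ → Ω → ℝ) (n : ℕ) (x0 h : ℝ) (ω : Ω) (hW0 : W 0 ω = 0) (i : Fin (n + 1)) :
    Pth W n x0 h (fun _ => 0) ω i = x0 + W (((i : ℕ) : ℝ) * h) ω := by
  unfold Pth SF
  rw [Sch_zero]
  have := sum_extF_incr W n h ω 0 i (by omega)
  simp only [zero_add, Nat.cast_zero, zero_mul, hW0, sub_zero] at this
  rw [this]

end PartF


section PartF2
set_option linter.unusedSectionVars false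
open scoped ENNReal NNReal Topology
open Filter

variable {Ω : Type*} [MeasurableSpace Ω]

theorem lip_est (m : ℕ) (F : (Fin m → ℝ) → ℝ) (Λ : ℝ≥0) (hF : LipschitzWith Λ F)
    (l x u : Fin m → ℝ) (h1 : ∀ j, l j ≤ x j) (h2 : ∀ j, x j ≤ u j) :
    |F (fun j => arctan (x j)) - F (fun j => arctan (u j))| ≤
      Λ * ∑ j, (arctan (u j) - arctan (l j)) := by
  have hd := hF.dist_le_mul (fun j => arctan (x j)) (fun j => arctan (u j))
  rw [Real.dist_eq] at hd
  refine hd.trans (mul_le_mul_of_nonneg_left ?_ Λ.2)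
  have nn : ∀ j, 0 ≤ arctan (u j) - arctan (l j) := fun j =>
    sub_nonneg.2 (arctan_strictMono.monotone ((h1 j).trans (h2 j)))
  rw [dist_pi_le_iff (Finset.sum_nonneg fun j _ => nn j)]
  intro j
  rw [Real.dist_eq, abs_sub_comm, abs_of_nonneg (sub_nonneg.2 (arctan_strictMono.monotone (h2 j)))]
  have a1 : arctan (l j) ≤ arctan (x j) := arctan_strictMono.monotone (h1 j)
  have := Finset.single_le_sum (f := fun j => arctan (u j) - arctan (l j)) (fun j _ => nn j)
    (Finset.mem_univ j)
  linarith

theorem int4 {P : Measure Ω} {f g h k : Ω → ℝ} (hf : Integrable f P) (hg : Integrable g P)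
    (hh : Integrable h P) (hk : Integrable k P) :
    Integrable (fun ω => f ω + g ω + h ω + k ω) P ∧
    ∫ ω, (f ω + g ω + h ω + k ω) ∂P =
      ∫ ω, f ω ∂P + ∫ ω, g ω ∂P + ∫ ω, h ω ∂P + ∫ ω, k ω ∂P := by
  have a1 : Integrable (fun ω => f ω + g ω) P := hf.add hg
  have a2 : Integrable (fun ω => f ω + g ω + h ω) P := a1.add hh
  refine ⟨a2.add hk, ?_⟩
  rw [integral_add a2 hk, integral_add a1 hh, integral_add hf hg]

theorem dirs {P : Measure Ω} [IsProbabilityMeasure P] {H : ℝ} {W : ℝ → Ω → ℝ}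
    (hW : IsFractionalBM P H W) (h1 : 1 / 2 < H) (h2 : H < 1) (x0 T : ℝ) (hT : 0 < T)
    (b : ℝ → ℝ) (hb : Continuous b)
    (hbloc : ∀ K : Set ℝ, IsCompact K → ∃ M : ℝ, ∀ x ∈ K, |b x| ≤ M)
    (α : ℝ) (hα : 2 - 1 / H < α)
    (hbHolder : ∀ K : Set ℝ, IsCompact K → ∃ c : ℝ, 0 ≤ c ∧
      ∀ x ∈ K, ∀ y ∈ K, |b x - b y| ≤ c * |x - y| ^ α)
    (X : ℝ → Ω → ℝ) (hXm : ∀ t, Measurable (X t))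
    (hXc : ∀ᵐ ω ∂P, ContinuousOn (fun t => X t ω) (Set.Icc (0 : ℝ) T))
    (hXeq : ∀ᵐ ω ∂P, ∀ t ∈ Set.Icc (0 : ℝ) T,
      X t ω = x0 + W t ω + ∫ s in (0 : ℝ)..t, b (X s ω))
    (τ : ℝ) (hτ : 0 < τ) :
    ∃ K : ℝ, 0 ≤ K ∧ ∀ (m : ℕ) (t : Fin m → ℝ), (∀ j, t j ∈ Set.Icc 0 T) →
      ∀ (F : (Fin m → ℝ) → ℝ) (Λ : ℝ≥0), LipschitzWith Λ F → (∀ x, 0 ≤ F x) → (∀ x, F x ≤ 1) →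
      ∫ ω, F (fun j => arctan (X (t j) ω)) ∂P ≤
        exp K * ∫ ω, F (fun j => arctan (x0 + W (t j) ω)) ∂P + τ ∧
      ∫ ω, F (fun j => arctan (x0 + W (t j) ω)) ∂P ≤
        exp K * ∫ ω, F (fun j => arctan (X (t j) ω)) ∂P + τ := by
  set Y : ℝ → Ω → ℝ := fun t ω => x0 + W t ω with hY
  have hYm : ∀ t, Measurable (Y t) := fun t => (hW.1 t).const_add x0
  have hYc : ∀ᵐ ω ∂P, ContinuousOn (fun t => Y t ω) (Set.Icc (0 : ℝ) T) := by
    filter_upwards [hW.2.1] with ω hω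
    exact continuousOn_const.add (hω.1.mono fun x hx => hx.1)
  obtain ⟨RX, hRX⟩ := gridBad_small (P := P) T hT X hXm hXc (τ / 8) (by positivity)
  obtain ⟨RY, hRY⟩ := gridBad_small (P := P) T hT Y hYm hYc (τ / 8) (by positivity)
  set R := max 0 (max RX RY) with hRdef
  have hR : 0 ≤ R := le_max_left _ _
  have hPX := hRX R ((le_max_left _ _).trans (le_max_right _ _))
  have hPY := hRY R ((le_max_right _ _).trans (le_max_right _ _))
  obtain ⟨K, hK, hpk⟩ := package hW h1 h2 x0 T hT b hb hbloc α hα hbHolder X R hR (τ / 8)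
    (by positivity)
  refine ⟨K, hK, ?_⟩
  intro m t ht F Λ hF hF0 hF1
  set τ2 : ℝ := (τ / 8) * exp (-K) / (Λ * (m * π) + 1) with hτ2
  have hΛ : (0 : ℝ) ≤ Λ := Λ.2
  have hden : 0 < (Λ : ℝ) * (m * π) + 1 := by positivity
  have htauTwoPos : 0 < τ2 := by positivity
  have htauTwoExp : exp K * (Λ * (m * π) * τ2 + τ2) = τ / 8 := by
    have : Λ * (m * π) * τ2 + τ2 = (τ / 8) * exp (-K) := by
      rw [hτ2]; field_simp
    rw [this, exp_neg]; field_simp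
  have hexp1 : 1 ≤ exp K := one_le_exp hK
  have htauTwoSmall : Λ * (m * π) * τ2 ≤ τ / 8 := by
    have : 0 ≤ Λ * (m * π) * τ2 := by positivity
    nlinarith
  obtain ⟨βp, βm, mp, mm, ⟨n0, hn0, hcmp⟩, hsand⟩ := hpk τ2 htauTwoPos
  -- abbreviations
  set Sp : (n : ℕ) → Ω → Fin (n + 1) → ℝ := fun n => Pth W n x0 (T / n) βp with hSp
  set Sm : (n : ℕ) → Ω → Fin (n + 1) → ℝ := fun n => Pth W n x0 (T / n) βm with hSm
  set S0 : (n : ℕ) → Ω → Fin (n + 1) → ℝ := fun n => Pth W n x0 (T / n) (fun _ => 0) with hS0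
  have mPth : ∀ n (β : ℝ → ℝ), Measurable β → Measurable (Pth W n x0 (T / n) β) :=
    fun n β hβ => (measurable_SF n x0 _ hβ).comp (measurable_incrW hW n _)
  have mSp : ∀ n, Measurable (Sp n) := fun n => mPth n βp mp
  have mSm : ∀ n, Measurable (Sm n) := fun n => mPth n βm mm
  have mSpi : ∀ n i, Measurable fun ω => Sp n ω i := fun n i => (measurable_pi_apply i).comp (mSp n)
  have mSmi : ∀ n i, Measurable fun ω => Sm n ω i := fun n i => (measurable_pi_apply i).comp (mSm n)
  set xg : (n : ℕ) → Ω → Fin (n + 1) → ℝ := fun n ω i => X (((i : ℕ) : ℝ) * (T / n)) ω with hxg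
  have mxg : ∀ n i, Measurable fun ω => xg n ω i := fun n i => hXm _
  set B : ℕ → Set Ω := fun n => {ω | (∀ i, Sm n ω i ≤ xg n ω i → xg n ω i ≤ Sp n ω i →
    |xg n ω i| ≤ R) ∧ ¬ ∀ i, Sm n ω i ≤ xg n ω i ∧ xg n ω i ≤ Sp n ω i} with hB
  have mB : ∀ n, MeasurableSet (B n) := by
    intro n
    have p1 : ∀ i, Measurable fun ω => Sm n ω i ≤ xg n ω i := fun i =>
      measurableSet_setOfPred.1 (measurableSet_le (mSmi n i) (mxg n i))
    have p2 : ∀ i, Measurable fun ω => xg n ω i ≤ Sp n ω i := fun i =>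
      measurableSet_setOfPred.1 (measurableSet_le (mxg n i) (mSpi n i))
    have p3 : ∀ i, Measurable fun ω => |xg n ω i| ≤ R := fun i =>
      measurableSet_setOfPred.1 (measurableSet_le (mxg n i).abs measurable_const)
    apply measurableSet_setOfPred.2
    exact (Measurable.forall fun i => (p1 i).imp ((p2 i).imp (p3 i))).and
      (Measurable.forall fun i => (p1 i).and (p2 i)).not
  have hBn : Tendsto (fun n => ∫ ω, (B n).indicator (fun _ => (1 : ℝ)) ω ∂P) atTop (𝓝 0) := by
    apply ev_null B mB
    filter_upwards [hXc, hXeq, hW.2.1] with ω w1 w2 w3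
    obtain ⟨n1, hn1⟩ := hsand ω w1 w3.2 w2
    filter_upwards [eventually_ge_atTop n1] with n hn
    rintro ⟨q1, q2⟩
    exact q2 (hn1 n hn q1)
  have iB : ∀ n, Integrable ((B n).indicator (fun _ => (1 : ℝ))) P := fun n =>
    (integrable_const (1 : ℝ)).indicator (mB n)
  have iGX : Integrable ((gridBad T X R).indicator (fun _ => (1 : ℝ))) P :=
    (integrable_const (1 : ℝ)).indicator (meas_gridBad T X hXm R)
  have iGY : Integrable ((gridBad T Y R).indicator (fun _ => (1 : ℝ))) P :=
    (integrable_const (1 : ℝ)).indicator (meas_gridBad T Y hYm R)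
  have B0 : ∀ (A : Set Ω) ω, 0 ≤ A.indicator (fun _ => (1 : ℝ)) ω := fun A ω =>
    Set.indicator_nonneg (fun _ _ => zero_le_one) _
  -- test functionals on paths
  set Φ : (n : ℕ) → (Fin (n + 1) → ℝ) → ℝ := fun n p => F (fun j => arctan (p (gidx T n (t j))))
    with hΦ
  have mΦ : ∀ n, Measurable (Φ n) := by
    intro n
    refine hF.continuous.measurable.comp ?_
    rw [measurable_pi_iff]; intro j
    exact (measurable_pi_apply _).arctan
  have iΦ : ∀ (n) (Z : Ω → Fin (n + 1) → ℝ), Measurable Z → Integrable (fun ω => Φ n (Z ω)) P :=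
    fun n Z hZ => (lint_of_bdd (P := P) _ ((mΦ n).comp hZ) (fun _ => hF0 _) (fun _ => hF1 _)).1
  have mxg' : ∀ n, Measurable (xg n) := fun n => measurable_pi_iff.2 (mxg n)
  -- Delta
  set Δ : ℕ → Ω → ℝ := fun n ω => ∑ j, (arctan (Sp n ω (gidx T n (t j))) -
    arctan (Sm n ω (gidx T n (t j)))) with hΔ
  have iat : ∀ f : Ω → ℝ, Measurable f → Integrable (fun ω => arctan (f ω)) P := by
    intro f hf
    refine Integrable.of_bound hf.arctan.aestronglyMeasurable (π / 2)
      (Eventually.of_forall fun ω => ?_)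
    rw [Real.norm_eq_abs, abs_le]
    exact ⟨(neg_pi_div_two_lt_arctan _).le, (arctan_lt_pi_div_two _).le⟩
  have iΔ : ∀ n, Integrable (Δ n) P := fun n =>
    integrable_finsetSum _ fun j _ => (iat _ (mSpi n _)).sub (iat _ (mSmi n _))
  have hΔint : ∀ n, n0 ≤ n → ∫ ω, Δ n ω ∂P ≤ m * π * τ2 := by
    intro n hn
    simp only [hΔ]
    have hsub : ∀ j, Integrable (fun ω => arctan (Sp n ω (gidx T n (t j))) -
        arctan (Sm n ω (gidx T n (t j)))) P := fun j => (iat _ (mSpi n _)).sub (iat _ (mSmi n _))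
    rw [integral_finsetSum _ fun j _ => hsub j]
    have hj : ∀ j ∈ Finset.univ, ∫ ω, (arctan (Sp n ω (gidx T n (t j))) -
        arctan (Sm n ω (gidx T n (t j)))) ∂P ≤ π * τ2 := by
      intro j _
      rw [integral_sub (iat _ (mSpi n _)) (iat _ (mSmi n _))]
      have := ((hcmp n hn).1 (fun p => (arctan (p (gidx T n (t j))) + π / 2) / π)
        ((((measurable_pi_apply _).arctan).add_const _).div_const _)
        (fun x => div_nonneg (by linarith [neg_pi_div_two_lt_arctan (x (gidx T n (t j)))]) pi_pos.le)
        (fun x => by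
          rw [div_le_one pi_pos]; linarith [arctan_lt_pi_div_two (x (gidx T n (t j)))])).2.2
      rw [integral_div, integral_div, integral_add (iat _ (mSpi n _)) (integrable_const _),
        integral_add (iat _ (mSmi n _)) (integrable_const _)] at this
      rw [div_add' _ _ _ pi_pos.ne', div_le_div_iff_of_pos_right pi_pos] at this
      simp only [hSp, hSm]
      linarith
    have := Finset.sum_le_sum hj
    rw [Finset.sum_const, Finset.card_univ, Fintype.card_fin, nsmul_eq_mul] at this
    linarith
  have hord : ∀ n, n0 ≤ n → ∀ ω i, Sm n ω i ≤ Sp n ω i := fun n hn => (hcmp n hn).2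
  have Δ0 : ∀ n, n0 ≤ n → ∀ ω, 0 ≤ Δ n ω := fun n hn ω => Finset.sum_nonneg fun j _ =>
    sub_nonneg.2 (arctan_strictMono.monotone (hord n hn ω _))
  have hcX := conv_F (P := P) T hT X hXm hXc m t ht F hF.continuous hF0 hF1
  have hcY := conv_F (P := P) T hT Y hYm hYc m t ht F hF.continuous hF0 hF1
  have eY : ∀ n, ∫ ω, F (fun j => arctan (Y (gtime T n (t j)) ω)) ∂P = ∫ ω, Φ n (S0 n ω) ∂P := by
    intro n
    apply integral_congr_ae
    filter_upwards [hW.2.1] with ω hω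
    simp only [hΦ, hS0]
    congr 1; ext j
    rw [Pth_zero W n x0 _ ω hω.2]
    rfl
  have eX : ∀ n, ∫ ω, F (fun j => arctan (X (gtime T n (t j)) ω)) ∂P = ∫ ω, Φ n (xg n ω) ∂P :=
    fun n => rfl
  constructor
  · -- direction 1
    have hineq : ∀ᶠ n in atTop, ∫ ω, F (fun j => arctan (X (gtime T n (t j)) ω)) ∂P ≤
        exp K * ∫ ω, F (fun j => arctan (Y (gtime T n (t j)) ω)) ∂P + 3 * (τ / 8) +
          ∫ ω, (B n).indicator (fun _ => (1 : ℝ)) ω ∂P := by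
      filter_upwards [eventually_ge_atTop n0] with n hn
      rw [eX, eY]
      have hpt : ∀ ω, Φ n (xg n ω) ≤ Φ n (Sp n ω) + Λ * Δ n ω +
          (gridBad T X R).indicator (fun _ => (1 : ℝ)) ω + (B n).indicator (fun _ => (1 : ℝ)) ω := by
        intro ω
        have z1 : 0 ≤ Φ n (Sp n ω) := hF0 _
        have z2 : Φ n (xg n ω) ≤ 1 := hF1 _
        have z3 : 0 ≤ Λ * Δ n ω := mul_nonneg hΛ (Δ0 n hn ω)
        have z4 := B0 (B n) ω
        have z5 := B0 (gridBad T X R) ω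
        by_cases hs : ∀ i, Sm n ω i ≤ xg n ω i ∧ xg n ω i ≤ Sp n ω i
        · have := lip_est m F Λ hF (fun j => Sm n ω (gidx T n (t j)))
            (fun j => xg n ω (gidx T n (t j))) (fun j => Sp n ω (gidx T n (t j)))
            (fun j => (hs _).1) (fun j => (hs _).2)
          have := (abs_le.1 this).2
          simp only [hΦ, hΔ] at *
          linarith
        · by_cases hg : ∀ i, Sm n ω i ≤ xg n ω i → xg n ω i ≤ Sp n ω i → |xg n ω i| ≤ R
          · have : ω ∈ B n := ⟨hg, hs⟩
            have : (B n).indicator (fun _ => (1 : ℝ)) ω = 1 := Set.indicator_of_mem this _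
            linarith
          · push Not at hg
            obtain ⟨i, _, _, hi⟩ := hg
            have : ω ∈ gridBad T X R := ⟨n, i, hi⟩
            have : (gridBad T X R).indicator (fun _ => (1 : ℝ)) ω = 1 := Set.indicator_of_mem this _
            linarith
      have j1 := iΦ n _ (mSp n)
      have j2 := (iΔ n).const_mul (Λ : ℝ)
      have := integral_mono (iΦ n _ (mxg' n)) (int4 j1 j2 iGX (iB n)).1 hpt
      rw [(int4 j1 j2 iGX (iB n)).2, integral_const_mul] at this
      have c1 := ((hcmp n hn).1 (Φ n) (mΦ n) (fun _ => hF0 _) (fun _ => hF1 _)).1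
      have c2 := mul_le_mul_of_nonneg_left (hΔint n hn) hΛ
      simp only [hSp, hS0] at *
      linarith
    have hlim := le_of_tendsto_of_tendsto hcX (((hcY.const_mul (exp K)).add_const _).add hBn) hineq
    linarith
  · -- direction 2
    have hineq : ∀ᶠ n in atTop, ∫ ω, F (fun j => arctan (Y (gtime T n (t j)) ω)) ∂P ≤
        exp K * (∫ ω, F (fun j => arctan (X (gtime T n (t j)) ω)) ∂P +
          ∫ ω, (B n).indicator (fun _ => (1 : ℝ)) ω ∂P) + 3 * (τ / 8) := by
      filter_upwards [eventually_ge_atTop n0] with n hn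
      rw [eX, eY]
      set good : Set (Fin (n + 1) → ℝ) := {p | ∀ i, |p i| ≤ R} with hgood
      have mgood : MeasurableSet good := by
        apply measurableSet_setOfPred.2
        exact Measurable.forall fun i => measurableSet_setOfPred.1
          (measurableSet_le (measurable_pi_apply i).abs measurable_const)
      set low : Set (Fin (n + 1) → ℝ) := {p | ∀ i, -R ≤ p i} with hlow
      have mlow : MeasurableSet low := by
        apply measurableSet_setOfPred.2
        exact Measurable.forall fun i => measurableSet_setOfPred.1
          (measurableSet_le measurable_const (measurable_pi_apply i))
      set Φ2 : (Fin (n + 1) → ℝ) → ℝ := good.indicator (Φ n) with hΦ2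
      have mΦ2 : Measurable Φ2 := (mΦ n).indicator mgood
      have Φ20 : ∀ x, 0 ≤ Φ2 x := fun x => Set.indicator_nonneg (fun _ _ => hF0 _) _
      have hPhiTwoLe : ∀ x, Φ2 x ≤ Φ n x := fun x => Set.indicator_le_self' (fun _ _ => hF0 _) x
      have Φ21 : ∀ x, Φ2 x ≤ 1 := fun x => (hPhiTwoLe x).trans (hF1 _)
      set q : (Fin (n + 1) → ℝ) → ℝ := low.indicator (fun _ => 1) with hq
      have mq : Measurable q := measurable_const.indicator mlow
      have q0 : ∀ x, 0 ≤ q x := fun x => Set.indicator_nonneg (fun _ _ => zero_le_one) _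
      have q1 : ∀ x, q x ≤ 1 := fun x => Set.indicator_le_self' (fun _ _ => zero_le_one) x
      have int_of : ∀ (g : (Fin (n + 1) → ℝ) → ℝ) (Z : Ω → Fin (n + 1) → ℝ), Measurable g →
          Measurable Z → (∀ x, 0 ≤ g x) → (∀ x, g x ≤ 1) → Integrable (fun ω => g (Z ω)) P :=
        fun g Z hg hZ g0 g1 =>
          (lint_of_bdd (P := P) _ (hg.comp hZ) (fun _ => g0 _) (fun _ => g1 _)).1
      have mS0 : Measurable (S0 n) := mPth n _ measurable_const
      -- step 1
      have s1 : ∫ ω, Φ n (S0 n ω) ∂P ≤ ∫ ω, Φ2 (S0 n ω) ∂P + τ / 8 := by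
        have k1 := int_of Φ2 _ mΦ2 mS0 Φ20 Φ21
        have hpt : ∀ᵐ ω ∂P, Φ n (S0 n ω) ≤ Φ2 (S0 n ω) +
            (gridBad T Y R).indicator (fun _ => (1 : ℝ)) ω := by
          filter_upwards [hW.2.1] with ω hω
          by_cases hg : S0 n ω ∈ good
          · have : Φ2 (S0 n ω) = Φ n (S0 n ω) := Set.indicator_of_mem hg _
            linarith [B0 (gridBad T Y R) ω]
          · have hmem : ω ∈ gridBad T Y R := by
              simp only [hgood, Set.mem_setOf_eq, not_forall, not_le] at hg
              obtain ⟨i, hi⟩ := hg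
              refine ⟨n, i, ?_⟩
              simp only [hS0] at hi
              rw [Pth_zero W n x0 _ ω hω.2] at hi
              exact hi
            have : (gridBad T Y R).indicator (fun _ => (1 : ℝ)) ω = 1 :=
              Set.indicator_of_mem hmem _
            rw [this]
            have z2 : Φ n (S0 n ω) ≤ 1 := hF1 _
            linarith [Φ20 (S0 n ω)]
        have := integral_mono_ae (iΦ n _ mS0) (k1.add iGY) hpt
        have e := integral_add k1 iGY
        simp only [Pi.add_apply] at this e
        rw [e] at this
        linarith
      have s2 := ((hcmp n hn).1 Φ2 mΦ2 Φ20 Φ21).2.1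
      have s3 := ((hcmp n hn).1 q mq q0 q1).2.2
      have hpt : ∀ ω, Φ2 (Sp n ω) ≤ Φ n (xg n ω) + Λ * Δ n ω +
          (q (Sp n ω) - q (Sm n ω)) + (B n).indicator (fun _ => (1 : ℝ)) ω := by
        intro ω
        have z1 : 0 ≤ Φ n (xg n ω) := hF0 _
        have z3 : 0 ≤ Λ * Δ n ω := mul_nonneg hΛ (Δ0 n hn ω)
        have z4 := B0 (B n) ω
        have z5 : q (Sm n ω) ≤ q (Sp n ω) := by
          by_cases hl : Sm n ω ∈ low
          · have hl' : Sp n ω ∈ low := fun i => (hl i).trans (hord n hn ω i)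
            rw [hq, Set.indicator_of_mem hl, Set.indicator_of_mem hl']
          · rw [hq, Set.indicator_of_notMem hl]
            exact q0 _
        by_cases hgd : Sp n ω ∈ good
        · by_cases hs : ∀ i, Sm n ω i ≤ xg n ω i ∧ xg n ω i ≤ Sp n ω i
          · have := lip_est m F Λ hF (fun j => Sm n ω (gidx T n (t j)))
              (fun j => xg n ω (gidx T n (t j))) (fun j => Sp n ω (gidx T n (t j)))
              (fun j => (hs _).1) (fun j => (hs _).2)
            have := (abs_le.1 this).1
            have l2 := hPhiTwoLe (Sp n ω)
            simp only [hΦ, hΔ] at *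
            linarith
          · by_cases hg : ∀ i, Sm n ω i ≤ xg n ω i → xg n ω i ≤ Sp n ω i → |xg n ω i| ≤ R
            · have : ω ∈ B n := ⟨hg, hs⟩
              have : (B n).indicator (fun _ => (1 : ℝ)) ω = 1 := Set.indicator_of_mem this _
              linarith [Φ21 (Sp n ω)]
            · push Not at hg
              obtain ⟨i, i1, i2, hi⟩ := hg
              have up := (abs_le.1 (hgd i)).2
              have hx : xg n ω i < -R := by
                rcases lt_abs.1 hi with h | h
                · linarith
                · linarith
              have nl : Sm n ω ∉ low := fun hl => by linarith [hl i]
              have yl : Sp n ω ∈ low := fun k => (abs_le.1 (hgd k)).1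
              have e1 : q (Sm n ω) = 0 := Set.indicator_of_notMem nl _
              have e2 : q (Sp n ω) = 1 := Set.indicator_of_mem yl _
              linarith [Φ21 (Sp n ω)]
        · have : Φ2 (Sp n ω) = 0 := Set.indicator_of_notMem hgd _
          linarith
      have j1 := iΦ n _ (mxg' n)
      have j2 := (iΔ n).const_mul (Λ : ℝ)
      have j3 := int_of q _ mq (mSp n) q0 q1
      have j4 := int_of q _ mq (mSm n) q0 q1
      have j5 : Integrable (fun ω => q (Sp n ω) - q (Sm n ω)) P := j3.sub j4
      have := integral_mono (int_of Φ2 _ mΦ2 (mSp n) Φ20 Φ21)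
        (int4 j1 j2 j5 (iB n)).1 hpt
      rw [(int4 j1 j2 j5 (iB n)).2, integral_const_mul, integral_sub j3 j4] at this
      have c2 := mul_le_mul_of_nonneg_left (hΔint n hn) hΛ
      have c3 : ∫ ω, Φ2 (Sp n ω) ∂P ≤ (∫ ω, Φ n (xg n ω) ∂P +
          ∫ ω, (B n).indicator (fun _ => (1 : ℝ)) ω ∂P) + (Λ * (m * π) * τ2 + τ2) := by
        simp only [hSp, hSm] at *
        linarith
      have c4 := mul_le_mul_of_nonneg_left c3 (exp_pos K).le
      rw [mul_add, htauTwoExp] at c4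
      simp only [hSp, hS0] at *
      linarith
    have hlim := le_of_tendsto_of_tendsto hcY (((hcX.add hBn).const_mul (exp K)).add_const _) hineq
    rw [add_zero] at hlim
    linarith

end PartF2


section PartG
open scoped ENNReal NNReal Topology
open Filter

theorem fd_bound {m : ℕ} (μ ν : Measure (Fin m → ℝ)) [IsFiniteMeasure μ] [IsFiniteMeasure ν]
    (C τ : ℝ) (hC : 0 ≤ C)
    (h : ∀ (F : (Fin m → ℝ) → ℝ) (Λ : ℝ≥0), LipschitzWith Λ F → (∀ x, 0 ≤ F x) →
      (∀ x, F x ≤ 1) → ∫ x, F x ∂μ ≤ C * ∫ x, F x ∂ν + τ)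
    (A : Set (Fin m → ℝ)) (hA : MeasurableSet A) : μ.real A ≤ C * ν.real A + τ := by
  have hcl : ∀ D : Set (Fin m → ℝ), IsClosed D → μ.real D ≤ C * ν.real D + τ := by
    intro D hD
    have hpos : ∀ n : ℕ, (0 : ℝ) < 1 / ((n : ℝ) + 1) := fun n => by positivity
    have t1 := tendsto_integral_thickenedIndicator_of_isClosed μ hD hpos
      tendsto_one_div_add_atTop_nhds_zero_nat
    have t2 := tendsto_integral_thickenedIndicator_of_isClosed ν hD hpos
      tendsto_one_div_add_atTop_nhds_zero_nat
    refine le_of_tendsto_of_tendsto' t1 ((t2.const_mul C).add_const τ) fun n => ?_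
    refine h _ _ (lipschitzWith_thickenedIndicator (hpos n) D) (fun x => NNReal.coe_nonneg _)
      (fun x => ?_)
    exact_mod_cast thickenedIndicator_le_one (hpos n) D x
  refine le_of_forall_pos_le_add fun ε hε => ?_
  obtain ⟨D, hDA, hD, hlt⟩ := hA.exists_isClosed_lt_add (μ := μ) (measure_ne_top _ _)
    (ε := ENNReal.ofReal ε) (by simpa using hε)
  have e1 : μ.real A ≤ μ.real D + ε := by
    have := ENNReal.toReal_mono (by simp) hlt.le
    rwa [ENNReal.toReal_add (by simp) (by simp), ENNReal.toReal_ofReal hε.le] at this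
  have e2 : ν.real D ≤ ν.real A := measureReal_mono hDA
  have e3 := mul_le_mul_of_nonneg_left e2 hC
  linarith [hcl D hD]

theorem ac_of_cyl {ι : Type*} (μ ν : Measure (ι → ℝ)) [IsFiniteMeasure μ] [IsFiniteMeasure ν]
    (h : ∀ τ : ℝ, 0 < τ → ∃ C : ℝ, 0 ≤ C ∧ ∀ A ∈ measurableCylinders (fun _ : ι => ℝ),
      μ.real A ≤ C * ν.real A + τ) : μ ≪ ν := by
  refine Measure.AbsolutelyContinuous.mk fun A hA hν => ?_
  have hd := Measure.MeasureDense.of_generateFrom_isSetAlgebra_finite (μ + ν)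
    (isSetAlgebra_measurableCylinders (α := fun _ : ι => ℝ)) generateFrom_measurableCylinders.symm
  have hν' : ν.real A = 0 := by simp [Measure.real, hν]
  have key : μ.real A ≤ 0 := by
    refine le_of_forall_pos_le_add fun τ hτ => ?_
    obtain ⟨C, hC, hcyl⟩ := h (τ / 2) (by positivity)
    obtain ⟨t, ht, hlt⟩ := hd.approx A hA (measure_ne_top _ _) (τ / 2 / (1 + C)) (by positivity)
    have hr : (μ + ν).real (symmDiff A t) ≤ τ / 2 / (1 + C) := by
      have := ENNReal.toReal_mono (by simp) hlt.le
      rwa [ENNReal.toReal_ofReal (by positivity)] at this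
    rw [measureReal_add_apply] at hr
    have n1 : 0 ≤ μ.real (symmDiff A t) := measureReal_nonneg
    have n2 : 0 ≤ ν.real (symmDiff A t) := measureReal_nonneg
    have a1 : μ.real A ≤ μ.real t + μ.real (symmDiff A t) := by
      refine (measureReal_mono (fun x hx => ?_)).trans (measureReal_union_le _ _)
      by_cases hxt : x ∈ t
      · exact Or.inl hxt
      · exact Or.inr (Or.inl ⟨hx, hxt⟩)
    have a2 : ν.real t ≤ ν.real A + ν.real (symmDiff A t) := by
      refine (measureReal_mono (fun x hx => ?_)).trans (measureReal_union_le _ _)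
      by_cases hxt : x ∈ A
      · exact Or.inl hxt
      · exact Or.inr (Or.inr ⟨hx, hxt⟩)
    rw [hν', zero_add] at a2
    have a3 := hcyl t ht
    rw [le_div_iff₀ (by positivity)] at hr
    have a4 := mul_le_mul_of_nonneg_left a2 hC
    have a5 := mul_nonneg hC n1
    nlinarith
  have : μ.real A = 0 := le_antisymm key measureReal_nonneg
  rwa [measureReal_eq_zero_iff] at this

variable {Ω : Type*} [MeasurableSpace Ω]

theorem law_ac {P : Measure Ω} [IsProbabilityMeasure P] (T : ℝ) (X Y : ℝ → Ω → ℝ)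
    (hX : ∀ t, Measurable (X t)) (hY : ∀ t, Measurable (Y t))
    (h : ∀ τ : ℝ, 0 < τ → ∃ K : ℝ, ∀ (m : ℕ) (t : Fin m → ℝ), (∀ j, t j ∈ Set.Icc 0 T) →
      ∀ (F : (Fin m → ℝ) → ℝ) (Λ : ℝ≥0), LipschitzWith Λ F → (∀ x, 0 ≤ F x) → (∀ x, F x ≤ 1) →
      ∫ ω, F (fun j => arctan (X (t j) ω)) ∂P ≤
        exp K * ∫ ω, F (fun j => arctan (Y (t j) ω)) ∂P + τ) :
    processLaw P T X ≪ processLaw P T Y := by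
  have mp : ∀ Z : ℝ → Ω → ℝ, (∀ t, Measurable (Z t)) →
      Measurable fun ω => fun t : Set.Icc (0 : ℝ) T => Z t ω := fun Z hZ =>
    measurable_pi_iff.2 fun t => hZ t
  have i1 : IsProbabilityMeasure (processLaw P T X) :=
    Measure.isProbabilityMeasure_map (mp X hX).aemeasurable
  have i2 : IsProbabilityMeasure (processLaw P T Y) :=
    Measure.isProbabilityMeasure_map (mp Y hY).aemeasurable
  refine ac_of_cyl _ _ fun τ hτ => ?_
  obtain ⟨K, hK⟩ := h τ hτ
  refine ⟨exp K, (exp_pos K).le, fun A hA => ?_⟩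
  have hAm : MeasurableSet A := MeasurableSet.of_mem_measurableCylinders hA
  obtain ⟨s, S, hS, rfl⟩ := (mem_measurableCylinders _).1 hA
  set t : Fin s.card → ℝ := fun j => ((s.equivFin.symm j : s) : Set.Icc (0 : ℝ) T) with htdef
  have ht : ∀ j, t j ∈ Set.Icc 0 T := fun j => ((s.equivFin.symm j : s) : Set.Icc (0 : ℝ) T).2
  have mq : ∀ Z : ℝ → Ω → ℝ, (∀ t, Measurable (Z t)) →
      Measurable fun ω => fun j : Fin s.card => arctan (Z (t j) ω) := fun Z hZ =>
    measurable_pi_iff.2 fun j => (hZ _).arctan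
  set g : (Fin s.card → ℝ) → (s → ℝ) := fun y i => tan (y (s.equivFin i)) with hg
  have mtan : Measurable tan := by
    have : tan = fun x => sin x / cos x := funext fun x => tan_eq_sin_div_cos x
    rw [this]; exact measurable_sin.div measurable_cos
  have mg : Measurable g := measurable_pi_iff.2 fun i => mtan.comp (measurable_pi_apply _)
  have e : ∀ Z : ℝ → Ω → ℝ, (∀ t, Measurable (Z t)) → (processLaw P T Z).real (cylinder s S) =
      (P.map (fun ω => fun j : Fin s.card => arctan (Z (t j) ω))).real (g ⁻¹' S) := by
    intro Z hZ
    rw [processLaw, map_measureReal_apply (mp Z hZ) hAm, map_measureReal_apply (mq Z hZ) (mg hS)]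
    congr 1
    ext ω
    simp only [Set.mem_preimage, mem_cylinder]
    have : s.restrict (fun t : Set.Icc (0 : ℝ) T => Z t ω) =
        g (fun j => arctan (Z (t j) ω)) := by
      ext i
      simp [hg, htdef, tan_arctan]
    rw [this]
  rw [e X hX, e Y hY]
  have j1 : IsProbabilityMeasure (P.map (fun ω => fun j : Fin s.card => arctan (X (t j) ω))) :=
    Measure.isProbabilityMeasure_map (mq X hX).aemeasurable
  have j2 : IsProbabilityMeasure (P.map (fun ω => fun j : Fin s.card => arctan (Y (t j) ω))) :=
    Measure.isProbabilityMeasure_map (mq Y hY).aemeasurable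
  refine fd_bound _ _ _ _ (exp_pos K).le (fun F Λ hF h0 h1 => ?_) _ (mg hS)
  rw [integral_map (mq X hX).aemeasurable hF.continuous.aestronglyMeasurable,
    integral_map (mq Y hY).aemeasurable hF.continuous.aestronglyMeasurable]
  exact hK _ t ht F Λ hF h0 h1

theorem cont_of_loc_holder (b : ℝ → ℝ) (α : ℝ) (hα : 0 < α)
    (hb : ∀ K : Set ℝ, IsCompact K → ∃ c : ℝ, 0 ≤ c ∧
      ∀ x ∈ K, ∀ y ∈ K, |b x - b y| ≤ c * |x - y| ^ α) : Continuous b := by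
  rw [continuous_iff_continuousAt]
  intro x
  obtain ⟨c, hc, h⟩ := hb (Set.Icc (x - 1) (x + 1)) isCompact_Icc
  have hx : x ∈ Set.Icc (x - 1) (x + 1) := ⟨by linarith, by linarith⟩
  have hev : ∀ᶠ y in 𝓝 x, |b y - b x| ≤ c * |y - x| ^ α := by
    filter_upwards [Icc_mem_nhds (show x - 1 < x by linarith) (show x < x + 1 by linarith)]
      with y hy
    exact h y hy x hx
  have hlim : Tendsto (fun y => c * |y - x| ^ α) (𝓝 x) (𝓝 0) := by
    have : Continuous fun y => c * |y - x| ^ α :=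
      continuous_const.mul ((continuous_id.sub continuous_const).abs.rpow_const
        fun _ => Or.inr hα.le)
    have t := this.tendsto x
    simpa [zero_rpow hα.ne'] using t
  have := squeeze_zero' (Eventually.of_forall fun y => abs_nonneg _) hev hlim
  rw [ContinuousAt, tendsto_iff_dist_tendsto_zero]
  simpa only [Real.dist_eq] using this

end PartG

theorem equivalence_fbm_sde_large_hurst
    {Ω : Type*} [MeasurableSpace Ω] (P : Measure Ω) [IsProbabilityMeasure P]
    (H : ℝ) (hH : H ∈ Set.Ioo (1 / 2 : ℝ) 1)
    (W : ℝ → Ω → ℝ) (hW : IsFractionalBM P H W)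
    (x₀ T : ℝ) (hT : 0 < T)
    (b : ℝ → ℝ) (hbmeas : Measurable b)
    (hbloc : ∀ K : Set ℝ, IsCompact K → ∃ M : ℝ, ∀ x ∈ K, |b x| ≤ M)
    (α : ℝ) (hα : 2 - 1 / H < α)
    (hbHolder : ∀ K : Set ℝ, IsCompact K → ∃ c : ℝ, 0 ≤ c ∧
      ∀ x ∈ K, ∀ y ∈ K, |b x - b y| ≤ c * |x - y| ^ α)
    (X : ℝ → Ω → ℝ)
    (hXcont : ∀ᵐ ω ∂P, ContinuousOn (fun t => X t ω) (Set.Icc (0 : ℝ) T))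
    (hXadapted : Adapted
      (Filtration.natural W fun t => ((hW.1 t).stronglyMeasurable)) X)
    (hXeq : ∀ᵐ ω ∂P, ∀ t ∈ Set.Icc (0 : ℝ) T,
      X t ω = x₀ + W t ω + ∫ s in (0 : ℝ)..t, b (X s ω)) :
    processLaw P T X ≪ processLaw P T (fun t ω => x₀ + W t ω) ∧
      processLaw P T (fun t ω => x₀ + W t ω) ≪ processLaw P T X := by
  have hα0 : 0 < α := by
    have h0 : 0 < H := by linarith [hH.1]
    have : 1 / H < 2 := by rw [div_lt_iff₀ h0]; linarith [hH.1]
    linarith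
  have hb := cont_of_loc_holder b α hα0 hbHolder
  have hXm : ∀ t, Measurable (X t) := fun t => (hXadapted t).mono (Filtration.le _ t) le_rfl
  have hYm : ∀ t, Measurable (fun ω => x₀ + W t ω) := fun t => (hW.1 t).const_add x₀
  have key := dirs hW hH.1 hH.2 x₀ T hT b hb hbloc α hα hbHolder X hXm hXcont hXeq
  constructor
  · refine law_ac T X (fun t ω => x₀ + W t ω) hXm hYm fun τ hτ => ?_
    obtain ⟨K, _, hK⟩ := key τ hτ
    exact ⟨K, fun m t ht F Λ hF h0 h1 => (hK m t ht F Λ hF h0 h1).1⟩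
  · refine law_ac T (fun t ω => x₀ + W t ω) X hYm hXm fun τ hτ => ?_
    obtain ⟨K, _, hK⟩ := key τ hτ
    exact ⟨K, fun m t ht F Λ hF h0 h1 => (hK m t ht F Λ hF h0 h1).2⟩
end

section
/- Let T > 0 and let f : [0,T] → ℝ be Hölder continuous with exponent β ∈ (0,1], i.e., there is c ≥ 0 with |f(t) − f(s)| ≤ c|t − s|^β for all s, t ∈ [0,T]. Suppose f(0) = 0 and let α ∈ (0, β). Then the function g : [0,T] → ℝ defined by g(t) := t^{−α} f(t) for t > 0 and g(0) := 0 is Hölder continuous with exponent β − α on [0,T]. -/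
open Real

/-- If `f` is Hölder continuous with exponent `β` on `[0,T]` and `f 0 = 0`, then for
`0 < α < β` the function `t ↦ t^(-α) f t` (set to `0` at `t = 0`) is Hölder continuous
with exponent `β - α` on `[0,T]`. -/
theorem holder_of_rpow_smul
    (T : ℝ) (hT : 0 < T) (f : ℝ → ℝ) (β : ℝ) (hβ : β ∈ Set.Ioc (0 : ℝ) 1)
    (c : ℝ) (hc : 0 ≤ c)
    (hf : ∀ s ∈ Set.Icc (0 : ℝ) T, ∀ t ∈ Set.Icc (0 : ℝ) T, |f t - f s| ≤ c * |t - s| ^ β)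
    (hf0 : f 0 = 0)
    (α : ℝ) (hα : α ∈ Set.Ioo (0 : ℝ) β)
    (g : ℝ → ℝ) (hg : ∀ t, g t = if 0 < t then t ^ (-α) * f t else 0) :
    ∃ c' : ℝ, 0 ≤ c' ∧ ∀ s ∈ Set.Icc (0 : ℝ) T, ∀ t ∈ Set.Icc (0 : ℝ) T,
      |g t - g s| ≤ c' * |t - s| ^ (β - α) := by
  obtain ⟨hβ0, hβ1⟩ := hβ
  obtain ⟨hα0, hαβ⟩ := hα
  have key : ∀ s ∈ Set.Icc (0 : ℝ) T, ∀ t ∈ Set.Icc (0 : ℝ) T, s < t →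
      |g t - g s| ≤ (2 * c) * |t - s| ^ (β - α) := by
    intro s hs t ht hst
    have ht0 : 0 < t := lt_of_le_of_lt hs.1 hst
    have hh : 0 < t - s := sub_pos.2 hst
    -- bound on `f` at a point
    have hfb : ∀ u ∈ Set.Icc (0 : ℝ) T, |f u| ≤ c * u ^ β := by
      intro u hu
      have := hf 0 ⟨le_rfl, hT.le⟩ u hu
      rwa [hf0, sub_zero, sub_zero, abs_of_nonneg hu.1] at this
    rw [abs_of_pos hh]
    rcases hs.1.eq_or_lt with h0 | hs0
    · subst h0
      rw [hg t, hg 0, if_pos ht0, if_neg (lt_irrefl _), sub_zero, sub_zero, abs_mul,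
        abs_of_pos (rpow_pos_of_pos ht0 _)]
      have e : t ^ (β - α) = t ^ (-α) * t ^ β := by
        rw [← rpow_add ht0]; congr 1; ring
      have h1 := mul_le_mul_of_nonneg_left (hfb t ht) (rpow_pos_of_pos ht0 (-α)).le
      have h2 : 0 ≤ c * t ^ (β - α) := by positivity
      have h3 : t ^ (-α) * (c * t ^ β) = c * t ^ (β - α) := by rw [e]; ring
      linarith
    · rw [hg t, hg s, if_pos ht0, if_pos hs0]
      have hle : t - s ≤ t := by linarith
      have e : t ^ (-α) * f t - s ^ (-α) * f s
          = t ^ (-α) * (f t - f s) + (t ^ (-α) - s ^ (-α)) * f s := by ring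
      have A : |t ^ (-α) * (f t - f s)| ≤ c * (t - s) ^ (β - α) := by
        rw [abs_mul, abs_of_pos (rpow_pos_of_pos ht0 _)]
        have h1 := hf s hs t ht
        rw [abs_of_pos hh] at h1
        have h2 : t ^ (-α) ≤ (t - s) ^ (-α) :=
          rpow_le_rpow_of_nonpos hh hle (by linarith)
        have h3 : (t - s) ^ (β - α) = (t - s) ^ (-α) * (t - s) ^ β := by
          rw [← rpow_add hh]; congr 1; ring
        calc t ^ (-α) * |f t - f s| ≤ (t - s) ^ (-α) * (c * (t - s) ^ β) := by
              gcongr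
          _ = c * (t - s) ^ (β - α) := by rw [h3]; ring
      have B : |(t ^ (-α) - s ^ (-α)) * f s| ≤ c * (t - s) ^ (β - α) := by
        have h1 : t ^ (-α) ≤ s ^ (-α) := rpow_le_rpow_of_nonpos hs0 hst.le (by linarith)
        rw [abs_mul, abs_of_nonpos (by linarith), neg_sub]
        have hd : 0 < s / t := by positivity
        have h2 : s / t ≤ (s / t) ^ α := by
          have := rpow_le_rpow_of_exponent_ge hd ((div_le_one ht0).2 hst.le)
            (show α ≤ 1 by linarith)
          rwa [rpow_one] at this
        have h3 : s ^ (-α) * (s / t) ^ α = t ^ (-α) := by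
          rw [div_rpow hs0.le ht0.le, rpow_neg hs0.le, rpow_neg ht0.le]
          have := (rpow_pos_of_pos hs0 α).ne'
          field_simp
        have h4 : s ^ (-α) - t ^ (-α) ≤ s ^ (-α) * ((t - s) / t) := by
          have h5 := mul_le_mul_of_nonneg_left h2 (rpow_pos_of_pos hs0 (-α)).le
          have h6 : (t - s) / t = 1 - s / t := by field_simp
          rw [h6, mul_sub, mul_one]
          linarith
        have h7 : s ^ (β - α) = s ^ (-α) * s ^ β := by
          rw [← rpow_add hs0]; congr 1; ring
        have h8 : s ^ (β - α) * (t - s) ≤ t * (t - s) ^ (β - α) := by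
          have e1 : (t - s) ^ (1 - (β - α)) * (t - s) ^ (β - α) = t - s := by
            rw [← rpow_add hh]; simp
          have e2 : t ^ (β - α) * t ^ (1 - (β - α)) = t := by
            rw [← rpow_add ht0]; simp
          calc s ^ (β - α) * (t - s)
              = s ^ (β - α) * (t - s) ^ (1 - (β - α)) * (t - s) ^ (β - α) := by
                rw [mul_assoc, e1]
            _ ≤ t ^ (β - α) * t ^ (1 - (β - α)) * (t - s) ^ (β - α) := by
                have a1 : s ^ (β - α) ≤ t ^ (β - α) :=
                  rpow_le_rpow hs0.le hst.le (by linarith)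
                have a2 : (t - s) ^ (1 - (β - α)) ≤ t ^ (1 - (β - α)) :=
                  rpow_le_rpow hh.le hle (by linarith)
                gcongr
            _ = t * (t - s) ^ (β - α) := by rw [e2]
        calc (s ^ (-α) - t ^ (-α)) * |f s|
            ≤ (s ^ (-α) * ((t - s) / t)) * (c * s ^ β) :=
              mul_le_mul h4 (hfb s hs) (abs_nonneg _) (by positivity)
          _ = c * ((s ^ (β - α) * (t - s)) / t) := by rw [h7]; ring
          _ ≤ c * (t - s) ^ (β - α) := by
              refine mul_le_mul_of_nonneg_left ?_ hc
              rw [div_le_iff₀ ht0]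
              linarith
      rw [e]
      have := abs_add_le (t ^ (-α) * (f t - f s)) ((t ^ (-α) - s ^ (-α)) * f s)
      linarith
  refine ⟨2 * c, by positivity, fun s hs t ht => ?_⟩
  rcases lt_trichotomy s t with h | h | h
  · exact key s hs t ht h
  · subst h
    rw [sub_self, abs_zero]
    positivity
  · rw [abs_sub_comm, abs_sub_comm t s]
    exact key t ht s hs h
end

section
/- Let 0 < α < β ≤ 1 and let 0 < s < t. Then (s^{−α} − t^{−α}) s^β ≤ (α/(β − α)) (t^{β−α} − s^{β−α}), and in particular (s^{−α} − t^{−α}) s^β ≤ (α/(β − α)) (t − s)^{β−α}. -/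
open Real

/-- For `0 < α < β ≤ 1` and `0 < s < t`, one has
`(s^(-α) - t^(-α)) s^β ≤ (α/(β-α)) (t^(β-α) - s^(β-α)) ≤ (α/(β-α)) (t-s)^(β-α)`. -/
theorem rpow_difference_bound
    (α β : ℝ) (hα : 0 < α) (hαβ : α < β) (hβ : β ≤ 1)
    (s t : ℝ) (hs : 0 < s) (hst : s < t) :
    (s ^ (-α) - t ^ (-α)) * s ^ β ≤ α / (β - α) * (t ^ (β - α) - s ^ (β - α)) ∧
      (s ^ (-α) - t ^ (-α)) * s ^ β ≤ α / (β - α) * (t - s) ^ (β - α) := by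
  have ht : 0 < t := hs.trans hst
  have hb : 0 < β := hα.trans hαβ
  have hd : 0 < β - α := sub_pos.2 hαβ
  have h1 : (s ^ (-α) - t ^ (-α)) * s ^ β ≤
      α / (β - α) * (t ^ (β - α) - s ^ (β - α)) := by
    have amgm := Real.geom_mean_le_arith_mean2_weighted (w₁ := α / β) (w₂ := (β - α) / β)
      (p₁ := t ^ (β - α)) (p₂ := t ^ (-α) * s ^ β) (by positivity) (by positivity)
      (by positivity) (by positivity) (by field_simp; ring)
    have e : (t ^ (β - α)) ^ (α / β) * (t ^ (-α) * s ^ β) ^ ((β - α) / β) = s ^ (β - α) := by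
      rw [Real.mul_rpow (by positivity) (by positivity), ← Real.rpow_mul ht.le,
        ← Real.rpow_mul ht.le, ← Real.rpow_mul hs.le, ← mul_assoc, ← Real.rpow_add ht]
      have a1 : (β - α) * (α / β) + -α * ((β - α) / β) = 0 := by ring
      have a2 : β * ((β - α) / β) = β - α := by field_simp
      rw [a1, a2, Real.rpow_zero, one_mul]
    rw [e] at amgm
    have e2 : s ^ (-α) * s ^ β = s ^ (β - α) := by
      rw [← Real.rpow_add hs]; ring_nf
    rw [sub_mul, e2, div_mul_eq_mul_div, le_div_iff₀ hd]
    have := mul_le_mul_of_nonneg_left amgm hb.le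
    have e3 : β * (α / β * t ^ (β - α) + (β - α) / β * (t ^ (-α) * s ^ β)) =
      α * t ^ (β - α) + (β - α) * (t ^ (-α) * s ^ β) := by field_simp
    rw [e3] at this
    linarith
  refine ⟨h1, h1.trans ?_⟩
  have h2 := Real.rpow_add_le_add_rpow (sub_pos.2 hst).le hs.le hd.le (by linarith : β - α ≤ 1)
  rw [sub_add_cancel] at h2
  exact mul_le_mul_of_nonneg_left (by linarith) (by positivity)
end
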